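/- Let B = K[X] with X an order-t skew-symmetric matrix of indeterminates with zero upper-left 3×3 block, and let I be the grade-3 almost complete intersection Pfaffian ideal: for odd t = 2r + 1 ≥ 5, I = ⟨Pf_{1̄}(X), Pf_{2̄}(X), Pf_{3̄}(X), Pf_{123̄}(X)⟩. Then for every m ≥ 2, reg(B/I^m) = ((t−1)/2)(m + 2) − 5. -/

import Mathlib

open Ideal

/-- A sequence `f 0, …, f (n-1)` is a *d-sequence* in `A` if
`(⟨f_0,…,f_{i-1}⟩ : f_i) ∩ ⟨f_0,…,f_{n-1}⟩ = ⟨f_0,…,f_{i-1}⟩` for every `i`. -/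
def IsDSequence {A : Type*} [CommRing A] {n : ℕ} (f : Fin n → A) : Prop :=
  ∀ i : Fin n,
    (Ideal.span (f '' {j | j < i})).colon (Ideal.span {f i}) ⊓ Ideal.span (Set.range f)
      = Ideal.span (f '' {j | j < i})

/-- A (proper) regular sequence: each `f i` is a nonzerodivisor modulo the previous ones,
and the sequence generates a proper ideal. -/
def IsRegSeq {A : Type*} [CommRing A] {n : ℕ} (f : Fin n → A) : Prop :=
  (∀ i : Fin n, ∀ a : A, a * f i ∈ Ideal.span (f '' {j | j < i}) →
      a ∈ Ideal.span (f '' {j | j < i}))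
  ∧ Ideal.span (Set.range f) ≠ ⊤

/-- Extension of an `ℕ`-graded family of submodules to `ℤ` (zero in negative degrees). -/
def zg {K A : Type*} [Semiring K] [AddCommMonoid A] [Module K A]
    (𝒜 : ℕ → Submodule K A) : ℤ → Submodule K A :=
  fun z => if 0 ≤ z then 𝒜 z.toNat else ⊥

/-- The irrelevant (graded maximal) ideal of a graded algebra. -/
def irrel {K A : Type*} [CommRing K] [CommRing A] [Algebra K A]
    (𝒜 : ℕ → Submodule K A) : Ideal A :=
  Ideal.span (⋃ n : ℕ, ((𝒜 (n + 1) : Submodule K A) : Set A))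

/-- `𝒜` is a standard grading: `𝒜 0 = K·1`, the grading is generated in degree one,
and the degree-one part is finitely generated. -/
def IsStdGraded {K A : Type*} [CommSemiring K] [Semiring A] [Algebra K A]
    (𝒜 : ℕ → Submodule K A) : Prop :=
  𝒜 0 = 1 ∧ (∀ n : ℕ, 𝒜 (n + 1) = 𝒜 1 * 𝒜 n) ∧ (𝒜 1).FG

/-- A minimal graded free resolution of the graded module `M` (graded pieces `ℳ`) over the
`γ`-graded ring `A` (graded pieces `𝒜`, graded maximal ideal `𝔪`):
free modules `ι i →₀ A` with generator degrees `σ i`, differentials `d`, augmentation `ε`,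
which is exact, with graded differentials and augmentation, and minimal
(all differentials land in `𝔪 • F`). -/
structure MinGradedFreeRes (K : Type) [Field K] (A : Type) [CommRing A] [Algebra K A]
    {γ : Type} [AddCommGroup γ] (𝒜 : γ → Submodule K A) (𝔪 : Ideal A)
    (M : Type) [AddCommGroup M] [Module A M] [Module K M]
    (ℳ : γ → Submodule K M) where
  ι : ℕ → Type
  fin : ∀ i, Finite (ι i)
  σ : ∀ i, ι i → γ
  d : ∀ i, (ι (i + 1) →₀ A) →ₗ[A] (ι i →₀ A)
  ε : (ι 0 →₀ A) →ₗ[A] M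
  exact_d : ∀ i, Function.Exact (d (i + 1)) (d i)
  exact_ε : Function.Exact (d 0) ε
  surj : Function.Surjective ε
  graded_d : ∀ (i : ℕ) (j : γ) (f : ι (i + 1) →₀ A),
      (∀ k, f k ∈ 𝒜 (j - σ (i + 1) k)) → ∀ k, (d i f) k ∈ 𝒜 (j - σ i k)
  graded_ε : ∀ (j : γ) (f : ι 0 →₀ A),
      (∀ k, f k ∈ 𝒜 (j - σ 0 k)) → ε f ∈ ℳ j
  minimal : ∀ (i : ℕ) (f : ι (i + 1) →₀ A), d i f ∈ 𝔪 • (⊤ : Submodule A (ι i →₀ A))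

/-- Castelnuovo–Mumford regularity read off from a minimal graded free resolution:
`sup { (degree of a generator of F_i) - i }`. -/
noncomputable def MinGradedFreeRes.reg {K : Type} [Field K] {A : Type} [CommRing A]
    [Algebra K A] {𝒜 : ℤ → Submodule K A} {𝔪 : Ideal A} {M : Type} [AddCommGroup M]
    [Module A M] [Module K M] {ℳ : ℤ → Submodule K M}
    (R : MinGradedFreeRes K A 𝒜 𝔪 M ℳ) : ℤ :=
  sSup {x : ℤ | ∃ (i : ℕ) (k : R.ι i), x = R.σ i k - (i : ℤ)}

/-- The graded pieces of a quotient module `A ⧸ J`. -/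
def quotPieces {K A : Type*} [Field K] [CommRing A] [Algebra K A]
    (𝒜 : ℕ → Submodule K A) (J : Ideal A) : ℤ → Submodule K (A ⧸ J) :=
  fun j => (zg 𝒜 j).map ((J.mkQ).restrictScalars K)

/-- The Pfaffian of an `n × n` matrix, defined by the recursive expansion along the
first row: `pf(M) = ∑_j (-1)^j M 0 (j+1) · pf(M with rows/columns 0 and j+1 deleted)`,
with `pf = 1` in size `0` and `pf = 0` in odd sizes. -/
def pfaffian {R : Type*} [CommRing R] : (n : ℕ) → Matrix (Fin n) (Fin n) R → R
  | 0, _ => 1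
  | 1, _ => 0
  | (n + 2), M =>
      ∑ j : Fin (n + 1), (-1 : R) ^ (j : ℕ) * M 0 j.succ *
        pfaffian n (M.submatrix (fun k => (j.succAbove k).succ)
          (fun k => (j.succAbove k).succ))

/-- The variables of the skew-symmetric matrix `X`: pairs `(i,j)` with `i < j` and
`j ≥ 3` (the upper-left `3 × 3` block being zero). -/
def PairVar (t : ℕ) : Type := {p : Fin t × Fin t // (p.1 : ℕ) < (p.2 : ℕ) ∧ 3 ≤ (p.2 : ℕ)}

/-- The generic order-`t` skew-symmetric matrix with zero upper-left `3 × 3` block. -/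
noncomputable def Xmat (K : Type) [Field K] (t : ℕ) :
    Matrix (Fin t) (Fin t) (MvPolynomial (PairVar t) K) := fun i j =>
  if h : (i : ℕ) < (j : ℕ) ∧ 3 ≤ (j : ℕ) then MvPolynomial.X ⟨(i, j), h⟩
  else if h' : (j : ℕ) < (i : ℕ) ∧ 3 ≤ (i : ℕ) then - MvPolynomial.X ⟨(j, i), h'⟩
  else 0

/-- The order embedding `Fin n → Fin (n+1)` skipping the index `a`. -/
def emb1 (a : ℕ) {n : ℕ} (k : Fin n) : Fin (n + 1) :=
  ⟨if (k : ℕ) < a then (k : ℕ) else (k : ℕ) + 1, by have := k.2; split_ifs <;> omega⟩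

/-- The order embedding `Fin n → Fin (n+2)` skipping the indices `a < b`. -/
def emb2 (a b : ℕ) {n : ℕ} (k : Fin n) : Fin (n + 2) :=
  ⟨if (k : ℕ) < a then (k : ℕ) else if (k : ℕ) + 1 < b then (k : ℕ) + 1 else (k : ℕ) + 2,
   by have := k.2; split_ifs <;> omega⟩

/-- The order embedding `Fin n → Fin (n+3)` skipping the indices `0, 1, 2`. -/
def emb3 {n : ℕ} (k : Fin n) : Fin (n + 3) := ⟨(k : ℕ) + 3, by have := k.2; omega⟩

/-!
Let `g` be the Pfaffian of the core, that is of the matrix without its first three rows and columns,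
let `ω` be the alternating form given by the Pfaffian adjoint of the core, and adjoin variables
`T₁, T₂, T₃`. Let `u` be the sum of the `Tᵢ` times the `i`-th border row. The values of `ω` at pairs
of border rows are `±Pf_{ī}(X)`, and everything orthogonal to `u` modulo `g` is, up to the rows of
the core, a multiple of `u`. This is proved for one row of new variables by induction on the size of
the core, and deforming the row along a pencil extends it to `u`. Consequently a form in the `Tᵢ`
that becomes divisible by `g` under `Tᵢ ↦ ±Pf_{ī}(X)` lies in the ideal `(g) + ω(u, ·)`. Every value
of `ω(u, ·)` is itself divisible by `g` after this substitution, and comparing cofactors gives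
`I ^ (m + 1) : g = I ^ m`.

Thus `B ⧸ I ^ m` is obtained, by short exact sequences of graded modules, from free modules: first
the cokernels of the core matrix and of `g`, then the quotient of the former by `u`, the ideal
`ω(u, ·)` modulo `g`, the powers of `I` modulo `g`, and finally those of `I` by multiplication by
`g`. Bounds for the regularity, as vanishing of `Ext` into the shifts of the residue field, pass
along these sequences, and so does the nonvanishing of the `Ext⁴` that attains the bound. The
functor category of graded modules provides `Ext`, and minimality of the resolution identifies
`Extⁱ` into a shift of the residue field with the generators of its `i`-th free module.
-/

namespace PfaffianPowers

section Regularity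

variable {S M : Type*} [CommRing S] [AddCommGroup M] [Module S M]

theorem isSMulRegular_neg {p : S} (h : IsSMulRegular M p) : IsSMulRegular M (-p) :=
  fun a b hab => h (neg_injective (by simpa only [neg_smul] using hab))

theorem isSMulRegular_quotient_pair_swap {p e f : S} (he : IsSMulRegular (S ⧸ span {p}) e)
    (hf : IsSMulRegular (S ⧸ span {p, e}) f) : IsSMulRegular (S ⧸ span {p, f}) e := by
  rw [isSMulRegular_quotient_iff_mem_of_smul_mem] at he hf ⊢
  intro a ha
  obtain ⟨y, z, hyz⟩ := mem_span_pair.1 ha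
  obtain ⟨s, w, hz⟩ := mem_span_pair.1 <| hf z <| mem_span_pair.2
    ⟨-y, a, by simp only [smul_eq_mul] at hyz ⊢; linear_combination -hyz⟩
  obtain ⟨b, hb⟩ := mem_span_singleton'.1 <| he (a - w * f) <| mem_span_singleton'.2
    ⟨y + s * f, by simp only [smul_eq_mul] at hyz ⊢; linear_combination hyz + f * hz⟩
  exact mem_span_pair.2 ⟨b, w, by linear_combination hb⟩

theorem isSMulRegular_quotient_singleton_comm [IsDomain S] {p e : S} (he : e ≠ 0)
    (h : IsSMulRegular (S ⧸ span {e}) p) : IsSMulRegular (S ⧸ span {p}) e := by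
  rw [isSMulRegular_quotient_iff_mem_of_smul_mem] at h ⊢
  intro a ha
  obtain ⟨b, hb⟩ := mem_span_singleton'.1 ha
  obtain ⟨c, rfl⟩ := mem_span_singleton'.1 <| h b <| mem_span_singleton'.2
    ⟨a, by simp only [smul_eq_mul] at hb ⊢; linear_combination -hb⟩
  exact mem_span_singleton'.2
    ⟨c, mul_right_cancel₀ he (by simp only [smul_eq_mul] at hb; linear_combination hb)⟩

end Regularity

section Pencil

open Polynomial

variable {S E Q : Type*} [CommRing S] [AddCommGroup E] [Module S E] [AddCommGroup Q] [Module S Q]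

/-- The `S[X]`-linear map `E[X] → Q[X]` given by the linear pencil `φ + X ψ`. -/
noncomputable def pencil (φ ψ : E →ₗ[S] Q) :
    PolynomialModule S E →ₗ[S[X]] PolynomialModule S Q where
  toFun p := PolynomialModule.map S φ p + (X : S[X]) • PolynomialModule.map S ψ p
  map_add' p q := by simp only [map_add, smul_add]; abel
  map_smul' f p := by
    simp only [PolynomialModule.map_smul, Algebra.algebraMap_self, Polynomial.map_id,
      RingHom.id_apply, smul_add, smul_comm (X : S[X]) f]

variable {φ ψ : E →ₗ[S] Q}

theorem pencil_single (n : ℕ) (v : E) :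
    pencil φ ψ (.single S n v) = .single S n (φ v) + .single S (n + 1) (ψ v) := by
  simp [pencil, ← monomial_one_one_eq_X, add_comm]

theorem coeff_map (χ : E →ₗ[S] Q) (p : PolynomialModule S E) (n : ℕ) :
    (PolynomialModule.map S χ p).coeff n = χ (p.coeff n) :=
  rfl

theorem coeff_pencil_zero (p : PolynomialModule S E) :
    (pencil φ ψ p).coeff 0 = φ (p.coeff 0) := by
  simp [pencil, ← monomial_one_one_eq_X, coeff_map]

theorem coeff_pencil_succ (p : PolynomialModule S E) (n : ℕ) :
    (pencil φ ψ p).coeff (n + 1) = φ (p.coeff (n + 1)) + ψ (p.coeff n) := by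
  simp [pencil, ← monomial_one_one_eq_X, coeff_map]

theorem eval_pencil (x : S) (p : PolynomialModule S E) :
    PolynomialModule.eval x (pencil φ ψ p) = (φ + x • ψ) (PolynomialModule.eval x p) := by
  induction p using PolynomialModule.induction_linear with
  | zero => simp
  | add p q hp hq => simp only [map_add, hp, hq]
  | single n v => simp [pencil_single, pow_succ, mul_smul]

theorem exists_coeff_eq_zero_of_le (p : PolynomialModule S E) :
    ∃ D, ∀ n, D ≤ n → p.coeff n = 0 := by
  obtain ⟨D, hD⟩ := p.coeff.support.exists_nat_subset_range
  exact ⟨D, fun n hn => Finsupp.notMem_support_iff.1 fun h =>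
    absurd (Finset.mem_range.1 (hD h)) (not_lt.2 hn)⟩

theorem pencil_injective (hψ : Function.Injective ψ) : Function.Injective (pencil φ ψ) := by
  rw [injective_iff_map_eq_zero]
  intro p hp
  have coeff_eq_zero : ∀ k n, (∀ i, n + k ≤ i → p.coeff i = 0) → p.coeff n = 0 := by
    intro k
    induction k with
    | zero => exact fun n h => h n le_rfl
    | succ k ih =>
      intro n h
      have hn := coeff_pencil_succ (φ := φ) (ψ := ψ) p n
      rw [hp, ih (n + 1) fun i hi => h i (by omega)] at hn
      exact (map_eq_zero_iff ψ hψ).1 (by simpa using hn.symm)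
  obtain ⟨D, hD⟩ := exists_coeff_eq_zero_of_le p
  ext n
  exact coeff_eq_zero D n fun i hi => hD i (by omega)

theorem polynomialModule_coeff_sub (p q : PolynomialModule S E) (n : ℕ) :
    (p - q).coeff n = p.coeff n - q.coeff n :=
  rfl

theorem coeff_C_smul (c : S) (p : PolynomialModule S E) (n : ℕ) :
    (C c • p).coeff n = c • p.coeff n := by
  simp [← monomial_zero_left]

/-- The element `b + X e` of `E[X]`, which a skew pencil `φ = ω(b, ·)`, `ψ = ω(e, ·)` kills. -/
noncomputable def pencilPoint (b e : E) : PolynomialModule S E :=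
  .single S 0 b + .single S 1 e

variable {b e : E}

theorem eval_pencilPoint (x : S) : PolynomialModule.eval x (pencilPoint b e) = b + x • e := by
  simp [pencilPoint]

theorem coeff_monomial_smul_pencilPoint_of_lt (k : ℕ) (h : S) {n : ℕ} (hn : k + 1 < n) :
    (monomial k h • (pencilPoint b e : PolynomialModule S E)).coeff n = 0 := by
  have h0 : k ≠ n := by omega
  have h1 : k + 1 ≠ n := by omega
  simp [pencilPoint, smul_add, h0, h1]

theorem coeff_monomial_smul_pencilPoint_succ (k : ℕ) (h : S) :
    (monomial k h • (pencilPoint b e : PolynomialModule S E)).coeff (k + 1) = h • e := by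
  simp [pencilPoint, smul_add]

theorem coeff_sub_monomial_smul_pencilPoint {p : PolynomialModule S E} {k : ℕ} {h : S}
    (hp : ∀ n, k + 1 < n → p.coeff n = 0) (htop : p.coeff (k + 1) = h • e) {n : ℕ}
    (hn : k + 1 ≤ n) : (p - monomial k h • pencilPoint b e).coeff n = 0 := by
  rw [polynomialModule_coeff_sub]
  rcases hn.eq_or_lt with rfl | hn
  · rw [coeff_monomial_smul_pencilPoint_succ, htop, sub_self]
  · rw [coeff_monomial_smul_pencilPoint_of_lt k h hn, hp n hn, sub_zero]

theorem pencil_pencilPoint (hφ : φ b = 0) (hψ : ψ e = 0) (hskew : φ e = -ψ b) :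
    pencil φ ψ (pencilPoint b e) = 0 := by
  simp [pencilPoint, pencil_single, hφ, hψ, hskew, ← PolynomialModule.single_add]

theorem exists_smul_of_pencil_eq_zero (hφ : φ b = 0) (hψ : ψ e = 0) (hskew : φ e = -ψ b)
    (hker : ∀ v, ψ v = 0 → ∃ h : S, v = h • e) (hreg : ∀ h : S, h • φ e = 0 → h • e = 0)
    {p : PolynomialModule S E} (hp : pencil φ ψ p = 0) : ∃ f : S[X], p = f • pencilPoint b e := by
  obtain ⟨D, hD⟩ := exists_coeff_eq_zero_of_le p
  induction D generalizing p with
  | zero => exact ⟨0, by ext n; simpa using hD n n.zero_le⟩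
  | succ D ih =>
    have top := coeff_pencil_succ (φ := φ) (ψ := ψ) p D
    rw [hp, hD (D + 1) le_rfl, map_zero, zero_add] at top
    obtain ⟨h, hh⟩ := hker _ top.symm
    rcases D with _ | D
    · have bot := coeff_pencil_zero (φ := φ) (ψ := ψ) p
      rw [hp, hh, map_smul] at bot
      refine ih hp fun n hn => ?_
      rcases hn.eq_or_lt with rfl | hn
      · rw [hh, hreg h bot.symm]
      · exact hD n hn
    · obtain ⟨f, hf⟩ := ih (p := p - monomial D h • pencilPoint b e)
        (by rw [map_sub, map_smul, hp, pencil_pencilPoint hφ hψ hskew, smul_zero, sub_zero])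
        fun n hn => coeff_sub_monomial_smul_pencilPoint hD hh hn
      exact ⟨f + monomial D h, by rw [add_smul, ← hf, sub_add_cancel]⟩

theorem exists_pencil_eq_sub_smul_of_coeff_eq_zero (hφ : φ b = 0) (hψ : ψ e = 0)
    (hskew : φ e = -ψ b) (hker : ∀ v, ψ v = 0 → ∃ h : S, v = h • e) {c : S}
    (hcψ : ∀ q, c • q ∈ LinearMap.range ψ → q ∈ LinearMap.range ψ)
    (hreg : ∀ (h : S) (q : Q), h • φ e = c • q → ∃ h' : S, h • e = (c * h') • e)
    {a : PolynomialModule S Q} {p : PolynomialModule S E} (hp : pencil φ ψ p = C c • a) {D : ℕ}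
    (hD : ∀ n, D + 1 ≤ n → p.coeff n = 0) :
    ∃ w p' : PolynomialModule S E, pencil φ ψ p' = pencil φ ψ (p - C c • w) ∧
      ∀ n, D ≤ n → p'.coeff n = 0 := by
  have top := coeff_pencil_succ (φ := φ) (ψ := ψ) p D
  rw [hp, coeff_C_smul, hD (D + 1) le_rfl, map_zero, zero_add] at top
  obtain ⟨v, hv⟩ := hcψ _ ⟨_, top.symm⟩
  obtain ⟨h, hh⟩ := hker (p.coeff D - c • v) (by rw [map_sub, map_smul, hv, ← top, sub_self])
  have htop : (p - C c • .single S D v).coeff D = h • e := by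
    simp [polynomialModule_coeff_sub, hh]
  have hlt : ∀ n, D < n → (p - C c • .single S D v).coeff n = 0 := fun n hn => by
    simp [polynomialModule_coeff_sub, coeff_C_smul, hD n hn, hn.ne,
      -PolynomialModule.smul_single_apply]
  rcases D with _ | D
  · have bot := coeff_pencil_zero (φ := φ) (ψ := ψ) (p - C c • .single S 0 v)
    rw [map_sub, map_smul, hp, ← smul_sub, coeff_C_smul, htop, map_smul] at bot
    obtain ⟨h', hh'⟩ := hreg h _ bot.symm
    refine ⟨.single S 0 (v + h' • e), _, rfl, fun n _ => ?_⟩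
    rw [PolynomialModule.single_add, smul_add, ← sub_sub, polynomialModule_coeff_sub]
    rcases n with _ | n
    · rw [htop, hh', coeff_C_smul]; simp [mul_smul]
    · rw [hlt _ n.succ_pos, coeff_C_smul]; simp
  · exact ⟨.single S (D + 1) v, _ - monomial D h • pencilPoint b e,
      by rw [map_sub _ _ (_ • _), map_smul _ (monomial D h), pencil_pencilPoint hφ hψ hskew,
        smul_zero, sub_zero],
      fun n hn => coeff_sub_monomial_smul_pencilPoint hlt htop hn⟩

theorem mem_range_pencil_of_smul_mem (hφ : φ b = 0) (hψ : ψ e = 0) (hskew : φ e = -ψ b)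
    (hker : ∀ v, ψ v = 0 → ∃ h : S, v = h • e) {c : S} (hc : IsSMulRegular Q c)
    (hcψ : ∀ q, c • q ∈ LinearMap.range ψ → q ∈ LinearMap.range ψ)
    (hreg : ∀ (h : S) (q : Q), h • φ e = c • q → ∃ h' : S, h • e = (c * h') • e)
    {a : PolynomialModule S Q} (ha : C c • a ∈ LinearMap.range (pencil φ ψ)) :
    a ∈ LinearMap.range (pencil φ ψ) := by
  obtain ⟨p, hp⟩ := ha
  obtain ⟨D, hD⟩ := exists_coeff_eq_zero_of_le p
  induction D generalizing p a with
  | zero =>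
    obtain rfl : p = 0 := by ext n; exact hD n n.zero_le
    suffices a = 0 by rw [this]; exact zero_mem _
    ext n
    rw [map_zero] at hp
    exact hc.right_eq_zero_of_smul (by rw [← coeff_C_smul, ← hp]; rfl)
  | succ D ih =>
    obtain ⟨w, p', hp', hD'⟩ :=
      exists_pencil_eq_sub_smul_of_coeff_eq_zero hφ hψ hskew hker hcψ hreg hp hD
    have hmem := ih p' (a := a - pencil φ ψ w) (by rw [hp', map_sub, hp, map_smul, smul_sub]) hD'
    exact (Submodule.sub_mem_iff_left _ (LinearMap.mem_range_self _ w)).1 hmem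

end Pencil

section Expansion

open Polynomial

variable {S : Type*} [CommRing S]

/-- A way of regarding every element of `S` as a polynomial in `x` over the subring
`Expansion.constants`; it says that `x` behaves like a variable. -/
structure Expansion (x : S) where
  toPoly : S →+* S[X]
  toPoly_self : toPoly x = X
  eval_toPoly : ∀ s, (toPoly s).eval x = s

namespace Expansion

variable {x : S} (V : Expansion x)

/-- The elements of `S` that do not involve `x`. -/
noncomputable def constants : Subring S :=
  RingHom.eqLocus V.toPoly C

variable {V} in
theorem mem_constants {s : S} : s ∈ V.constants ↔ V.toPoly s = C s :=
  Iff.rfl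

theorem exists_neg_constants_eq : ∃ V' : Expansion (-x), V'.constants = V.constants := by
  refine ⟨⟨(compRingHom (-X)).comp V.toPoly, by simp [V.toPoly_self],
    fun s => by simp [V.eval_toPoly s, eval_comp]⟩, ?_⟩
  ext s
  rw [mem_constants, mem_constants]
  change (V.toPoly s).comp (-X) = C s ↔ V.toPoly s = C s
  refine ⟨fun h => ?_, fun h => by rw [h, C_comp]⟩
  simpa [comp_assoc] using congrArg (·.comp (-X)) h

/-- The element `s` of `S` expanded as a polynomial in `x` with coefficients in `S ⧸ J`. -/
noncomputable def expandMk (J : Ideal S) (s : S) : PolynomialModule S (S ⧸ J) :=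
  V.toPoly s • .single S 0 (Submodule.Quotient.mk 1)

theorem smul_mk_one (J : Ideal S) (s : S) :
    s • (Submodule.Quotient.mk 1 : S ⧸ J) = Submodule.Quotient.mk s := by
  rw [← Submodule.Quotient.mk_smul, smul_eq_mul, mul_one]

theorem eval_expandMk (J : Ideal S) (s : S) :
    PolynomialModule.eval x (V.expandMk J s) = Submodule.Quotient.mk s := by
  rw [expandMk, PolynomialModule.eval_smul, PolynomialModule.eval_single, V.eval_toPoly, pow_zero,
    one_smul, smul_mk_one]

theorem expandMk_add (J : Ideal S) (s s' : S) :
    V.expandMk J (s + s') = V.expandMk J s + V.expandMk J s' := by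
  rw [expandMk, map_add, add_smul]; rfl

theorem expandMk_mul (J : Ideal S) (s s' : S) :
    V.expandMk J (s * s') = V.toPoly s • V.expandMk J s' := by
  rw [expandMk, map_mul, mul_smul]; rfl

theorem expandMk_of_mem_constants (J : Ideal S) {s : S} (hs : s ∈ V.constants) :
    V.expandMk J s = .single S 0 (Submodule.Quotient.mk s) := by
  rw [expandMk, mem_constants.1 hs, ← monomial_zero_left, PolynomialModule.monomial_smul_single,
    smul_mk_one]

theorem expandMk_eq_zero {G : Set S} (hG : ∀ s ∈ G, s ∈ V.constants) {s : S} (hs : s ∈ span G) :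
    V.expandMk (span G) s = 0 := by
  induction hs using Submodule.span_induction with
  | mem s hs =>
    rw [V.expandMk_of_mem_constants _ (hG s hs),
      (Submodule.Quotient.mk_eq_zero _).2 (subset_span hs), PolynomialModule.single_zero]
  | zero => rw [expandMk, map_zero, zero_smul]
  | add s s' _ _ hs hs' => rw [expandMk_add, hs, hs', add_zero]
  | smul a s _ hs => rw [smul_eq_mul, expandMk_mul, hs, smul_zero]

theorem pencil_expandMk (J : Ideal S) {r c : S} (hr : r ∈ V.constants) (hc : c ∈ V.constants)
    (a : S) : pencil (r • LinearMap.id) (c • LinearMap.id) (V.expandMk J a) =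
      V.expandMk J ((c * x + r) * a) := by
  rw [mul_comm (c * x + r), expandMk_mul, expandMk_add, mul_comm c, expandMk_mul, V.toPoly_self,
    V.expandMk_of_mem_constants J hc, V.expandMk_of_mem_constants J hr, expandMk, map_smul,
    pencil_single, ← monomial_one_one_eq_X, PolynomialModule.monomial_smul_single, one_smul]
  simp only [LinearMap.smul_apply, LinearMap.id_apply, smul_mk_one, add_comm]

theorem isSMulRegular_of_leadingCoeff {G : Set S} (hG : ∀ s ∈ G, s ∈ V.constants) {c r p : S}
    (hp : p = c * x + r) (hc : c ∈ V.constants) (hr : r ∈ V.constants)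
    (h : IsSMulRegular (S ⧸ span G) c) : IsSMulRegular (S ⧸ span G) p := by
  rw [isSMulRegular_quotient_iff_mem_of_smul_mem]
  intro a ha
  rw [hp, smul_eq_mul] at ha
  have hinj := pencil_injective (φ := (r • LinearMap.id : S ⧸ span G →ₗ[S] S ⧸ span G))
    (ψ := (c • LinearMap.id : S ⧸ span G →ₗ[S] S ⧸ span G)) fun _ _ hab => h hab
  have hzero : V.expandMk (span G) a = 0 := (injective_iff_map_eq_zero _).1 hinj _ <| by
    rw [V.pencil_expandMk _ hr hc, V.expandMk_eq_zero hG ha]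
  rw [← Submodule.Quotient.mk_eq_zero, ← V.eval_expandMk, hzero, map_zero]

end Expansion

section Form

variable {E : Type*} [AddCommGroup E] [Module S E] (ω : E →ₗ[S] E →ₗ[S] S) (N : Submodule S E)
  (g : S)

/-- Modulo `N`, the vector `e` generates everything orthogonal to it modulo `g`. -/
def GeneratesPerp (e : E) : Prop :=
  ∀ v, ω e v ∈ span {g} → ∃ h : S, v - h • e ∈ N

/-- The ideal `(g) + ω(u, E)`. -/
def pairingIdeal (u : E) : Ideal S :=
  span {g} ⊔ LinearMap.range (ω u)

variable {ω N g}

theorem mem_pairingIdeal {u : E} {a : S} :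
    a ∈ pairingIdeal ω g u ↔ ∃ v, a - ω u v ∈ span {g} := by
  rw [pairingIdeal, Submodule.mem_sup]
  constructor
  · rintro ⟨y, hy, z, ⟨v, rfl⟩, rfl⟩
    exact ⟨v, by simpa using hy⟩
  · rintro ⟨v, hv⟩
    exact ⟨_, hv, _, ⟨v, rfl⟩, by simp⟩

/-- The functional `ω(u, ·)` as a map `E ⧸ N → S ⧸ (g)`. -/
def pairingMapQ (hN : ∀ u, ∀ v ∈ N, ω u v ∈ span {g}) (u : E) : E ⧸ N →ₗ[S] S ⧸ span {g} :=
  N.mapQ (span {g}) (ω u) (hN u)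

variable (hN : ∀ u, ∀ v ∈ N, ω u v ∈ span {g})

theorem pairingMapQ_mk (u v : E) :
    pairingMapQ hN u (Submodule.Quotient.mk v) = Submodule.Quotient.mk (ω u v) :=
  rfl

theorem pairingMapQ_skew (hω : ω.IsAlt) (u v : E) :
    pairingMapQ hN u (Submodule.Quotient.mk v) = -pairingMapQ hN v (Submodule.Quotient.mk u) := by
  rw [pairingMapQ_mk, pairingMapQ_mk, ← Submodule.Quotient.mk_neg, hω.neg]

theorem pairingMapQ_self (hω : ω.IsAlt) (u : E) :
    pairingMapQ hN u (Submodule.Quotient.mk u) = 0 := by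
  rw [pairingMapQ_mk, hω.self_eq_zero, Submodule.Quotient.mk_zero]

theorem pairingMapQ_add_smul (x : S) (b e : E) :
    pairingMapQ hN (b + x • e) = pairingMapQ hN b + x • pairingMapQ hN e := by
  ext v
  simp only [LinearMap.comp_apply, Submodule.mkQ_apply, LinearMap.add_apply, LinearMap.smul_apply,
    pairingMapQ_mk, map_add, map_smul, Submodule.Quotient.mk_add, Submodule.Quotient.mk_smul]

theorem mk_mem_range_pairingMapQ {u : E} {a : S} :
    Submodule.Quotient.mk a ∈ LinearMap.range (pairingMapQ hN u) ↔ a ∈ pairingIdeal ω g u := by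
  rw [mem_pairingIdeal, LinearMap.mem_range, (Submodule.mkQ_surjective N).exists]
  refine exists_congr fun v => ?_
  rw [Submodule.mkQ_apply, pairingMapQ_mk, eq_comm, Submodule.Quotient.eq]

theorem GeneratesPerp.exists_eq_smul {e : E} (he : GeneratesPerp ω N g e) {v : E ⧸ N}
    (hv : pairingMapQ hN e v = 0) : ∃ h : S, v = h • Submodule.Quotient.mk e := by
  obtain ⟨v, rfl⟩ := N.mkQ_surjective v
  obtain ⟨h, hh⟩ := he v ((Submodule.Quotient.mk_eq_zero _).1 hv)
  exact ⟨h, by rwa [Submodule.mkQ_apply, ← Submodule.Quotient.mk_smul, Submodule.Quotient.eq]⟩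

end Form

section CoordinateForm

variable {ι : Type*} [Fintype ι] [DecidableEq ι] {x : S} (V : Expansion x)
  {ω : (ι → S) →ₗ[S] (ι → S) →ₗ[S] S} {N : Submodule S (ι → S)} {g : S}

/-- The class in `S^ι ⧸ N` of the vector `v`, expanded as a polynomial in `x`. -/
noncomputable def Expansion.expandVec (N : Submodule S (ι → S)) (v : ι → S) :
    PolynomialModule S ((ι → S) ⧸ N) :=
  ∑ i, V.toPoly (v i) • .single S 0 (Submodule.Quotient.mk (Pi.single i 1))

theorem Expansion.eval_expandVec (v : ι → S) :
    PolynomialModule.eval x (V.expandVec N v) = Submodule.Quotient.mk v := by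
  simp only [expandVec, map_sum, PolynomialModule.eval_smul, V.eval_toPoly,
    PolynomialModule.eval_single, pow_zero, one_smul, ← Submodule.Quotient.mk_smul]
  rw [← Submodule.mkQ_apply N v, ← Finset.univ_sum_single v, map_sum]
  simp [← Pi.single_smul]

variable (hN : ∀ u, ∀ v ∈ N, ω u v ∈ span {g}) {b e : ι → S}
  (hb : ∀ i, ω b (Pi.single i 1) ∈ V.constants) (he : ∀ i, ω e (Pi.single i 1) ∈ V.constants)

include hb he in
theorem Expansion.pencil_expandVec (v : ι → S) :
    pencil (pairingMapQ hN b) (pairingMapQ hN e) (V.expandVec N v) =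
      V.expandMk (span {g}) (ω (b + x • e) v) := by
  have coordinates : ω (b + x • e) v =
      ∑ i, v i * (ω b (Pi.single i 1) + x * ω e (Pi.single i 1)) := by
    conv_lhs => rw [← Finset.univ_sum_single v, map_sum]
    refine Finset.sum_congr rfl fun i _ => ?_
    rw [show Pi.single i (v i) = v i • Pi.single (M := fun _ => S) i 1 by simp [← Pi.single_smul]]
    simp
  rw [expandVec, map_sum, coordinates, expandMk, map_sum, Finset.sum_smul]
  refine Finset.sum_congr rfl fun i _ => ?_
  rw [map_smul, pencil_single, pairingMapQ_mk, pairingMapQ_mk, map_mul, mul_smul]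
  congr 1
  change _ = V.expandMk (span {g}) _
  rw [expandMk_add, expandMk_mul, V.toPoly_self, V.expandMk_of_mem_constants _ (hb i),
    V.expandMk_of_mem_constants _ (he i), ← monomial_one_one_eq_X,
    PolynomialModule.monomial_smul_single, one_smul]

variable (hω : ω.IsAlt) (hg : ∀ v, g • v ∈ N) (hgV : g ∈ V.constants)
  (hperp : GeneratesPerp ω N g e)

include hN hb he hω hg hgV hperp

omit [Fintype ι] in
theorem GeneratesPerp.add_smul [Finite ι] (hreg : IsSMulRegular (S ⧸ span {g}) (ω b e)) :
    GeneratesPerp ω N g (b + x • e) := by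
  cases nonempty_fintype ι
  intro v hv
  have hzero : pencil (pairingMapQ hN b) (pairingMapQ hN e) (V.expandVec N v) = 0 := by
    rw [V.pencil_expandVec hN hb he, V.expandMk_eq_zero (by simpa using hgV) hv]
  have hcancel (h : S) (hh : h • pairingMapQ hN b (Submodule.Quotient.mk e) = 0) :
      h • (Submodule.Quotient.mk e : (ι → S) ⧸ N) = 0 := by
    rw [pairingMapQ_mk, ← Submodule.Quotient.mk_smul, Submodule.Quotient.mk_eq_zero, smul_eq_mul,
      mul_comm, ← smul_eq_mul] at hh
    obtain ⟨s, rfl⟩ := mem_span_singleton'.1 (mem_of_isSMulRegular_quotient_of_smul_mem hreg hh)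
    rw [← Submodule.Quotient.mk_smul, Submodule.Quotient.mk_eq_zero, mul_smul]
    exact N.smul_mem s (hg e)
  obtain ⟨f, hf⟩ := exists_smul_of_pencil_eq_zero (pairingMapQ_self hN hω b)
    (pairingMapQ_self hN hω e) (pairingMapQ_skew hN hω b e)
    (fun v => hperp.exists_eq_smul hN) hcancel hzero
  refine ⟨f.eval x, (Submodule.Quotient.eq N).1 ?_⟩
  rw [← V.eval_expandVec, hf, PolynomialModule.eval_smul, eval_pencilPoint]
  simp

omit [Fintype ι] in
theorem isSMulRegular_pairingIdeal_add_smul [Finite ι] {c : S} (hc : c ∈ V.constants)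
    (hce : IsSMulRegular (S ⧸ pairingIdeal ω g e) c) (hcg : IsSMulRegular (S ⧸ span {g}) c)
    (hreg : IsSMulRegular (S ⧸ span {c, g}) (ω b e)) :
    IsSMulRegular (S ⧸ pairingIdeal ω g (b + x • e)) c := by
  cases nonempty_fintype ι
  rw [isSMulRegular_quotient_iff_mem_of_smul_mem]
  intro a ha
  obtain ⟨w, hw⟩ := mem_pairingIdeal.1 ha
  have hrange : C c • V.expandMk (span {g}) a ∈
      LinearMap.range (pencil (pairingMapQ hN b) (pairingMapQ hN e)) := by
    refine ⟨V.expandVec N w, ?_⟩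
    rw [V.pencil_expandVec hN hb he, ← Expansion.mem_constants.1 hc, ← V.expandMk_mul,
      ← smul_eq_mul, ← sub_add_cancel (c • a) (ω (b + x • e) w), V.expandMk_add,
      V.expandMk_eq_zero (by simpa using hgV) hw, zero_add]
  have hcψ (q : S ⧸ span {g}) (hq : c • q ∈ LinearMap.range (pairingMapQ hN e)) :
      q ∈ LinearMap.range (pairingMapQ hN e) := by
    obtain ⟨q, rfl⟩ := Submodule.mkQ_surjective _ q
    rw [Submodule.mkQ_apply, mk_mem_range_pairingMapQ]
    rw [← map_smul, Submodule.mkQ_apply, mk_mem_range_pairingMapQ] at hq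
    exact mem_of_isSMulRegular_quotient_of_smul_mem hce hq
  have hdvd (h : S) (q : S ⧸ span {g})
      (hq : h • pairingMapQ hN b (Submodule.Quotient.mk e) = c • q) :
      ∃ h' : S, h • (Submodule.Quotient.mk e : (ι → S) ⧸ N) =
        (c * h') • Submodule.Quotient.mk e := by
    obtain ⟨q, rfl⟩ := Submodule.mkQ_surjective _ q
    rw [pairingMapQ_mk, Submodule.mkQ_apply, ← Submodule.Quotient.mk_smul,
      ← Submodule.Quotient.mk_smul, Submodule.Quotient.eq, mem_span_singleton'] at hq
    obtain ⟨r, hr⟩ := hq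
    obtain ⟨h', s, rfl⟩ := mem_span_pair.1 <| mem_of_isSMulRegular_quotient_of_smul_mem hreg
      (x := h) (mem_span_pair.2 ⟨q, r, by simp only [smul_eq_mul] at hr ⊢; linear_combination hr⟩)
    refine ⟨h', ?_⟩
    rw [mul_comm c, add_smul, mul_smul s, ← Submodule.Quotient.mk_smul _ g e,
      (Submodule.Quotient.mk_eq_zero N).2 (hg e), smul_zero, add_zero]
  obtain ⟨p, hp⟩ := mem_range_pencil_of_smul_mem (pairingMapQ_self hN hω b)
    (pairingMapQ_self hN hω e) (pairingMapQ_skew hN hω b e)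
    (fun v => hperp.exists_eq_smul hN) hcg hcψ hdvd hrange
  rw [← mk_mem_range_pairingMapQ hN, ← V.eval_expandMk, ← hp, eval_pencil,
    ← pairingMapQ_add_smul]
  exact LinearMap.mem_range_self _ _

end CoordinateForm

end Expansion

section AlternatingMatrix

variable {S : Type*} [CommRing S] {ι : Type*}

/-- The exterior algebra of the free module with basis `ι`. -/
abbrev FreeExterior (S : Type*) [CommRing S] (ι : Type*) := ExteriorAlgebra S (ι →₀ S)

/-- The basis vector indexed by `i`, as an element of the exterior algebra. -/
noncomputable def basisVec (i : ι) : FreeExterior S ι := ExteriorAlgebra.ι S (Finsupp.single i 1)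

/-- Left contraction by the functional on `ι →₀ S` whose value on the `i`-th basis vector is
`d i`. -/
noncomputable def contract : (ι → S) →ₗ[S] FreeExterior S ι →ₗ[S] FreeExterior S ι :=
  CliffordAlgebra.contractLeft (Q := (0 : QuadraticForm S (ι →₀ S))) ∘ₗ
    (Finsupp.llift S S S ι).toLinearMap

theorem contract_basisVec_mul (d : ι → S) (i : ι) (x : FreeExterior S ι) :
    contract d (basisVec i * x) = d i • x - basisVec i * contract d x := by
  have h := CliffordAlgebra.contractLeft_ι_mul (Q := (0 : QuadraticForm S (ι →₀ S)))
    (Finsupp.llift S S S ι d) (Finsupp.single i 1) x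
  rw [show Finsupp.llift S S S ι d (Finsupp.single i 1) = d i by simp [Finsupp.lift_apply]] at h
  exact h

theorem contract_one (d : ι → S) : contract d (1 : FreeExterior S ι) = 0 :=
  CliffordAlgebra.contractLeft_one (Q := 0) _

theorem contract_contract (d : ι → S) (x : FreeExterior S ι) : contract d (contract d x) = 0 :=
  CliffordAlgebra.contractLeft_contractLeft _ x

theorem contract_comm (d d' : ι → S) (x : FreeExterior S ι) :
    contract d (contract d' x) = -contract d' (contract d x) :=
  CliffordAlgebra.contractLeft_comm _ _ x

theorem basisVec_mul_self (i : ι) (x : FreeExterior S ι) : basisVec i * (basisVec i * x) = 0 := by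
  rw [← mul_assoc, basisVec, ExteriorAlgebra.ι_sq_zero, zero_mul]

theorem basisVec_mul_comm (i j : ι) (x : FreeExterior S ι) :
    basisVec i * (basisVec j * x) = -(basisVec j * (basisVec i * x)) := by
  rw [← mul_assoc, ← mul_assoc, ← neg_mul]
  congr 1
  exact eq_neg_of_add_eq_zero_left (ExteriorAlgebra.ι_add_mul_swap _ _)

/-- Alternating matrices: skew-symmetric with zero diagonal. -/
structure IsAlternating (M : Matrix ι ι S) : Prop where
  diag : ∀ i, M i i = 0
  skew : ∀ i j, M i j = -M j i

/-- The bilinear form on `ι →₀ S` with matrix `-M`. -/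
noncomputable def negForm (M : Matrix ι ι S) : LinearMap.BilinForm S (ι →₀ S) :=
  Finsupp.linearCombination S fun i => -Finsupp.llift S S S ι (M i)

theorem negForm_single (M : Matrix ι ι S) (i : ι) :
    negForm M (Finsupp.single i 1) = -Finsupp.llift S S S ι (M i) := by
  rw [negForm, Finsupp.linearCombination_single, one_smul]

theorem negForm_single_single (M : Matrix ι ι S) (i j : ι) :
    negForm M (Finsupp.single i 1) (Finsupp.single j 1) = -M i j := by
  simp [negForm_single, Finsupp.lift_apply]

theorem IsAlternating.isAlt_negForm {M : Matrix ι ι S} (hM : IsAlternating M) :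
    (negForm M).IsAlt := by
  have skew (x y) : negForm M x y = -negForm M y x := by
    have : negForm M = -(negForm M).flip := by
      ext i j
      simp [negForm_single_single, hM.skew i j]
    conv_lhs => rw [this]
    rfl
  intro x
  induction x using Finsupp.induction_linear with
  | zero => simp
  | add x y hx hy => simp [hx, hy, skew x y]
  | single i s =>
    rw [← mul_one s, ← Finsupp.smul_single', map_smul, map_smul, LinearMap.smul_apply,
      negForm_single_single, hM.diag, neg_zero, smul_zero, smul_zero]

theorem IsAlternating.toQuadraticMap_negForm {M : Matrix ι ι S} (hM : IsAlternating M) :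
    (negForm M).toQuadraticMap = (0 : QuadraticForm S (ι →₀ S)) - 0 := by
  ext x
  simpa using hM.isAlt_negForm x

open Classical in
/-- The linear functional on the exterior algebra whose value on the product of the basis vectors
along a list is the Pfaffian of the corresponding submatrix of `M`. It is the augmentation of the
automorphism `CliffordAlgebra.changeForm` attached to `M`, and `0` when `M` is not alternating. -/
noncomputable def pfaffianFunctional (M : Matrix ι ι S) : FreeExterior S ι →ₗ[S] S :=
  if hM : IsAlternating M then
    (ExteriorAlgebra.algebraMapInv (R := S) (M := ι →₀ S)).toLinearMap ∘ₗ
      CliffordAlgebra.changeForm hM.toQuadraticMap_negForm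
  else 0

theorem pfaffianFunctional_one {M : Matrix ι ι S} (hM : IsAlternating M) :
    pfaffianFunctional M 1 = 1 := by
  rw [pfaffianFunctional, dif_pos hM, LinearMap.comp_apply, CliffordAlgebra.changeForm_one]
  exact map_one (ExteriorAlgebra.algebraMapInv (R := S) (M := ι →₀ S))

theorem pfaffianFunctional_basisVec_mul {M : Matrix ι ι S} (hM : IsAlternating M) (a : ι)
    (x : FreeExterior S ι) :
    pfaffianFunctional M (basisVec a * x) = pfaffianFunctional M (contract (M a) x) := by
  set φ := CliffordAlgebra.changeForm hM.toQuadraticMap_negForm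
  have change_mul : φ (basisVec a * x) = basisVec a * φ x + contract (M a) (φ x) := by
    refine (CliffordAlgebra.changeForm_ι_mul hM.toQuadraticMap_negForm (.single a 1) x).trans ?_
    rw [negForm_single, map_neg, LinearMap.neg_apply, sub_neg_eq_add]
    rfl
  have change_contract : φ (contract (M a) x) = contract (M a) (φ x) :=
    CliffordAlgebra.changeForm_contractLeft hM.toQuadraticMap_negForm _ x
  rw [pfaffianFunctional, dif_pos hM, LinearMap.comp_apply, LinearMap.comp_apply, change_mul,
    change_contract]
  simp [basisVec, ExteriorAlgebra.algebraMapInv]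

/-- The exterior product of the basis vectors along a list. -/
noncomputable def wedge (l : List ι) : FreeExterior S ι := (l.map basisVec).prod

@[simp]
theorem wedge_nil : wedge ([] : List ι) = (1 : FreeExterior S ι) :=
  rfl

@[simp]
theorem wedge_cons (a : ι) (l : List ι) :
    wedge (a :: l) = (basisVec a * wedge l : FreeExterior S ι) := by
  simp [wedge]

theorem basisVec_mul_wedge {a : ι} {l : List ι} (h : a ∈ l) :
    basisVec a * wedge l = (0 : FreeExterior S ι) := by
  induction l with
  | nil => simp at h
  | cons b l ih =>
    rw [wedge_cons]
    obtain rfl | hab := eq_or_ne a b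
    · exact basisVec_mul_self _ _
    · rw [basisVec_mul_comm, ih ((List.mem_cons.1 h).resolve_left hab), mul_zero, neg_zero]

theorem contract_wedge_congr {d d' : ι → S} {l : List ι} (h : ∀ i ∈ l, d i = d' i) :
    contract d (wedge l) = contract d' (wedge l) := by
  induction l with
  | nil => simp [contract_one]
  | cons b l ih =>
    rw [wedge_cons, contract_basisVec_mul, contract_basisVec_mul, h b List.mem_cons_self,
      ih fun i hi => h i (List.mem_cons_of_mem b hi)]

theorem wedge_perm {l l' : List ι} (h : l.Perm l') :
    (wedge l : FreeExterior S ι) = wedge l' ∨ (wedge l : FreeExterior S ι) = -wedge l' := by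
  induction h with
  | nil => simp
  | cons x _ ih => rcases ih with h | h <;> simp [h]
  | swap x y l => exact .inr (by rw [wedge_cons, wedge_cons, wedge_cons, wedge_cons,
      basisVec_mul_comm])
  | trans _ _ ih₁ ih₂ =>
    rcases ih₁ with h | h <;> rcases ih₂ with h' | h' <;> simp [h, h']

variable (M : Matrix ι ι S)

/-- The Pfaffian of the submatrix of `M` whose rows and columns are listed in `l`. -/
noncomputable def pf (l : List ι) : S := pfaffianFunctional M (wedge l)

/-- The linear form whose value at a basis vector `i` of `l` is, up to sign, the Pfaffian of the
submatrix of `M` on `l` without `i`. -/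
noncomputable def subPf (l : List ι) : (ι → S) →ₗ[S] S :=
  pfaffianFunctional M ∘ₗ contract.flip (wedge l)

theorem subPf_apply (l : List ι) (v : ι → S) :
    subPf M l v = pfaffianFunctional M (contract v (wedge l)) :=
  rfl

/-- The alternating form `uᵀ adj v`, where `adj` is the Pfaffian adjoint of the submatrix of `M` on
`l`. It gives the part of a bordered Pfaffian that does not involve the corner entry
(`pf_cons_cons`). -/
noncomputable def pfForm (l : List ι) : (ι → S) →ₗ[S] (ι → S) →ₗ[S] S :=
  LinearMap.mk₂ S (fun u v => pfaffianFunctional M (contract u (contract v (wedge l))))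
    (by intros; simp) (by intros; simp) (by intros; simp) (by intros; simp)

theorem pfForm_apply (l : List ι) (u v : ι → S) :
    pfForm M l u v = pfaffianFunctional M (contract u (contract v (wedge l))) :=
  rfl

theorem isAlt_pfForm (l : List ι) : (pfForm M l).IsAlt := fun u => by
  rw [pfForm_apply, contract_contract, map_zero]

theorem pfForm_self (l : List ι) (u : ι → S) : pfForm M l u u = 0 :=
  isAlt_pfForm M l u

theorem pfForm_skew (l : List ι) (u v : ι → S) : pfForm M l u v = -pfForm M l v u :=
  ((isAlt_pfForm M l).neg v u).symm

variable {M}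

theorem subPf_congr {l : List ι} {v v' : ι → S} (hv : ∀ i ∈ l, v i = v' i) :
    subPf M l v = subPf M l v' := by
  rw [subPf_apply, contract_wedge_congr hv, subPf_apply]

theorem pfForm_congr {l : List ι} {u v u' v' : ι → S} (hu : ∀ i ∈ l, u i = u' i)
    (hv : ∀ i ∈ l, v i = v' i) : pfForm M l u v = pfForm M l u' v' := by
  rw [pfForm_apply, contract_wedge_congr hv, contract_comm, contract_wedge_congr hu, contract_comm,
    neg_neg, pfForm_apply]

section Pfaffian

variable (hM : IsAlternating M)

include hM

theorem pf_nil : pf M [] = 1 :=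
  pfaffianFunctional_one hM

theorem pf_cons (a : ι) (l : List ι) : pf M (a :: l) = subPf M l (M a) := by
  rw [pf, wedge_cons, pfaffianFunctional_basisVec_mul hM, subPf_apply]

theorem pfForm_row {l : List ι} {a : ι} (ha : a ∈ l) (v : ι → S) :
    pfForm M l v (M a) = -(v a * pf M l) := by
  have key : basisVec a * contract v (wedge l) =
      v a • wedge l - contract v (basisVec a * wedge l) := by
    rw [contract_basisVec_mul, sub_sub_cancel]
  rw [pfForm_skew, pfForm_apply, ← pfaffianFunctional_basisVec_mul hM, key, basisVec_mul_wedge ha]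
  simp [pf]

theorem subPf_cons (v : ι → S) (a : ι) (l : List ι) :
    subPf M (a :: l) v = v a * pf M l - pfForm M l (M a) v := by
  rw [subPf_apply, wedge_cons, contract_basisVec_mul, map_sub,
    pfaffianFunctional_basisVec_mul hM, map_smul, smul_eq_mul, pf, pfForm_apply]

theorem pf_cons_cons (a b : ι) (l : List ι) :
    pf M (a :: b :: l) = M a b * pf M l - pfForm M l (M b) (M a) := by
  rw [pf_cons hM, subPf_cons hM]

end Pfaffian

section Subring

variable (R : Subring S)

/-- The `R`-span of the exterior products along the sublists of `l`. -/
noncomputable def wedgeSpan (l : List ι) : Submodule R (FreeExterior S ι) :=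
  Submodule.span R (wedge '' {s | s.Sublist l})

variable {R} {l : List ι}

theorem wedge_mem_wedgeSpan {s : List ι} (h : s.Sublist l) : wedge s ∈ wedgeSpan R l :=
  Submodule.subset_span ⟨s, h, rfl⟩

theorem wedgeSpan_mono {l' : List ι} (h : l.Sublist l') : wedgeSpan R l ≤ wedgeSpan R l' :=
  Submodule.span_mono (Set.image_mono fun _ hs => hs.trans h)

theorem basisVec_mul_mem_wedgeSpan (a : ι) {y : FreeExterior S ι} (hy : y ∈ wedgeSpan R l) :
    basisVec a * y ∈ wedgeSpan R (a :: l) := by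
  induction hy using Submodule.span_induction with
  | mem y h =>
    obtain ⟨s, hs, rfl⟩ := h
    rw [← wedge_cons]
    exact wedge_mem_wedgeSpan (hs.cons_cons a)
  | zero => simp
  | add x y _ _ hx hy => rw [mul_add]; exact add_mem hx hy
  | smul r x _ hx => rw [mul_smul_comm]; exact Submodule.smul_mem _ r hx

theorem contract_wedge_mem_wedgeSpan {d : ι → S} (hd : ∀ i ∈ l, d i ∈ R) :
    contract d (wedge l) ∈ wedgeSpan R l := by
  induction l with
  | nil => simp [contract_one]
  | cons a l ih =>
    rw [wedge_cons, contract_basisVec_mul]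
    refine sub_mem ?_ (basisVec_mul_mem_wedgeSpan a (ih fun i hi => hd i (by simp [hi])))
    exact Submodule.smul_mem _ (⟨d a, hd a List.mem_cons_self⟩ : R)
      (wedge_mem_wedgeSpan (List.sublist_cons_self a l))

theorem contract_mem_wedgeSpan {d : ι → S} (hd : ∀ i ∈ l, d i ∈ R) {y : FreeExterior S ι}
    (hy : y ∈ wedgeSpan R l) : contract d y ∈ wedgeSpan R l := by
  induction hy using Submodule.span_induction with
  | mem y h =>
    obtain ⟨s, hs, rfl⟩ := h
    exact wedgeSpan_mono hs (contract_wedge_mem_wedgeSpan fun i hi => hd i (hs.subset hi))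
  | zero => simp
  | add x y _ _ hx hy => rw [map_add]; exact add_mem hx hy
  | smul r x _ hx => rw [LinearMap.map_smul_of_tower]; exact Submodule.smul_mem _ r hx

theorem pfaffianFunctional_mem_of_forall_sublist (h : ∀ s, s.Sublist l → pf M s ∈ R)
    {y : FreeExterior S ι} (hy : y ∈ wedgeSpan R l) : pfaffianFunctional M y ∈ R := by
  induction hy using Submodule.span_induction with
  | mem y hy =>
    obtain ⟨s, hs, rfl⟩ := hy
    exact h s hs
  | zero => simp
  | add x y _ _ hx hy => rw [map_add]; exact add_mem hx hy
  | smul r x _ hx => rw [LinearMap.map_smul_of_tower]; exact R.mul_mem r.2 hx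

variable (hM : IsAlternating M) (hMR : ∀ a ∈ l, ∀ b ∈ l, M a b ∈ R)

include hM hMR

theorem pf_mem : pf M l ∈ R := by
  induction hn : l.length using Nat.strong_induction_on generalizing l with
  | _ n ih =>
  cases l with
  | nil => rw [pf_nil hM]; exact R.one_mem
  | cons a l =>
    rw [pf_cons hM]
    refine pfaffianFunctional_mem_of_forall_sublist (l := l) (fun s hs => ?_)
      (contract_wedge_mem_wedgeSpan fun i hi => hMR a (by simp) i (by simp [hi]))
    refine ih s.length ?_ (fun a ha b hb => ?_) rfl
    · rw [← hn, List.length_cons, Nat.lt_succ_iff]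
      exact hs.length_le
    · exact hMR a (List.mem_cons_of_mem _ (hs.subset ha)) b (List.mem_cons_of_mem _ (hs.subset hb))

theorem pfaffianFunctional_mem {y : FreeExterior S ι} (hy : y ∈ wedgeSpan R l) :
    pfaffianFunctional M y ∈ R :=
  pfaffianFunctional_mem_of_forall_sublist
    (fun _ hs => pf_mem hM fun a ha b hb => hMR a (hs.subset ha) b (hs.subset hb)) hy

theorem subPf_mem {u : ι → S} (hu : ∀ i ∈ l, u i ∈ R) : subPf M l u ∈ R :=
  pfaffianFunctional_mem hM hMR (contract_wedge_mem_wedgeSpan hu)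

theorem pfForm_mem {u v : ι → S} (hu : ∀ i ∈ l, u i ∈ R) (hv : ∀ i ∈ l, v i ∈ R) :
    pfForm M l u v ∈ R :=
  pfaffianFunctional_mem hM hMR (contract_mem_wedgeSpan hu (contract_wedge_mem_wedgeSpan hv))

end Subring

/-- The submodule of `ι → S` that becomes the row space of the submatrix of `M` on `l` after
restriction to `l`: it is spanned by the rows of `M` indexed by `l` and the vectors vanishing
on `l`. -/
def rowSpan (M : Matrix ι ι S) (l : List ι) : Submodule S (ι → S) :=
  Submodule.span S {v | (∃ a ∈ l, v = M a) ∨ ∀ i ∈ l, v i = 0}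

theorem row_mem_rowSpan {l : List ι} {a : ι} (ha : a ∈ l) : M a ∈ rowSpan M l :=
  Submodule.subset_span (.inl ⟨a, ha, rfl⟩)

theorem mem_rowSpan_of_forall_eq_zero {l : List ι} {v : ι → S} (hv : ∀ i ∈ l, v i = 0) :
    v ∈ rowSpan M l :=
  Submodule.subset_span (.inr hv)

section RowSpan

variable (hM : IsAlternating M) {l : List ι}

include hM

theorem pfForm_mem_span_pf (u : ι → S) {v : ι → S} (hv : v ∈ rowSpan M l) :
    pfForm M l u v ∈ span {pf M l} := by
  suffices h : rowSpan M l ≤ Submodule.comap (pfForm M l u) (span {pf M l}) from h hv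
  rw [rowSpan, Submodule.span_le]
  rintro v (⟨a, ha, rfl⟩ | hv)
  · change pfForm M l u (M a) ∈ span {pf M l}
    rw [pfForm_row hM ha]
    exact neg_mem (Ideal.mul_mem_left _ _ (mem_span_singleton_self _))
  · change pfForm M l u v ∈ span {pf M l}
    rw [pfForm_congr (fun _ _ => rfl) (v' := 0) hv, map_zero]
    exact zero_mem _

theorem pf_smul_mem_rowSpan (v : ι → S) : pf M l • v ∈ rowSpan M l := by
  classical
  set w : ι → S := ∑ b ∈ l.toFinset, pfForm M l v (Pi.single b 1) • M b with hw
  have hw_mem : w ∈ rowSpan M l := Submodule.sum_mem _ fun b hb =>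
    Submodule.smul_mem _ _ (row_mem_rowSpan (List.mem_toFinset.1 hb))
  rw [← add_sub_cancel w (pf M l • v)]
  refine add_mem hw_mem (mem_rowSpan_of_forall_eq_zero fun a ha => ?_)
  have restrict (i) (hi : i ∈ l) : M a i = (∑ b ∈ l.toFinset, M a b • Pi.single b (1 : S)) i := by
    simp [Finset.sum_apply, Pi.single_apply, hi]
  have expand := pfForm_row hM ha v
  rw [pfForm_congr (fun _ _ => rfl) restrict, map_sum] at expand
  rw [Pi.sub_apply, sub_eq_zero, Pi.smul_apply, smul_eq_mul, mul_comm, ← neg_inj, ← expand, hw,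
    Finset.sum_apply, ← Finset.sum_neg_distrib]
  refine Finset.sum_congr rfl fun b _ => ?_
  rw [map_smul, hM.skew a b, Pi.smul_apply, smul_eq_mul, smul_eq_mul]
  ring

theorem subPf_eq_zero_of_mem_rowSpan {v : ι → S} (hv : v ∈ rowSpan M l) : subPf M l v = 0 := by
  suffices h : rowSpan M l ≤ LinearMap.ker (subPf M l) from h hv
  rw [rowSpan, Submodule.span_le]
  rintro v (⟨a, ha, rfl⟩ | hv) <;> rw [SetLike.mem_coe, LinearMap.mem_ker]
  · rw [subPf_apply, ← pfaffianFunctional_basisVec_mul hM, basisVec_mul_wedge ha, map_zero]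
  · rw [subPf_congr (v' := 0) hv, map_zero]

end RowSpan

end AlternatingMatrix

section PfaffianExpansion

variable {S : Type*} [CommRing S] {ι : Type*}

theorem contract_wedge_ofFn (d : ι → S) {n : ℕ} (f : Fin (n + 1) → ι) :
    contract d (wedge (List.ofFn f)) =
      ∑ j : Fin (n + 1), ((-1 : S) ^ (j : ℕ) * d (f j)) • wedge (List.ofFn (f ∘ j.succAbove)) := by
  induction n with
  | zero => simpa [List.ofFn_succ, contract_one] using contract_basisVec_mul d (f 0) 1
  | succ n ih =>
    rw [List.ofFn_succ, wedge_cons, contract_basisVec_mul, ih, sub_eq_add_neg, Finset.mul_sum,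
      ← Finset.sum_neg_distrib, Fin.sum_univ_succ (n := n + 1)]
    congr 1
    · simp [Function.comp_def]
    · refine Finset.sum_congr rfl fun j _ => ?_
      rw [List.ofFn_succ (f := f ∘ j.succ.succAbove), wedge_cons]
      simp [pow_succ, Function.comp_def]

theorem pfaffian_submatrix {M : Matrix ι ι S} (hM : IsAlternating M) (n : ℕ) (f : Fin n → ι) :
    pfaffian n (M.submatrix f f) = pf M (List.ofFn f) := by
  induction n using Nat.twoStepInduction with
  | zero => simp [pfaffian, pf_nil hM]
  | one => simp [pfaffian, List.ofFn_succ, pf_cons hM, subPf_apply, contract_one]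
  | more n ih _ =>
    rw [List.ofFn_succ, pf_cons hM, subPf_apply, contract_wedge_ofFn, map_sum, pfaffian]
    refine Finset.sum_congr rfl fun j _ => ?_
    rw [map_smul, smul_eq_mul]
    congr 1
    exact ih fun k => f (j.succAbove k).succ

theorem map_pfaffian {S' : Type*} [CommRing S'] (φ : S →+* S') (n : ℕ)
    (M : Matrix (Fin n) (Fin n) S) : φ (pfaffian n M) = pfaffian n (M.map φ) := by
  induction n using Nat.twoStepInduction with
  | zero => simp [pfaffian]
  | one => simp [pfaffian]
  | more n ih _ =>
    simp only [pfaffian, map_sum, map_mul, map_pow, map_neg, map_one, ih]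
    rfl

end PfaffianExpansion

section GenericEntries

variable {S : Type*} [CommRing S] {ι : Type*}

/-- A symmetric relation `Indep` on the index set of an alternating matrix `M` such that for
related `i` and `j` the entry `M i j` behaves like a variable, occurring in no other entry of `M`
than `M j i`. -/
structure GenericEntries (M : Matrix ι ι S) where
  Indep : ι → ι → Prop
  ne : ∀ {i j}, Indep i j → i ≠ j
  symm : ∀ {i j}, Indep i j → Indep j i
  isAlternating : IsAlternating M
  expansion : ∀ i j, Indep i j → Expansion (M i j)
  mem_constants : ∀ i j (h : Indep i j) a b, ¬(a = i ∧ b = j) → ¬(a = j ∧ b = i) →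
    M a b ∈ (expansion i j h).constants

namespace GenericEntries

variable {M : Matrix ι ι S}

/-- All off-diagonal entries of the submatrix of `M` on the list `l` behave like variables. -/
def IndepOn (𝒢 : GenericEntries M) (l : List ι) : Prop := l.Pairwise 𝒢.Indep

variable {𝒢 : GenericEntries M} {a b c d e : ι} {l : List ι}

theorem IndepOn.perm {l' : List ι} (h : 𝒢.IndepOn l) (hl : l.Perm l') : 𝒢.IndepOn l' :=
  (hl.pairwise_iff fun h => 𝒢.symm h).1 h

theorem IndepOn.sublist {l' : List ι} (h : 𝒢.IndepOn l) (hl : l'.Sublist l) : 𝒢.IndepOn l' :=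
  List.Pairwise.sublist hl h

theorem IndepOn.tail (h : 𝒢.IndepOn (a :: l)) : 𝒢.IndepOn l :=
  h.sublist (List.sublist_cons_self a l)

theorem IndepOn.erase_second (h : 𝒢.IndepOn (a :: b :: l)) : 𝒢.IndepOn (a :: l) :=
  h.sublist ((List.sublist_cons_self b l).cons_cons a)

theorem IndepOn.swap (h : 𝒢.IndepOn (a :: b :: l)) : 𝒢.IndepOn (b :: a :: l) :=
  h.perm (.swap b a l)

theorem IndepOn.swap_tail (h : 𝒢.IndepOn (a :: b :: c :: l)) : 𝒢.IndepOn (a :: c :: b :: l) :=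
  h.perm ((List.Perm.swap c b l).cons a)

theorem IndepOn.indep (h : 𝒢.IndepOn (a :: b :: l)) : 𝒢.Indep a b :=
  List.rel_of_pairwise_cons h List.mem_cons_self

theorem IndepOn.notMem (h : 𝒢.IndepOn (a :: l)) : a ∉ l :=
  (List.nodup_cons.1 (h.imp 𝒢.ne)).1

theorem entry_mem_constants (h : 𝒢.Indep a b) (hl : a ∉ l ∨ b ∉ l) :
    ∀ i ∈ l, ∀ j ∈ l, M i j ∈ (𝒢.expansion a b h).constants := by
  intro i hi j hj
  apply 𝒢.mem_constants <;> grind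

theorem pf_mem_constants (h : 𝒢.Indep a b) (hl : a ∉ l ∨ b ∉ l) :
    pf M l ∈ (𝒢.expansion a b h).constants :=
  pf_mem 𝒢.isAlternating (entry_mem_constants h hl)

theorem pfForm_rows_mem_constants (h : 𝒢.IndepOn (a :: b :: l)) :
    pfForm M l (M b) (M a) ∈ (𝒢.expansion a b h.indep).constants := by
  have hab : a ≠ b := 𝒢.ne h.indep
  have ha : a ∉ l := h.erase_second.notMem
  have hb : b ∉ l := h.tail.notMem
  refine pfForm_mem 𝒢.isAlternating (entry_mem_constants h.indep (.inl ha)) (fun i hi => ?_)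
    fun i hi => ?_
  all_goals apply 𝒢.mem_constants <;> grind

theorem isSMulRegular_pf_cons_cons (h : 𝒢.IndepOn (a :: b :: l)) {H : Set S}
    (hH : ∀ s ∈ H, s ∈ (𝒢.expansion a b h.indep).constants)
    (hreg : IsSMulRegular (S ⧸ span H) (pf M l)) :
    IsSMulRegular (S ⧸ span H) (pf M (a :: b :: l)) := by
  refine (𝒢.expansion a b h.indep).isSMulRegular_of_leadingCoeff hH
    (r := -pfForm M l (M b) (M a)) ?_ (pf_mem_constants h.indep (.inl h.erase_second.notMem))
    (neg_mem (pfForm_rows_mem_constants h)) hreg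
  rw [pf_cons_cons 𝒢.isAlternating]
  ring

theorem pf_swap_tail (a b c : ι) (l : List ι) :
    pf M (a :: b :: c :: l) = -pf M (a :: c :: b :: l) := by
  simp only [pf, wedge_cons]
  rw [basisVec_mul_comm b c, mul_neg, map_neg]

theorem pf_rotate_tail (a b c d : ι) (l : List ι) :
    pf M (a :: b :: c :: d :: l) = pf M (a :: d :: b :: c :: l) := by
  rw [pf, pf]
  simp only [wedge_cons]
  rw [basisVec_mul_comm c d, mul_neg, basisVec_mul_comm b d, neg_neg]

theorem pf_ne_zero [Nontrivial S] : ∀ {l : List ι}, Even l.length → 𝒢.IndepOn l → pf M l ≠ 0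
  | [], _, _ => by rw [pf_nil 𝒢.isAlternating]; exact one_ne_zero
  | [_], hl, _ => by simp at hl
  | a :: b :: l, hl, h => fun hzero => by
    have hab := h.indep
    have expand : (𝒢.expansion a b hab).toPoly (pf M (a :: b :: l)) =
        Polynomial.X * Polynomial.C (pf M l) - Polynomial.C (pfForm M l (M b) (M a)) := by
      rw [pf_cons_cons 𝒢.isAlternating, map_sub, map_mul, Expansion.toPoly_self,
        Expansion.mem_constants.1 (pf_mem_constants hab (.inl h.erase_second.notMem)),
        Expansion.mem_constants.1 (pfForm_rows_mem_constants h)]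
    rw [hzero, map_zero] at expand
    refine pf_ne_zero (l := l) (by simpa [Nat.even_add_one] using hl) h.tail.tail ?_
    simpa [Polynomial.coeff_C] using (congrArg (·.coeff 1) expand).symm

theorem isSMulRegular_pf_cons_cons_of_isSMulRegular_pf (h : 𝒢.IndepOn (a :: b :: c :: l))
    (hreg : IsSMulRegular (S ⧸ span {pf M (a :: c :: l)}) (pf M l)) :
    IsSMulRegular (S ⧸ span {pf M (a :: c :: l)}) (pf M (b :: c :: l)) := by
  refine isSMulRegular_pf_cons_cons h.tail ?_ hreg
  rintro s rfl
  refine pf_mem_constants _ (.inl ?_)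
  rw [List.mem_cons, not_or]
  exact ⟨(𝒢.ne h.indep).symm, h.tail.notMem⟩

variable [IsDomain S]

theorem isSMulRegular_pf : ∀ {l : List ι} {a b : ι}, Even l.length → 𝒢.IndepOn (a :: b :: l) →
    IsSMulRegular (S ⧸ span {pf M (a :: b :: l)}) (pf M l)
  | [], _, _, _, _ => by rw [pf_nil 𝒢.isAlternating]; exact isUnit_one.isSMulRegular _
  | [_], _, _, hl, _ => by simp at hl
  | c :: d :: l, a, b, hl, h => by
    apply isSMulRegular_quotient_singleton_comm (pf_ne_zero hl h.tail.tail)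
    rw [pf_swap_tail]
    refine isSMulRegular_neg (isSMulRegular_pf_cons_cons h.swap_tail ?_ ?_)
    · rintro s rfl
      exact pf_mem_constants _ (.inl h.erase_second.notMem)
    · exact isSMulRegular_pf_cons_cons_of_isSMulRegular_pf h.tail.swap
        (isSMulRegular_pf (by simpa [Nat.even_add_one] using hl) h.tail.tail)

theorem isSMulRegular_pf_replace_head (hl : Even l.length) (h : 𝒢.IndepOn (a :: b :: c :: l)) :
    IsSMulRegular (S ⧸ span {pf M (a :: c :: l)}) (pf M (b :: c :: l)) :=
  isSMulRegular_pf_cons_cons_of_isSMulRegular_pf h (isSMulRegular_pf hl h.erase_second)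

theorem isSMulRegular_pf_mod_pair_of_triple (hl : Even l.length)
    (h : 𝒢.IndepOn (b :: c :: d :: e :: l))
    (htriple : IsSMulRegular (S ⧸ span {pf M (d :: e :: l), pf M (c :: e :: l)})
      (pf M (c :: d :: l))) :
    IsSMulRegular (S ⧸ span {pf M (d :: e :: l), pf M (b :: c :: d :: e :: l)})
      (pf M (c :: e :: l)) := by
  have hperm : 𝒢.IndepOn (b :: e :: c :: d :: l) :=
    h.perm <| (((List.Perm.swap e d l).cons c).trans (.swap e c _)).cons b
  apply isSMulRegular_quotient_pair_swap (isSMulRegular_pf_replace_head hl h.tail.swap)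
  rw [pf_rotate_tail]
  refine isSMulRegular_pf_cons_cons hperm ?_ htriple
  have hb := h.notMem
  simp only [List.mem_cons, not_or] at hb
  rintro s (rfl | rfl)
  all_goals exact pf_mem_constants _ (.inl (by simp only [List.mem_cons, not_or]; tauto))

theorem isSMulRegular_pf_triple : ∀ {l : List ι} {a b c : ι}, Even l.length →
    𝒢.IndepOn (a :: b :: c :: l) →
    IsSMulRegular (S ⧸ span {pf M (b :: c :: l), pf M (a :: c :: l)}) (pf M (a :: b :: l))
  | [_], _, _, _, hl, _ => by simp at hl
  | [], a, b, c, _, h => by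
    refine isSMulRegular_pf_cons_cons (h.sublist (by simp)) ?_ ?_
    · have ha := h.notMem
      have hb := h.tail.notMem
      simp only [List.mem_cons, not_or] at ha hb
      rintro s (rfl | rfl)
      · exact pf_mem_constants _ (.inl (by simpa using ha))
      · exact pf_mem_constants _ (.inr (by simpa using ⟨Ne.symm ha.1, hb.1⟩))
    · rw [pf_nil 𝒢.isAlternating]
      exact isUnit_one.isSMulRegular _
  | d :: e :: l, a, b, c, hl, h => by
    have hl' : Even l.length := by simpa [Nat.even_add_one] using hl
    have ha := h.notMem
    have hb := h.tail.notMem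
    simp only [List.mem_cons, not_or] at ha hb
    refine isSMulRegular_pf_cons_cons
      (h.sublist (((List.sublist_cons_self c _).cons_cons b).cons_cons a)) ?_ ?_
    · rintro s (rfl | rfl)
      · exact pf_mem_constants _ (.inl (by simp only [List.mem_cons, not_or]; tauto))
      · exact pf_mem_constants _ (.inr (by simp only [List.mem_cons, not_or]; tauto))
    apply isSMulRegular_quotient_pair_swap (isSMulRegular_pf hl h.tail)
    rw [pf_swap_tail a c d]
    refine isSMulRegular_neg (isSMulRegular_pf_cons_cons h.erase_second.swap_tail ?_ ?_)
    · rintro s (rfl | rfl)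
      all_goals exact pf_mem_constants _ (.inl (by simp only [List.mem_cons, not_or]; tauto))
    · rw [Set.pair_comm]
      exact isSMulRegular_pf_mod_pair_of_triple hl' h.tail (isSMulRegular_pf_triple hl' h.tail.tail)

theorem isSMulRegular_pf_mod_pair (hl : Even l.length) (h : 𝒢.IndepOn (b :: c :: d :: e :: l)) :
    IsSMulRegular (S ⧸ span {pf M (d :: e :: l), pf M (b :: c :: d :: e :: l)})
      (pf M (c :: e :: l)) :=
  isSMulRegular_pf_mod_pair_of_triple hl h (isSMulRegular_pf_triple hl h.tail)

end GenericEntries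

end GenericEntries

section CoordinateVectors

variable {S : Type*} [CommRing S] {ι : Type*} {M : Matrix ι ι S} {l l' : List ι}

theorem pf_perm (h : l.Perm l') : pf M l = pf M l' ∨ pf M l = -pf M l' :=
  (wedge_perm h).imp (fun h => by rw [pf, h, pf]) fun h => by rw [pf, h, map_neg, pf]

theorem pfForm_perm (h : l.Perm l') : pfForm M l = pfForm M l' ∨ pfForm M l = -pfForm M l' := by
  refine (wedge_perm (S := S) h).imp (fun h => ?_) fun h => ?_
  · exact LinearMap.ext₂ fun u v => by simp only [pfForm_apply, h]
  · exact LinearMap.ext₂ fun u v => by simp only [pfForm_apply, h, LinearMap.neg_apply, map_neg]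

theorem span_pf_perm (h : l.Perm l') : span {pf M l} = span {pf M l'} := by
  rcases pf_perm (M := M) h with h | h <;> simp only [h, span_singleton_neg]

theorem rowSpan_perm (h : l.Perm l') : rowSpan M l = rowSpan M l' := by
  simp only [rowSpan, h.mem_iff]

variable [DecidableEq ι] {i a b : ι}

theorem single_one_apply_mem (R : Subring S) (i j : ι) : (Pi.single i 1 : ι → S) j ∈ R := by
  rw [Pi.single_apply]
  split_ifs
  exacts [R.one_mem, R.zero_mem]

theorem update_zero_add_smul_single (u : ι → S) (i : ι) :
    Function.update u i 0 + u i • Pi.single i 1 = u := by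
  ext j
  obtain rfl | h := eq_or_ne j i <;> simp [*]

theorem contract_single_wedge (h : i ∉ l) : contract (Pi.single i 1 : ι → S) (wedge l) = 0 := by
  rw [contract_wedge_congr (d' := 0), map_zero, LinearMap.zero_apply]
  rintro j hj
  rw [Pi.single_eq_of_ne (ne_of_mem_of_not_mem hj h), Pi.zero_apply]

theorem contract_single_wedge_cons (h : i ∉ l) :
    contract (Pi.single i 1 : ι → S) (wedge (i :: l)) = wedge l := by
  rw [wedge_cons, contract_basisVec_mul, contract_single_wedge h, Pi.single_eq_same, one_smul,
    mul_zero, sub_zero]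

theorem subPf_single_cons (h : i ∉ l) : subPf M (i :: l) (Pi.single i 1) = pf M l := by
  rw [subPf_apply, contract_single_wedge_cons h, pf]

theorem pfForm_single (h : i ∉ l) (v : ι → S) :
    pfForm M (i :: l) (Pi.single i 1) v = -subPf M l v := by
  rw [pfForm_skew, pfForm_apply, contract_single_wedge_cons h, subPf_apply]

theorem pfForm_single_single (ha : a ∉ b :: l) (hb : b ∉ l) :
    pfForm M (a :: b :: l) (Pi.single a 1) (Pi.single b 1) = -pf M l := by
  rw [pfForm_single ha, subPf_single_cons hb]

theorem exists_sub_smul_single_mem_rowSpan {v : ι → S} (hv : v ∈ rowSpan M l) (b : ι) :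
    ∃ c : S, v - c • Pi.single b 1 ∈ rowSpan M (b :: l) := by
  induction hv using Submodule.span_induction with
  | mem v h =>
    rcases h with ⟨a, ha, rfl⟩ | h
    · exact ⟨0, by simpa using row_mem_rowSpan (List.mem_cons_of_mem b ha)⟩
    · refine ⟨v b, mem_rowSpan_of_forall_eq_zero fun i hi => ?_⟩
      obtain rfl | hib := eq_or_ne i b
      · simp
      · simp [hib, h i ((List.mem_cons.1 hi).resolve_left hib)]
  | zero => exact ⟨0, by simp⟩
  | add v w _ _ hv hw =>
    obtain ⟨c, hc⟩ := hv
    obtain ⟨d, hd⟩ := hw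
    exact ⟨c + d, by rw [add_smul, add_sub_add_comm]; exact add_mem hc hd⟩
  | smul s v _ hv =>
    obtain ⟨c, hc⟩ := hv
    exact ⟨s * c, by rw [mul_smul, ← smul_sub]; exact Submodule.smul_mem _ s hc⟩

end CoordinateVectors

section SubPfaffianIdeal

variable {S : Type*} [CommRing S] {ι : Type*} {M : Matrix ι ι S} {a s : ι} {l Y : List ι}

/-- The ideal of the Pfaffians of order `l.length - 1` of the submatrix of `M` on `l`. -/
noncomputable def subPfIdeal (M : Matrix ι ι S) (l : List ι) : Ideal S :=
  LinearMap.range (subPf M l)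

theorem mem_subPfIdeal {x : S} : x ∈ subPfIdeal M l ↔ ∃ v, subPf M l v = x :=
  Iff.rfl

variable [DecidableEq ι]

theorem subPfIdeal_eq_span [Finite ι] (M : Matrix ι ι S) (l : List ι) :
    subPfIdeal M l = span (Set.range fun i => subPf M l (Pi.single i 1)) := by
  rw [subPfIdeal, LinearMap.range_eq_map, ← (Pi.basisFun S ι).span_eq, Submodule.map_span,
    ← Set.range_comp]
  simp only [Function.comp_def, Pi.basisFun_apply]

omit [DecidableEq ι] in
theorem pairingIdeal_row (hM : IsAlternating M) (ha : a ∉ l) :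
    pairingIdeal (pfForm M l) (pf M l) (M a) = subPfIdeal M (a :: l) := by
  classical
  ext x
  rw [mem_pairingIdeal, mem_subPfIdeal]
  constructor
  · rintro ⟨v, hv⟩
    obtain ⟨k, hk⟩ := mem_span_singleton'.1 hv
    refine ⟨Function.update (-v) a k, ?_⟩
    rw [subPf_cons hM, pfForm_congr (fun _ _ => rfl)
      fun i hi => Function.update_of_ne (ne_of_mem_of_not_mem hi ha) k (-v)]
    simp [hk]
  · rintro ⟨v, rfl⟩
    refine ⟨-v, ?_⟩
    rw [subPf_cons hM, mem_span_singleton']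
    exact ⟨v a, by simp⟩

theorem pairingIdeal_single (hM : IsAlternating M) (hl : (s :: Y).Perm l) (hs : s ∉ Y) :
    pairingIdeal (pfForm M l) (pf M l) (Pi.single s 1) = subPfIdeal M Y := by
  have hrange : LinearMap.range (pfForm M l (Pi.single s 1)) = subPfIdeal M Y := by
    have hcons : pfForm M (s :: Y) (Pi.single s 1) = -subPf M Y := by
      ext v
      exact pfForm_single hs _
    rcases pfForm_perm (M := M) hl with h | h
    · rw [← h, hcons, LinearMap.range_neg, subPfIdeal]
    · rw [← LinearMap.range_neg, ← LinearMap.neg_apply, ← h, hcons, LinearMap.range_neg, subPfIdeal]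
  rw [pairingIdeal, hrange, sup_eq_right, ← span_pf_perm hl, span_singleton_le_iff_mem, pf_cons hM]
  exact LinearMap.mem_range_self _ _

end SubPfaffianIdeal

section GenericRows

variable {S : Type*} [CommRing S] {ι : Type*} {M : Matrix ι ι S} {𝒢 : GenericEntries M}
  {a b c d e s : ι} {l : List ι}

/-- `GeneratesPerp` for the form `pfForm M l`, modulo the rows of `M` listed in `l` and the
Pfaffian on `l`. -/
def GeneratesPfPerp (M : Matrix ι ι S) (l : List ι) (u : ι → S) : Prop :=
  GeneratesPerp (pfForm M l) (rowSpan M l) (pf M l) u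

theorem GeneratesPfPerp.perm {l' : List ι} {u : ι → S} (h : GeneratesPfPerp M l u)
    (hl : l.Perm l') : GeneratesPfPerp M l' u := by
  intro v hv
  rw [← rowSpan_perm hl]
  refine h v ?_
  rw [span_pf_perm hl]
  rcases pfForm_perm (M := M) hl with h | h <;> rw [h]
  exacts [hv, neg_mem hv]

variable [DecidableEq ι]

namespace GenericEntries

theorem update_row_mem_constants {i : ι} (h : 𝒢.Indep a b) (hi : i ≠ a) (hib : i = b → i = s) :
    Function.update (M a) s 0 i ∈ (𝒢.expansion a b h).constants := by
  obtain rfl | his := eq_or_ne i s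
  · rw [Function.update_self]
    exact zero_mem _
  · rw [Function.update_of_ne his]
    apply 𝒢.mem_constants <;> grind

theorem isSMulRegular_pfForm_of_single (h : 𝒢.Indep a b) (ha : a ∉ l) {u w : ι → S}
    (hub : u b = M a b) (hu : ∀ i ∈ l, i ≠ b → u i ∈ (𝒢.expansion a b h).constants)
    (hw : ∀ i ∈ l, w i ∈ (𝒢.expansion a b h).constants) {H : Set S}
    (hH : ∀ x ∈ H, x ∈ (𝒢.expansion a b h).constants)
    (hreg : IsSMulRegular (S ⧸ span H) (pfForm M l (Pi.single b 1) w)) :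
    IsSMulRegular (S ⧸ span H) (pfForm M l u w) := by
  have hM := entry_mem_constants h (.inl ha)
  refine (𝒢.expansion a b h).isSMulRegular_of_leadingCoeff hH
    (r := pfForm M l (Function.update u b 0) w) ?_
    (pfForm_mem 𝒢.isAlternating hM (fun i _ => single_one_apply_mem _ b i) hw)
    (pfForm_mem 𝒢.isAlternating hM (fun i hi => ?_) hw) hreg
  · conv_lhs => rw [← update_zero_add_smul_single u b, hub]
    rw [map_add, map_smul, LinearMap.add_apply, LinearMap.smul_apply, smul_eq_mul, mul_comm,
      add_comm]
  · obtain rfl | hib := eq_or_ne i b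
    · rw [Function.update_self]
      exact zero_mem _
    · rw [Function.update_of_ne hib]
      exact hu i hi hib

theorem isSMulRegular_pfForm_update_row_single (h : 𝒢.Indep a b) (ha : a ∉ l) (hbs : b ≠ s)
    {H : Set S} (hH : ∀ x ∈ H, x ∈ (𝒢.expansion a b h).constants)
    (hreg : IsSMulRegular (S ⧸ span H) (pfForm M l (Pi.single b 1) (Pi.single s 1))) :
    IsSMulRegular (S ⧸ span H) (pfForm M l (Function.update (M a) s 0) (Pi.single s 1)) :=
  isSMulRegular_pfForm_of_single h ha (Function.update_of_ne hbs _ _)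
    (fun _ hi hib => update_row_mem_constants h (ne_of_mem_of_not_mem hi ha) (absurd · hib))
    (fun i _ => single_one_apply_mem _ s i) hH hreg

theorem pfForm_update_row_mem_constants (h : 𝒢.Indep a s) (ha : a ∉ l) (i : ι) :
    pfForm M l (Function.update (M a) s 0) (Pi.single i 1) ∈ (𝒢.expansion a s h).constants :=
  pfForm_mem 𝒢.isAlternating (entry_mem_constants h (.inl ha))
    (fun _ hi => update_row_mem_constants h (ne_of_mem_of_not_mem hi ha) id)
    fun j _ => single_one_apply_mem _ i j

theorem pfForm_single_mem_constants (h : 𝒢.Indep a s) (ha : a ∉ l) (i j : ι) :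
    pfForm M l (Pi.single i 1) (Pi.single j 1) ∈ (𝒢.expansion a s h).constants :=
  pfForm_mem 𝒢.isAlternating (entry_mem_constants h (.inl ha))
    (fun k _ => single_one_apply_mem _ i k) fun k _ => single_one_apply_mem _ j k

variable [IsDomain S]

omit [DecidableEq ι] in
theorem mem_rowSpan_of_subPf_eq_zero (hl : Even l.length) (h : 𝒢.IndepOn (b :: l))
    (hrow : GeneratesPfPerp M l (M b)) {v : ι → S} (hv : subPf M (b :: l) v = 0) :
    v ∈ rowSpan M (b :: l) := by
  classical
  obtain ⟨k, hk⟩ := hrow v <| mem_span_singleton'.2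
    ⟨v b, by rwa [subPf_cons 𝒢.isAlternating, sub_eq_zero] at hv⟩
  obtain ⟨c, hc⟩ := exists_sub_smul_single_mem_rowSpan hk b
  have hmem : v - c • Pi.single b 1 ∈ rowSpan M (b :: l) := by
    rw [sub_right_comm] at hc
    exact (Submodule.sub_mem_iff_left _
      (Submodule.smul_mem _ k (row_mem_rowSpan List.mem_cons_self))).1 hc
  have hzero := subPf_eq_zero_of_mem_rowSpan 𝒢.isAlternating hmem
  rw [map_sub, hv, map_smul, subPf_single_cons h.notMem, zero_sub, neg_eq_zero,
    smul_eq_mul] at hzero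
  rwa [(mul_eq_zero.1 hzero).resolve_right (pf_ne_zero hl h.tail), zero_smul, sub_zero] at hmem

theorem generatesPfPerp_single (hl : Even l.length) (h : 𝒢.IndepOn (s :: b :: l))
    (hrow : GeneratesPfPerp M l (M b)) : GeneratesPfPerp M (s :: b :: l) (Pi.single s 1) := by
  intro v hv
  rw [pfForm_single h.notMem, pf_cons 𝒢.isAlternating, mem_span_singleton'] at hv
  obtain ⟨k, hk⟩ := hv
  obtain ⟨c, hc⟩ := exists_sub_smul_single_mem_rowSpan (mem_rowSpan_of_subPf_eq_zero hl h.tail hrow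
    (v := v + k • M s) (by rw [map_add, map_smul, smul_eq_mul, hk, add_neg_cancel])) s
  refine ⟨c, ?_⟩
  rw [add_sub_right_comm] at hc
  exact (Submodule.add_mem_iff_left _
    (Submodule.smul_mem _ k (row_mem_rowSpan List.mem_cons_self))).1 hc

omit [DecidableEq ι] in
theorem generatesPfPerp_row [Finite ι] : ∀ {l : List ι} {a : ι}, Even l.length →
    𝒢.IndepOn (a :: l) → GeneratesPfPerp M l (M a)
  | [], _, _, _ => fun _ _ => ⟨0, mem_rowSpan_of_forall_eq_zero (by simp)⟩
  | [_], _, hl, _ => by simp at hl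
  | b :: s :: l, a, hl, h => by
    classical
    have hl' : Even l.length := by simpa [Nat.even_add_one] using hl
    have has : 𝒢.Indep a s := h.swap_tail.indep
    have hsingle : GeneratesPfPerp M (b :: s :: l) (Pi.single s 1) :=
      (generatesPfPerp_single hl' h.tail.swap
        (generatesPfPerp_row hl' h.tail.erase_second)).perm (.swap b s l)
    have key := GeneratesPerp.add_smul (b := Function.update (M a) s 0) (e := Pi.single s 1)
      (𝒢.expansion a s has) (fun u _ hv => pfForm_mem_span_pf 𝒢.isAlternating u hv)
      (pfForm_update_row_mem_constants has h.notMem)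
      (pfForm_single_mem_constants has h.notMem s) (isAlt_pfForm M _)
      (pf_smul_mem_rowSpan 𝒢.isAlternating) (pf_mem_constants has (.inl h.notMem)) hsingle
      (isSMulRegular_pfForm_update_row_single h.indep h.notMem (𝒢.ne h.tail.indep) ?_ ?_)
    · rwa [update_zero_add_smul_single] at key
    · rintro x rfl
      exact pf_mem_constants _ (.inl h.notMem)
    · rw [pfForm_single_single h.tail.notMem h.tail.tail.notMem]
      exact isSMulRegular_neg (isSMulRegular_pf hl' h.tail)

omit [DecidableEq ι] [IsDomain S] in
theorem isSMulRegular_pf_cons_cons_mod_subPfIdeal [Finite ι] {Y : List ι}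
    (h : 𝒢.IndepOn (d :: e :: l)) (hd : d ∉ Y)
    (hreg : IsSMulRegular (S ⧸ subPfIdeal M Y) (pf M l)) :
    IsSMulRegular (S ⧸ subPfIdeal M Y) (pf M (d :: e :: l)) := by
  classical
  rw [subPfIdeal_eq_span] at hreg ⊢
  refine isSMulRegular_pf_cons_cons h ?_ hreg
  rintro _ ⟨i, rfl⟩
  exact subPf_mem 𝒢.isAlternating (entry_mem_constants _ (.inl hd))
    fun j _ => single_one_apply_mem _ i j

theorem isSMulRegular_pfForm_single_single (hl : Even l.length)
    (h : 𝒢.IndepOn (b :: c :: d :: e :: l)) :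
    IsSMulRegular (S ⧸ span {pf M (d :: e :: l), pf M (b :: c :: d :: e :: l)})
      (pfForm M (b :: c :: d :: e :: l) (Pi.single b 1) (Pi.single d 1)) := by
  have hd : 𝒢.IndepOn (b :: d :: c :: e :: l) := h.swap_tail
  have hentry : pfForm M (b :: d :: c :: e :: l) (Pi.single b 1) (Pi.single d 1) =
      -pf M (c :: e :: l) :=
    pfForm_single_single hd.notMem hd.tail.notMem
  have hreg := isSMulRegular_pf_mod_pair hl h
  rcases pfForm_perm (M := M) ((List.Perm.swap d c (e :: l)).cons b) with h | h
  · rw [h, hentry]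
    exact isSMulRegular_neg hreg
  · rwa [h, LinearMap.neg_apply, LinearMap.neg_apply, hentry, neg_neg]

theorem isSMulRegular_pfForm_update_row (hl : Even l.length)
    (h : 𝒢.IndepOn (a :: b :: c :: d :: e :: l)) :
    IsSMulRegular (S ⧸ span {pf M (d :: e :: l), pf M (b :: c :: d :: e :: l)})
      (pfForm M (b :: c :: d :: e :: l) (Function.update (M a) d 0) (Pi.single d 1)) := by
  have hb := h.tail.notMem
  simp only [List.mem_cons, not_or] at hb
  refine isSMulRegular_pfForm_update_row_single h.indep h.notMem hb.2.1 ?_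
    (isSMulRegular_pfForm_single_single hl h.tail)
  rintro x (rfl | rfl)
  · exact pf_mem_constants _ (.inr (by simpa only [List.mem_cons, not_or] using hb.2))
  · exact pf_mem_constants _ (.inl h.notMem)

omit [DecidableEq ι] in
theorem isSMulRegular_pf_mod_subPfIdeal [Finite ι] : ∀ {l : List ι} {a b c : ι}, Even l.length →
    𝒢.IndepOn (a :: b :: c :: l) → IsSMulRegular (S ⧸ subPfIdeal M (a :: b :: c :: l)) (pf M l)
  | [], _, _, _, _, _ => by rw [pf_nil 𝒢.isAlternating]; exact isUnit_one.isSMulRegular _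
  | [_], _, _, _, hl, _ => by simp at hl
  | d :: e :: l, a, b, c, hl, h => by
    classical
    have hl' : Even l.length := by simpa [Nat.even_add_one] using hl
    have hperm : (d :: b :: c :: e :: l).Perm (b :: c :: d :: e :: l) :=
      (List.Perm.swap b d _).trans ((List.Perm.swap c d _).cons b)
    have hd : 𝒢.IndepOn (d :: b :: c :: e :: l) := h.tail.perm hperm.symm
    have had : 𝒢.Indep a d := IndepOn.indep (h.perm (hperm.symm.cons a))
    have ha := h.notMem
    simp only [List.mem_cons, not_or] at ha
    have hsingle : GeneratesPfPerp M (b :: c :: d :: e :: l) (Pi.single d 1) :=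
      (generatesPfPerp_single (by simpa [Nat.even_add_one] using hl) hd
        (generatesPfPerp_row (by simpa [Nat.even_add_one] using hl) hd.tail)).perm hperm
    have key := isSMulRegular_pairingIdeal_add_smul (b := Function.update (M a) d 0)
      (𝒢.expansion a d had) (fun u _ hv => pfForm_mem_span_pf 𝒢.isAlternating u hv)
      (pfForm_update_row_mem_constants had h.notMem)
      (pfForm_single_mem_constants had h.notMem d) (isAlt_pfForm M _)
      (pf_smul_mem_rowSpan 𝒢.isAlternating) (pf_mem_constants had (.inl h.notMem)) hsingle
      (c := pf M (d :: e :: l))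
      (pf_mem_constants had (.inl (by simpa only [List.mem_cons, not_or] using ha.2.2))) ?_
      (isSMulRegular_pf hl h.tail) (isSMulRegular_pfForm_update_row hl' h)
    · rwa [update_zero_add_smul_single, pairingIdeal_row 𝒢.isAlternating h.notMem] at key
    · rw [pairingIdeal_single 𝒢.isAlternating hperm hd.notMem]
      exact isSMulRegular_pf_cons_cons_mod_subPfIdeal h.tail.tail.tail hd.notMem
        (isSMulRegular_pf_mod_subPfIdeal hl' hd.tail)

end GenericEntries

end GenericRows

section BorderRows

variable {S : Type*} [CommRing S] {ι : Type*} {M : Matrix ι ι S}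

theorem isSMulRegular_pfForm_swap {Q : Type*} [AddCommGroup Q] [Module S Q] {l : List ι}
    {u v : ι → S} (h : IsSMulRegular Q (pfForm M l u v)) : IsSMulRegular Q (pfForm M l v u) := by
  rw [pfForm_skew]
  exact isSMulRegular_neg h

namespace GenericEntries

variable {𝒢 : GenericEntries M} {a a' a'' b c : ι} {l : List ι}

theorem row_mem_constants (h : 𝒢.Indep a b) (ha : a' ≠ a) (hb : b ≠ a') (k : ι) :
    M a' k ∈ (𝒢.expansion a b h).constants := by
  apply 𝒢.mem_constants <;> grind

theorem pfForm_mem_constants (h : 𝒢.Indep a b) (ha : a ∉ l) {u v : ι → S}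
    (hu : ∀ i, u i ∈ (𝒢.expansion a b h).constants)
    (hv : ∀ i, v i ∈ (𝒢.expansion a b h).constants) :
    pfForm M l u v ∈ (𝒢.expansion a b h).constants :=
  pfForm_mem 𝒢.isAlternating (entry_mem_constants h (.inl ha)) (fun i _ => hu i) fun i _ => hv i

variable [DecidableEq ι]

theorem isSMulRegular_pfForm_row_of_single (h : 𝒢.Indep a b) (ha : a ∉ l) {w : ι → S}
    (hw : ∀ i, w i ∈ (𝒢.expansion a b h).constants) {H : Set S}
    (hH : ∀ x ∈ H, x ∈ (𝒢.expansion a b h).constants)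
    (hreg : IsSMulRegular (S ⧸ span H) (pfForm M l (Pi.single b 1) w)) :
    IsSMulRegular (S ⧸ span H) (pfForm M l (M a) w) := by
  refine isSMulRegular_pfForm_of_single h ha rfl (fun i hi hib => ?_) (fun i _ => hw i) hH hreg
  apply 𝒢.mem_constants <;> grind [ne_of_mem_of_not_mem hi ha]

theorem isSMulRegular_pfForm_single_single_of_pf {Q : Type*} [AddCommGroup Q] [Module S Q]
    (h : 𝒢.IndepOn (b :: c :: l)) (hreg : IsSMulRegular Q (pf M l)) :
    IsSMulRegular Q (pfForm M (b :: c :: l) (Pi.single b 1) (Pi.single c 1)) := by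
  rw [pfForm_single_single h.notMem h.tail.notMem]
  exact isSMulRegular_neg hreg

theorem pfForm_row_single_mem_constants (h : 𝒢.Indep a b) (ha : a ∉ l) :
    pfForm M l (M a) (Pi.single b 1) ∈ (𝒢.expansion a b h).constants := by
  have hupdate : pfForm M l (M a) (Pi.single b 1) =
      pfForm M l (Function.update (M a) b 0) (Pi.single b 1) := by
    conv_lhs => rw [← update_zero_add_smul_single (M a) b]
    rw [map_add, map_smul, LinearMap.add_apply, LinearMap.smul_apply, pfForm_self, smul_zero,
      add_zero]
  rw [hupdate]
  exact pfForm_update_row_mem_constants h ha b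

variable [IsDomain S]

theorem isSMulRegular_pfForm_row_single (hl : Even l.length) (h : 𝒢.IndepOn (a :: b :: c :: l)) :
    IsSMulRegular (S ⧸ span {pf M (b :: c :: l)})
      (pfForm M (b :: c :: l) (M a) (Pi.single b 1)) := by
  refine isSMulRegular_pfForm_row_of_single h.swap_tail.indep h.notMem (single_one_apply_mem _ b)
    ?_ (isSMulRegular_pfForm_swap
      (isSMulRegular_pfForm_single_single_of_pf h.tail (isSMulRegular_pf hl h.tail)))
  rintro x rfl
  exact pf_mem_constants _ (.inl h.notMem)

theorem isSMulRegular_pf_mod_pfForm_row_single : ∀ {l : List ι} {a b c : ι}, Even l.length →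
    𝒢.IndepOn (a :: b :: c :: l) →
    IsSMulRegular (S ⧸ span {pf M (b :: c :: l), pfForm M (b :: c :: l) (M a) (Pi.single b 1)})
      (pf M l)
  | [], _, _, _, _, _ => by rw [pf_nil 𝒢.isAlternating]; exact isUnit_one.isSMulRegular _
  | [_], _, _, _, hl, _ => by simp at hl
  | d :: e :: l, a, b, c, hl, h => by
    have had : 𝒢.Indep a d := (h.sublist (l' := [a, d]) (by simp)).indep
    have ha := h.notMem
    simp only [List.mem_cons, not_or] at ha
    apply isSMulRegular_quotient_pair_swap (isSMulRegular_pf hl h.tail)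
    refine isSMulRegular_pfForm_row_of_single had h.notMem (single_one_apply_mem _ b) ?_ ?_
    · rintro x (rfl | rfl)
      · exact pf_mem_constants _ (.inl h.notMem)
      · exact pf_mem_constants _ (.inl (by simpa only [List.mem_cons, not_or] using ha.2.2))
    · rw [Set.pair_comm]
      exact isSMulRegular_pfForm_swap (isSMulRegular_pfForm_single_single
        (by simpa [Nat.even_add_one] using hl) h.tail)

theorem isSMulRegular_pfForm_row_single_mod_pair (hl : Even l.length)
    (h : 𝒢.IndepOn (a :: b :: c :: l)) :
    IsSMulRegular (S ⧸ span {pf M (b :: c :: l), pfForm M (b :: c :: l) (M a) (Pi.single b 1)})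
      (pfForm M (b :: c :: l) (M a) (Pi.single c 1)) := by
  refine isSMulRegular_pfForm_row_of_single h.indep h.notMem (single_one_apply_mem _ c) ?_
    (isSMulRegular_pfForm_single_single_of_pf h.tail (isSMulRegular_pf_mod_pfForm_row_single hl h))
  rintro x (rfl | rfl)
  · exact pf_mem_constants _ (.inl h.notMem)
  · exact pfForm_row_single_mem_constants _ h.notMem

omit [DecidableEq ι]

variable (hl : Even l.length) (h : 𝒢.IndepOn (a :: b :: c :: l))
  (h' : 𝒢.IndepOn (a' :: b :: c :: l)) (haa' : a ≠ a')

include hl h h' haa'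

theorem isSMulRegular_pfForm_rows :
    IsSMulRegular (S ⧸ span {pf M (b :: c :: l)}) (pfForm M (b :: c :: l) (M a) (M a')) := by
  classical
  have hb : b ≠ a' := ne_of_mem_of_not_mem List.mem_cons_self h'.notMem
  refine isSMulRegular_pfForm_row_of_single h.indep h.notMem
    (row_mem_constants _ haa'.symm hb) ?_
    (isSMulRegular_pfForm_swap (isSMulRegular_pfForm_row_single hl h'))
  rintro x rfl
  exact pf_mem_constants _ (.inl h.notMem)

theorem isSMulRegular_pfForm_rows_mod_row_single [DecidableEq ι] :
    IsSMulRegular (S ⧸ span {pf M (b :: c :: l), pfForm M (b :: c :: l) (M a) (Pi.single b 1)})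
      (pfForm M (b :: c :: l) (M a) (M a')) := by
  have hc : c ≠ a := ne_of_mem_of_not_mem (by simp) h.notMem
  have hrow := row_mem_constants h'.swap_tail.indep haa' hc
  refine isSMulRegular_pfForm_swap (isSMulRegular_pfForm_row_of_single h'.swap_tail.indep h'.notMem
    hrow ?_ (isSMulRegular_pfForm_swap (isSMulRegular_pfForm_row_single_mod_pair hl h)))
  rintro x (rfl | rfl)
  · exact pf_mem_constants _ (.inl h'.notMem)
  · exact pfForm_mem_constants _ h'.notMem hrow (single_one_apply_mem _ b)

variable (h'' : 𝒢.IndepOn (a'' :: b :: c :: l)) (haa'' : a ≠ a'') (ha'a'' : a' ≠ a'')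

include h'' haa'' ha'a''

theorem isSMulRegular_pfForm_rows_mod_pair :
    IsSMulRegular (S ⧸ span {pfForm M (b :: c :: l) (M a) (M a'), pf M (b :: c :: l)})
      (pfForm M (b :: c :: l) (M a) (M a'')) := by
  classical
  have hb : b ≠ a := ne_of_mem_of_not_mem List.mem_cons_self h.notMem
  have hb' : b ≠ a' := ne_of_mem_of_not_mem List.mem_cons_self h'.notMem
  have hrow := row_mem_constants h''.indep haa'' hb
  refine isSMulRegular_pfForm_swap (isSMulRegular_pfForm_row_of_single h''.indep h''.notMem
    hrow ?_ (isSMulRegular_pfForm_swap ?_))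
  · rintro x (rfl | rfl)
    · exact pfForm_mem_constants _ h''.notMem hrow (row_mem_constants _ ha'a'' hb')
    · exact pf_mem_constants _ (.inl h''.notMem)
  · rw [Set.pair_comm]
    exact isSMulRegular_quotient_pair_swap (isSMulRegular_pfForm_row_single hl h)
      (isSMulRegular_pfForm_rows_mod_row_single hl h h' haa')

theorem isSMulRegular_pfForm_rows_mod_subPfIdeal [Finite ι] :
    IsSMulRegular (S ⧸ subPfIdeal M (a'' :: b :: c :: l))
      (pfForm M (b :: c :: l) (M a) (M a')) := by
  classical
  have hreg := isSMulRegular_pf_mod_subPfIdeal hl h''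
  rw [subPfIdeal_eq_span] at hreg ⊢
  have hconstants {i j : ι} (hi : i ≠ a'') (hil : i ∉ b :: c :: l) (hij : 𝒢.Indep i j) :
      ∀ x ∈ Set.range fun k => subPf M (a'' :: b :: c :: l) (Pi.single k 1),
        x ∈ (𝒢.expansion i j hij).constants := by
    rintro _ ⟨k, rfl⟩
    exact subPf_mem 𝒢.isAlternating
      (entry_mem_constants _ (.inl (List.not_mem_cons_of_ne_of_not_mem hi hil)))
      fun j _ => single_one_apply_mem _ k j
  have hb' : b ≠ a' := ne_of_mem_of_not_mem List.mem_cons_self h'.notMem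
  refine isSMulRegular_pfForm_row_of_single h.indep h.notMem
    (row_mem_constants _ haa'.symm hb') (hconstants haa'' h.notMem _) (isSMulRegular_pfForm_swap ?_)
  refine isSMulRegular_pfForm_row_of_single h'.swap_tail.indep h'.notMem
    (single_one_apply_mem _ b) (hconstants ha'a'' h'.notMem _) (isSMulRegular_pfForm_swap ?_)
  exact isSMulRegular_pfForm_single_single_of_pf h.tail hreg

end GenericEntries

end BorderRows

section GenericBorder

variable {S : Type*} [CommRing S] {ι : Type*} {M : Matrix ι ι S}

/-- A matrix with generic entries together with three border indices and a list of core indices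
(with head `b`, `c`), such that the entries are generic between the border and the core and inside
the core, and with three further variables `T i` that occur in no entry of the matrix. Nothing is
assumed about the entries between border indices. -/
structure GenericBorder (M : Matrix ι ι S) extends GenericEntries M where
  border : Fin 3 → ι
  border_injective : Function.Injective border
  b : ι
  c : ι
  l : List ι
  even_length : Even l.length
  indepOn : ∀ i, toGenericEntries.IndepOn (border i :: b :: c :: l)
  T : Fin 3 → S
  expansionT : ∀ i, Expansion (T i)
  entry_mem_constantsT : ∀ i a b, M a b ∈ (expansionT i).constants
  T_mem_constantsT : ∀ i j, i ≠ j → T j ∈ (expansionT i).constants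

namespace GenericBorder

variable (𝒯 : GenericBorder M)

/-- The list of core indices. -/
def core : List ι := 𝒯.b :: 𝒯.c :: 𝒯.l

/-- The Pfaffian of the core, called `Pf_{123̄}` in the paper. -/
noncomputable abbrev corePf : S := pf M 𝒯.core

/-- The form whose values at the border rows are, up to sign, the Pfaffians of the core bordered by
two border indices. -/
noncomputable abbrev form : (ι → S) →ₗ[S] (ι → S) →ₗ[S] S := pfForm M 𝒯.core

/-- The rows of `M` at the border indices. -/
abbrev row (i : Fin 3) : ι → S := M (𝒯.border i)

/-- The combination of the first two border rows with the variables `T` as coefficients. -/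
def partialRow : ι → S := 𝒯.T 0 • 𝒯.row 0 + 𝒯.T 1 • 𝒯.row 1

/-- The combination of the border rows with the variables `T` as coefficients. -/
def genericRow : ι → S := 𝒯.partialRow + 𝒯.T 2 • 𝒯.row 2

/-- The values of `form` at the pairs of border rows, which are the Pfaffians `Pf_{ī}` of the paper
up to sign when the border entries vanish. -/
noncomputable def borderPf : Fin 3 → S :=
  ![𝒯.form (𝒯.row 1) (𝒯.row 2), 𝒯.form (𝒯.row 2) (𝒯.row 0), 𝒯.form (𝒯.row 0) (𝒯.row 1)]

variable {𝒯}

theorem form_mem_constantsT (k : Fin 3) {u v : ι → S} (hu : ∀ i, u i ∈ (𝒯.expansionT k).constants)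
    (hv : ∀ i, v i ∈ (𝒯.expansionT k).constants) : 𝒯.form u v ∈ (𝒯.expansionT k).constants :=
  pfForm_mem 𝒯.isAlternating (fun _ _ _ _ => 𝒯.entry_mem_constantsT _ _ _) (fun i _ => hu i)
    fun i _ => hv i

theorem form_rows_mem_constantsT (k i j : Fin 3) :
    𝒯.form (𝒯.row i) (𝒯.row j) ∈ (𝒯.expansionT k).constants :=
  form_mem_constantsT k (𝒯.entry_mem_constantsT _ _) (𝒯.entry_mem_constantsT _ _)

theorem corePf_mem_constantsT (k : Fin 3) : 𝒯.corePf ∈ (𝒯.expansionT k).constants :=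
  pf_mem 𝒯.isAlternating fun _ _ _ _ => 𝒯.entry_mem_constantsT _ _ _

theorem partialRow_mem_constantsT (i : ι) : 𝒯.partialRow i ∈ (𝒯.expansionT 2).constants :=
  add_mem (mul_mem (𝒯.T_mem_constantsT _ _ (by decide)) (𝒯.entry_mem_constantsT _ _ _))
    (mul_mem (𝒯.T_mem_constantsT _ _ (by decide)) (𝒯.entry_mem_constantsT _ _ _))

theorem form_partialRow_row_zero :
    𝒯.form 𝒯.partialRow (𝒯.row 0) = -(𝒯.T 1 * 𝒯.form (𝒯.row 0) (𝒯.row 1)) := by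
  rw [partialRow, map_add, map_smul, map_smul, LinearMap.add_apply, LinearMap.smul_apply,
    LinearMap.smul_apply, pfForm_self, pfForm_skew M _ (𝒯.row 1), smul_zero, zero_add, smul_neg,
    smul_eq_mul]

theorem form_partialRow_row_one :
    𝒯.form 𝒯.partialRow (𝒯.row 1) = 𝒯.T 0 * 𝒯.form (𝒯.row 0) (𝒯.row 1) := by
  rw [partialRow, map_add, map_smul, map_smul, LinearMap.add_apply, LinearMap.smul_apply,
    LinearMap.smul_apply, pfForm_self, smul_zero, add_zero, smul_eq_mul]

theorem isSMulRegular_form_partialRow {G : Set S}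
    (hG : ∀ s ∈ G, s ∈ (𝒯.expansionT 0).constants)
    (h : IsSMulRegular (S ⧸ span G) (𝒯.form (𝒯.row 0) (𝒯.row 2))) :
    IsSMulRegular (S ⧸ span G) (𝒯.form 𝒯.partialRow (𝒯.row 2)) := by
  refine (𝒯.expansionT 0).isSMulRegular_of_leadingCoeff hG
    (r := 𝒯.T 1 * 𝒯.form (𝒯.row 1) (𝒯.row 2)) ?_ (form_rows_mem_constantsT 0 0 2)
    (mul_mem (𝒯.T_mem_constantsT _ _ (by decide)) (form_rows_mem_constantsT 0 1 2)) h
  rw [partialRow, map_add, map_smul, map_smul, LinearMap.add_apply, LinearMap.smul_apply,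
    LinearMap.smul_apply, smul_eq_mul, smul_eq_mul, mul_comm]

variable [IsDomain S]

theorem isSMulRegular_form_rows {i j : Fin 3} (h : i ≠ j) :
    IsSMulRegular (S ⧸ span {𝒯.corePf}) (𝒯.form (𝒯.row i) (𝒯.row j)) :=
  GenericEntries.isSMulRegular_pfForm_rows 𝒯.even_length (𝒯.indepOn i) (𝒯.indepOn j)
    (𝒯.border_injective.ne h)

theorem isSMulRegular_form_partialRow_row :
    IsSMulRegular (S ⧸ span {𝒯.corePf}) (𝒯.form 𝒯.partialRow (𝒯.row 2)) :=
  isSMulRegular_form_partialRow (by rintro s rfl; exact corePf_mem_constantsT 0)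
    (isSMulRegular_form_rows (by decide))

theorem mem_span_corePf_of_smul_genericRow_mem {h : S} (hh : h • 𝒯.genericRow ∈ rowSpan M 𝒯.core) :
    h ∈ span {𝒯.corePf} := by
  apply mem_of_isSMulRegular_quotient_of_smul_mem isSMulRegular_form_partialRow_row
  have hpair := pfForm_mem_span_pf 𝒯.isAlternating (𝒯.row 2) hh
  rw [map_smul, genericRow, map_add, map_smul, pfForm_self, smul_zero, add_zero, pfForm_skew,
    smul_neg, neg_mem_iff] at hpair
  rwa [smul_eq_mul, mul_comm]

variable [Finite ι]

theorem generatesPfPerp_row (i : Fin 3) : GeneratesPfPerp M 𝒯.core (𝒯.row i) :=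
  GenericEntries.generatesPfPerp_row (by simpa [core, Nat.even_add_one] using 𝒯.even_length)
    (𝒯.indepOn i)

theorem generatesPfPerp_genericRow : GeneratesPfPerp M 𝒯.core 𝒯.genericRow := by
  classical
  exact GeneratesPerp.add_smul (𝒯.expansionT 2)
    (fun u _ hv => pfForm_mem_span_pf 𝒯.isAlternating u hv)
    (fun i => form_mem_constantsT 2 partialRow_mem_constantsT (single_one_apply_mem _ i))
    (fun i => form_mem_constantsT 2 (𝒯.entry_mem_constantsT _ _) (single_one_apply_mem _ i))
    (isAlt_pfForm M _) (pf_smul_mem_rowSpan 𝒯.isAlternating) (corePf_mem_constantsT 2)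
    (generatesPfPerp_row 2) isSMulRegular_form_partialRow_row

theorem isSMulRegular_borderPf_two :
    IsSMulRegular (S ⧸ pairingIdeal 𝒯.form 𝒯.corePf 𝒯.genericRow) (𝒯.borderPf 2) := by
  classical
  have hne {i j : Fin 3} (h : i ≠ j) : 𝒯.border i ≠ 𝒯.border j := 𝒯.border_injective.ne h
  refine isSMulRegular_pairingIdeal_add_smul (𝒯.expansionT 2)
    (fun u _ hv => pfForm_mem_span_pf 𝒯.isAlternating u hv)
    (fun i => form_mem_constantsT 2 partialRow_mem_constantsT (single_one_apply_mem _ i))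
    (fun i => form_mem_constantsT 2 (𝒯.entry_mem_constantsT _ _) (single_one_apply_mem _ i))
    (isAlt_pfForm M _) (pf_smul_mem_rowSpan 𝒯.isAlternating) (corePf_mem_constantsT 2)
    (generatesPfPerp_row 2) (form_rows_mem_constantsT 2 0 1) ?_
    (isSMulRegular_form_rows (by decide)) ?_
  · have hideal : pairingIdeal 𝒯.form 𝒯.corePf (𝒯.row 2) =
        subPfIdeal M (𝒯.border 2 :: 𝒯.core) :=
      pairingIdeal_row 𝒯.isAlternating (𝒯.indepOn 2).notMem
    rw [hideal]
    exact GenericEntries.isSMulRegular_pfForm_rows_mod_subPfIdeal 𝒯.even_length (𝒯.indepOn 0)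
      (𝒯.indepOn 1) (hne (by decide)) (𝒯.indepOn 2) (hne (by decide)) (hne (by decide))
  · refine isSMulRegular_form_partialRow ?_
      (GenericEntries.isSMulRegular_pfForm_rows_mod_pair 𝒯.even_length (𝒯.indepOn 0) (𝒯.indepOn 1)
        (hne (by decide)) (𝒯.indepOn 2) (hne (by decide)) (hne (by decide)))
    rintro s (rfl | rfl)
    exacts [form_rows_mem_constantsT 0 0 1, corePf_mem_constantsT 0]

omit [IsDomain S] [Finite ι] in
theorem borderPf_two_mul_T_sub_mem (i : Fin 3) :
    𝒯.borderPf 2 * 𝒯.T i - 𝒯.T 2 * 𝒯.borderPf i ∈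
      pairingIdeal 𝒯.form 𝒯.corePf 𝒯.genericRow := by
  have hpair (v : ι → S) :
      𝒯.form 𝒯.genericRow v ∈ pairingIdeal 𝒯.form 𝒯.corePf 𝒯.genericRow :=
    le_sup_right (a := span {𝒯.corePf}) ⟨v, rfl⟩
  fin_cases i
  · convert hpair (𝒯.row 1) using 1
    simp only [genericRow, borderPf, map_add, map_smul, LinearMap.add_apply, LinearMap.smul_apply,
      form_partialRow_row_one, pfForm_skew M _ (𝒯.row 2) (𝒯.row 1)]
    simp only [Matrix.cons_val, Fin.zero_eta, Matrix.cons_val_zero, smul_eq_mul, mul_neg]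
    ring
  · convert neg_mem (hpair (𝒯.row 0)) using 1
    simp only [genericRow, borderPf, map_add, map_smul, LinearMap.add_apply, LinearMap.smul_apply,
      form_partialRow_row_zero]
    simp only [Matrix.cons_val, Fin.mk_one, Matrix.cons_val_one, Matrix.cons_val_zero, smul_eq_mul,
      neg_add_rev, neg_neg]
    ring
  · simp [mul_comm]

theorem sum_borderPf_smul_row_mem_rowSpan :
    𝒯.borderPf 0 • 𝒯.row 0 + 𝒯.borderPf 1 • 𝒯.row 1 + 𝒯.borderPf 2 • 𝒯.row 2 ∈
      rowSpan M 𝒯.core := by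
  set v := 𝒯.borderPf 0 • 𝒯.row 0 + 𝒯.borderPf 1 • 𝒯.row 1 + 𝒯.borderPf 2 • 𝒯.row 2 with hv
  have orthogonal_two : 𝒯.form (𝒯.row 2) v = 0 := by
    simp only [hv, borderPf, map_add, map_smul, pfForm_self, pfForm_skew M _ (𝒯.row 2) (𝒯.row 1)]
    simp only [Matrix.cons_val_zero, smul_eq_mul, Matrix.cons_val_one, mul_neg, Matrix.cons_val,
      mul_zero, add_zero]
    ring
  have orthogonal_one : 𝒯.form (𝒯.row 1) v = 0 := by
    simp only [hv, borderPf, map_add, map_smul, pfForm_self, pfForm_skew M _ (𝒯.row 1) (𝒯.row 0)]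
    simp only [Matrix.cons_val_zero, smul_eq_mul, mul_neg, Matrix.cons_val_one, mul_zero, add_zero,
      Matrix.cons_val]
    ring
  obtain ⟨h, hh⟩ := generatesPfPerp_row 2 v (by rw [orthogonal_two]; exact zero_mem _)
  have hdvd : h ∈ span {𝒯.corePf} := by
    refine mem_of_isSMulRegular_quotient_of_smul_mem
      (isSMulRegular_form_rows (i := 1) (j := 2) (by decide)) ?_
    have hpair := pfForm_mem_span_pf 𝒯.isAlternating (𝒯.row 1) hh
    rwa [map_sub, map_smul, orthogonal_one, zero_sub, neg_mem_iff, smul_eq_mul, mul_comm] at hpair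
  obtain ⟨k, rfl⟩ := mem_span_singleton'.1 hdvd
  rw [mul_smul] at hh
  exact (Submodule.sub_mem_iff_left _ (Submodule.smul_mem _ k
    (pf_smul_mem_rowSpan 𝒯.isAlternating (𝒯.row 2)))).1 hh

end GenericBorder

end GenericBorder

section GradedModules

open CategoryTheory MvPolynomial

/-- The category with one object for each integer degree, whose morphisms `i ⟶ j` are the monomials
of degree `j - i`. A functor from it to vector spaces is a graded module over the polynomial ring,
and functor categories are abelian with enough structure to speak of `Ext`. -/
structure DegreeCat (σ : Type) where
  degree : ℤ

noncomputable instance {σ : Type} : Category (DegreeCat σ) where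
  Hom i j := {a : σ →₀ ℕ // i.degree + (a.degree : ℤ) = j.degree}
  id i := ⟨0, by simp⟩
  comp f g := ⟨f.1 + g.1, by rw [map_add, Nat.cast_add, ← add_assoc, f.2, g.2]⟩
  id_comp f := Subtype.ext (zero_add _)
  comp_id f := Subtype.ext (add_zero _)
  assoc f g h := Subtype.ext (add_assoc _ _ _)

variable (K : Type) [Field K] (σ : Type)

/-- The category of graded `MvPolynomial σ K`-modules, encoded as functors. -/
abbrev GradedFunctor := DegreeCat σ ⥤ ModuleCat.{0} K

instance : HasExt.{1} (GradedFunctor K σ) := HasExt.standard _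

/-- A module over a polynomial ring with a family of subspaces of homogeneous elements, compatible
with multiplication by monomials. The module need not be the sum of its pieces: only the pieces
enter `toFunctor`. -/
structure GradedMod where
  carrier : Type
  [addCommGroup : AddCommGroup carrier]
  [module : Module (MvPolynomial σ K) carrier]
  [moduleBase : Module K carrier]
  [isScalarTower : IsScalarTower K (MvPolynomial σ K) carrier]
  piece : ℤ → Submodule K carrier
  monomial_smul_mem : ∀ (i : ℤ) (a : σ →₀ ℕ) (q : carrier), q ∈ piece i →
    monomial a (1 : K) • q ∈ piece (i + (a.degree : ℕ))

variable {K σ}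

namespace GradedMod

attribute [instance] addCommGroup module moduleBase isScalarTower

variable {A B C Y : GradedMod K σ}

/-- Multiplication by the monomial `f` on homogeneous pieces. -/
noncomputable def monomialMap (A : GradedMod K σ) {i j : DegreeCat σ} (f : i ⟶ j) :
    A.piece i.degree →ₗ[K] A.piece j.degree where
  toFun q := ⟨monomial f.1 (1 : K) • q.1, by
    simpa only [f.2] using A.monomial_smul_mem _ f.1 _ q.2⟩
  map_add' x y := by ext; simp
  map_smul' c x := by ext; simp [smul_algebra_smul_comm]

/-- The functor of homogeneous pieces. -/
noncomputable def toFunctor (A : GradedMod K σ) : GradedFunctor K σ where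
  obj i := ModuleCat.of K (A.piece i.degree)
  map f := ModuleCat.ofHom (A.monomialMap f)
  map_id i := by
    ext q
    exact one_smul (MvPolynomial σ K) q.1
  map_comp f g := by
    ext q
    change monomial (f.1 + g.1) (1 : K) • q.1 = monomial g.1 (1 : K) • monomial f.1 (1 : K) • q.1
    rw [smul_smul, monomial_mul, add_comm, one_mul]

/-- A degree-preserving linear map. -/
structure Hom (A B : GradedMod K σ) where
  toLinearMap : A.carrier →ₗ[MvPolynomial σ K] B.carrier
  map_mem : ∀ j, ∀ q ∈ A.piece j, toLinearMap q ∈ B.piece j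

/-- The natural transformation induced on homogeneous pieces. -/
noncomputable def Hom.toNatTrans (φ : A.Hom B) : A.toFunctor ⟶ B.toFunctor where
  app i := ModuleCat.ofHom
    ((φ.toLinearMap.restrictScalars K).restrict fun q hq => φ.map_mem i.degree q hq)
  naturality i j f := by
    ext q
    apply Subtype.ext
    exact map_smul φ.toLinearMap _ q.1

/-- A sequence `0 → A → B → C → 0` of graded maps which is exact on homogeneous pieces. -/
structure ShortExactSeq (A B C : GradedMod K σ) where
  f : A.Hom B
  g : B.Hom C
  injective : ∀ j, ∀ q ∈ A.piece j, f.toLinearMap q = 0 → q = 0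
  comp_eq_zero : ∀ j, ∀ q ∈ A.piece j, g.toLinearMap (f.toLinearMap q) = 0
  exact : ∀ j, ∀ q ∈ B.piece j, g.toLinearMap q = 0 → ∃ a ∈ A.piece j, f.toLinearMap a = q
  surjective : ∀ j, ∀ q ∈ C.piece j, ∃ a ∈ B.piece j, g.toLinearMap a = q

/-- `Extⁱ(A, Y) = 0`, computed for the functors of homogeneous pieces. -/
def ExtVanishes (A Y : GradedMod K σ) (i : ℕ) : Prop :=
  ∀ x : Abelian.Ext A.toFunctor Y.toFunctor i, x = 0

namespace ShortExactSeq

/-- The induced short complex of functors. -/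
noncomputable def toShortComplex (s : ShortExactSeq A B C) : ShortComplex (GradedFunctor K σ) where
  X₁ := A.toFunctor
  X₂ := B.toFunctor
  X₃ := C.toFunctor
  f := s.f.toNatTrans
  g := s.g.toNatTrans
  zero := by
    ext i q
    apply Subtype.ext
    exact s.comp_eq_zero _ _ q.2

theorem toShortComplex_exact (s : ShortExactSeq A B C) : s.toShortComplex.Exact := by
  rw [ShortComplex.exact_iff_isZero_homology, Functor.isZero_iff]
  intro i
  have hexact : (s.toShortComplex.map ((evaluation _ _).obj i)).Exact := by
    rw [ShortComplex.moduleCat_exact_iff]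
    intro q hq
    obtain ⟨a, ha, h⟩ := s.exact i.degree q.1 q.2 (congrArg Subtype.val hq)
    exact ⟨⟨a, ha⟩, Subtype.ext h⟩
  exact ((ShortComplex.exact_iff_isZero_homology _).1 hexact).of_iso
    (s.toShortComplex.mapHomologyIso ((evaluation _ _).obj i)).symm

theorem toShortComplex_shortExact (s : ShortExactSeq A B C) : s.toShortComplex.ShortExact where
  exact := s.toShortComplex_exact
  mono_f := by
    rw [NatTrans.mono_iff_mono_app]
    intro i
    rw [ModuleCat.mono_iff_injective]
    change Function.Injective (s.f.toNatTrans.app i).hom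
    rw [injective_iff_map_eq_zero]
    intro a ha
    exact Subtype.ext (s.injective _ _ a.2 (congrArg Subtype.val ha))
  epi_g := by
    rw [NatTrans.epi_iff_epi_app]
    intro i
    rw [ModuleCat.epi_iff_surjective]
    intro q
    obtain ⟨a, ha, h⟩ := s.surjective i.degree q.1 q.2
    exact ⟨⟨a, ha⟩, Subtype.ext h⟩

open Abelian.Ext

theorem extVanishes_middle (s : ShortExactSeq A B C) {i : ℕ} (hA : ExtVanishes A Y i)
    (hC : ExtVanishes C Y i) : ExtVanishes B Y i := by
  intro x
  obtain ⟨y, rfl⟩ :=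
    contravariant_sequence_exact₂ s.toShortComplex_shortExact Y.toFunctor x (hA _)
  rw [show y = 0 from hC y]
  exact comp_zero ..

theorem extVanishes_right (s : ShortExactSeq A B C) {i : ℕ} (hB : ExtVanishes B Y (i + 1))
    (hA : ExtVanishes A Y i) : ExtVanishes C Y (i + 1) := by
  intro x
  obtain ⟨y, rfl⟩ :=
    contravariant_sequence_exact₃ s.toShortComplex_shortExact Y.toFunctor x (hB _) (add_comm 1 i)
  rw [show y = 0 from hA y]
  exact comp_zero ..

theorem extVanishes_right_zero (s : ShortExactSeq A B C) (hB : ExtVanishes B Y 0) :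
    ExtVanishes C Y 0 := by
  intro x
  have := s.toShortComplex_shortExact.epi_g
  exact precomp_mk₀_injective_of_epi Y.toFunctor s.toShortComplex.g ((hB _).trans (hB _).symm)

theorem extVanishes_left (s : ShortExactSeq A B C) {i : ℕ} (hB : ExtVanishes B Y i)
    (hC : ExtVanishes C Y (i + 1)) : ExtVanishes A Y i := by
  intro x
  obtain ⟨y, rfl⟩ :=
    contravariant_sequence_exact₁ s.toShortComplex_shortExact Y.toFunctor x (add_comm 1 i) (hC _)
  rw [show y = 0 from hB y]
  exact comp_zero ..

end ShortExactSeq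

end GradedMod

end GradedModules

section WeightedHomogeneous

open MvPolynomial

variable {K τ G : Type*} [Field K] [AddCommGroup G] {w : τ → G}

theorem isWeightedHomogeneous_mul_of_add_eq {i j k : G} {a b : MvPolynomial τ K}
    (ha : IsWeightedHomogeneous w a i) (hb : IsWeightedHomogeneous w b j) (h : i + j = k) :
    IsWeightedHomogeneous w (a * b) k :=
  h ▸ ha.mul hb

attribute [local instance] weightedGradedAlgebra

theorem weightedHomogeneousComponent_mul_of_left {i : G} {a : MvPolynomial τ K}
    (ha : IsWeightedHomogeneous w a i) (n : G) (b : MvPolynomial τ K) :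
    weightedHomogeneousComponent w n (a * b) = a * weightedHomogeneousComponent w (n - i) b := by
  classical
  have h := DirectSum.coe_decompose_mul_add_of_left_mem (weightedHomogeneousSubmodule K w)
    (j := n - i) (b := b) ((mem_weightedHomogeneousSubmodule K w i a).2 ha)
  rw [add_sub_cancel] at h
  rwa [← weightedDecomposition.decompose'_apply, ← weightedDecomposition.decompose'_apply]

theorem isHomogeneous_ideal_pow [DecidableEq G] {J : Ideal (MvPolynomial τ K)}
    (h : J.IsHomogeneous (weightedHomogeneousSubmodule K w)) :
    ∀ m : ℕ, (J ^ m).IsHomogeneous (weightedHomogeneousSubmodule K w)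
  | 0 => by rw [pow_zero, one_eq_top]; exact Ideal.IsHomogeneous.top _
  | m + 1 => by rw [pow_succ]; exact (isHomogeneous_ideal_pow h m).mul h

end WeightedHomogeneous

section StandardDegree

open MvPolynomial

variable {K σ : Type*} [Field K]

theorem weight_one_eq_degree (a : σ →₀ ℕ) : Finsupp.weight (1 : σ → ℤ) a = (a.degree : ℕ) := by
  simp [Finsupp.weight_apply, Finsupp.sum, Finsupp.degree_apply]

theorem isHomogeneous_iff_isWeightedHomogeneous {b : MvPolynomial σ K} {n : ℕ} :
    b.IsHomogeneous n ↔ IsWeightedHomogeneous (1 : σ → ℤ) b n := by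
  refine forall₂_congr fun a _ => ?_
  rw [weight_one_eq_degree, Nat.cast_inj, Finsupp.degree_eq_weight_one (R := ℕ)]
  rfl

theorem zg_homogeneousSubmodule (j : ℤ) :
    zg (homogeneousSubmodule σ K) j = weightedHomogeneousSubmodule K (1 : σ → ℤ) j := by
  ext b
  rw [zg, mem_weightedHomogeneousSubmodule]
  split_ifs with h
  · obtain ⟨n, rfl⟩ := Int.eq_ofNat_of_zero_le h
    exact isHomogeneous_iff_isWeightedHomogeneous
  · rw [Submodule.mem_bot]
    refine ⟨fun hb => hb ▸ isWeightedHomogeneous_zero _ _ _, fun hb => ?_⟩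
    by_contra hb0
    obtain ⟨a, ha⟩ := exists_coeff_ne_zero hb0
    have hdegree := hb ha
    rw [weight_one_eq_degree] at hdegree
    lia

theorem isWeightedHomogeneous_monomial_one (a : σ →₀ ℕ) :
    IsWeightedHomogeneous (1 : σ → ℤ) (monomial a (1 : K)) (a.degree : ℕ) :=
  isWeightedHomogeneous_monomial _ _ _ (weight_one_eq_degree a)

variable (K σ) in
/-- The graded maximal ideal of the polynomial ring, as the polynomials without constant term. -/
noncomputable def augmentationIdeal : Ideal (MvPolynomial σ K) :=
  RingHom.ker (constantCoeff (σ := σ) (R := K))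

theorem monomial_smul_quotient_augmentationIdeal {a : σ →₀ ℕ} (ha : a ≠ 0)
    (q : MvPolynomial σ K ⧸ augmentationIdeal K σ) : monomial a (1 : K) • q = 0 := by
  classical
  have hmem : monomial a (1 : K) ∈ augmentationIdeal K σ := by
    simp [augmentationIdeal, RingHom.mem_ker, constantCoeff_monomial, ha]
  obtain ⟨b, rfl⟩ := Ideal.Quotient.mk_surjective q
  exact Ideal.Quotient.eq_zero_iff_mem.2 (Ideal.mul_mem_right b _ hmem)

theorem one_ne_zero_quotient_augmentationIdeal :
    (1 : MvPolynomial σ K ⧸ augmentationIdeal K σ) ≠ 0 := by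
  rw [← map_one (Ideal.Quotient.mk _), Ne, Ideal.Quotient.eq_zero_iff_mem]
  simp [augmentationIdeal, RingHom.mem_ker]

end StandardDegree

section HomogeneousBases

open CategoryTheory MvPolynomial

variable {K σ : Type} [Field K]

namespace GradedMod

variable (K σ) in
/-- The residue field placed in degree `j`. -/
noncomputable def residueField (j : ℤ) : GradedMod K σ where
  carrier := MvPolynomial σ K ⧸ augmentationIdeal K σ
  piece i := if i = j then ⊤ else ⊥
  monomial_smul_mem i a q h := by
    by_cases ha : a = 0
    · subst ha
      have hq : monomial (0 : σ →₀ ℕ) (1 : K) • q = q := one_smul (MvPolynomial σ K) q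
      rw [hq]
      simpa using h
    · rw [monomial_smul_quotient_augmentationIdeal ha]
      exact Submodule.zero_mem _

/-- A basis `basis` of homogeneous elements of degrees `s`. Spanning is only required of the
homogeneous pieces, with monomial multiples of the basis elements. -/
structure HomogeneousBasis (A : GradedMod K σ) {κ : Type} (s : κ → ℤ) where
  basis : κ → A.carrier
  linearIndependent : LinearIndependent (MvPolynomial σ K) basis
  mem : ∀ k, basis k ∈ A.piece (s k)
  mem_span : ∀ j, ∀ q ∈ A.piece j, q ∈ Submodule.span K
    {x | ∃ k, ∃ a : σ →₀ ℕ, s k + (a.degree : ℕ) = j ∧ x = monomial a (1 : K) • basis k}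

namespace HomogeneousBasis

variable {A : GradedMod K σ} {κ : Type} {s : κ → ℤ} (h : HomogeneousBasis A s)

/-- The index set of the induced basis of the piece of degree `j`. -/
abbrev PieceIndex (_ : HomogeneousBasis A s) (j : ℤ) : Type :=
  {x : κ × (σ →₀ ℕ) // s x.1 + ((x.2.degree : ℕ) : ℤ) = j}

/-- A monomial multiple of a basis element, as an element of the piece of degree `j`. -/
noncomputable def pieceVec (j : ℤ) (x : h.PieceIndex j) : A.piece j :=
  ⟨monomial x.1.2 (1 : K) • h.basis x.1.1, by
    simpa only [x.2] using A.monomial_smul_mem _ x.1.2 _ (h.mem x.1.1)⟩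

theorem linearIndependent_pieceVec (j : ℤ) : LinearIndependent K (h.pieceVec j) := by
  refine LinearIndependent.of_comp (A.piece j).subtype ?_
  have hinj : Function.Injective fun x : h.PieceIndex j => (x.1.2, x.1.1) := fun x y hxy =>
    Subtype.ext (Prod.swap_injective hxy)
  have hcomp : (A.piece j).subtype ∘ h.pieceVec j =
      (fun p : (σ →₀ ℕ) × κ => basisMonomials σ K p.1 • h.basis p.2) ∘
        fun x : h.PieceIndex j => (x.1.2, x.1.1) := by
    ext x
    simp [pieceVec]
  rw [hcomp]
  exact (linearIndependent_smul (basisMonomials σ K).linearIndependent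
    h.linearIndependent).comp _ hinj

theorem top_le_span_pieceVec (j : ℤ) : ⊤ ≤ Submodule.span K (Set.range (h.pieceVec j)) := by
  rintro ⟨q, hq⟩ -
  have hle : Submodule.span K {x | ∃ k, ∃ a : σ →₀ ℕ, s k + (a.degree : ℕ) = j ∧
      x = monomial a (1 : K) • h.basis k} ≤
      (Submodule.span K (Set.range (h.pieceVec j))).map (A.piece j).subtype := by
    rw [Submodule.span_le]
    rintro _ ⟨k, a, hk, rfl⟩
    exact ⟨h.pieceVec j ⟨(k, a), hk⟩, Submodule.subset_span ⟨_, rfl⟩, rfl⟩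
  obtain ⟨y, hy, rfl⟩ := hle (h.mem_span j q hq)
  exact hy

/-- The basis of the piece of degree `j` by monomial multiples of the homogeneous basis. -/
noncomputable def pieceBasis (j : ℤ) : Module.Basis (h.PieceIndex j) K (A.piece j) :=
  Module.Basis.mk (h.linearIndependent_pieceVec j) (h.top_le_span_pieceVec j)

theorem pieceBasis_apply (j : ℤ) (x : h.PieceIndex j) : h.pieceBasis j x = h.pieceVec j x := by
  simp [pieceBasis]

/-- The index of the `k`-th basis element itself. -/
def genIndex (k : κ) : h.PieceIndex (s k) := ⟨(k, 0), by simp⟩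

/-- The `k`-th basis element in its piece. -/
def gen (k : κ) : A.piece (s k) := ⟨h.basis k, h.mem k⟩

theorem pieceVec_genIndex (k : κ) : h.pieceVec (s k) (h.genIndex k) = h.gen k :=
  Subtype.ext (one_smul (MvPolynomial σ K) (h.basis k))

/-- The morphism from the index of a monomial multiple given by that monomial. -/
def indexHom {j : DegreeCat σ} (x : h.PieceIndex j.degree) : (⟨s x.1.1⟩ : DegreeCat σ) ⟶ j :=
  ⟨x.1.2, x.2⟩

theorem monomialMap_pieceBasis {i j : DegreeCat σ} (f : i ⟶ j) (x : h.PieceIndex i.degree) :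
    ∃ hx, A.monomialMap f (h.pieceBasis i.degree x) =
      h.pieceBasis j.degree ⟨(x.1.1, x.1.2 + f.1), hx⟩ := by
  refine ⟨(h.indexHom x ≫ f).2, ?_⟩
  rw [pieceBasis_apply, pieceBasis_apply]
  apply Subtype.ext
  change monomial f.1 (1 : K) • monomial x.1.2 (1 : K) • h.basis x.1.1 =
    monomial (x.1.2 + f.1) (1 : K) • h.basis x.1.1
  rw [smul_smul, monomial_mul, add_comm, one_mul]

/-- The natural transformation with prescribed values on a homogeneous basis. -/
noncomputable def desc (Z : GradedFunctor K σ) (y : ∀ k, Z.obj ⟨s k⟩) : A.toFunctor ⟶ Z where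
  app j := ModuleCat.ofHom ((h.pieceBasis j.degree).constr K fun x =>
    (Z.map (h.indexHom x)).hom (y x.1.1))
  naturality i j f := by
    apply ModuleCat.hom_ext
    apply (h.pieceBasis i.degree).ext
    intro x
    obtain ⟨hx, hmap⟩ := h.monomialMap_pieceBasis f x
    change (h.pieceBasis j.degree).constr K _ (A.monomialMap f (h.pieceBasis i.degree x)) =
      (Z.map f).hom ((h.pieceBasis i.degree).constr K _ (h.pieceBasis i.degree x))
    rw [hmap, Module.Basis.constr_basis, Module.Basis.constr_basis]
    change _ = (Z.map (h.indexHom x) ≫ Z.map f).hom (y x.1.1)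
    rw [← Z.map_comp]
    rfl

theorem desc_app_gen (Z : GradedFunctor K σ) (y : ∀ k, Z.obj ⟨s k⟩) (k : κ) :
    ((h.desc Z y).app ⟨s k⟩).hom (h.gen k) = y k := by
  rw [← pieceVec_genIndex, ← pieceBasis_apply]
  refine ((h.pieceBasis (s k)).constr_basis K _ (h.genIndex k)).trans ?_
  change (Z.map (𝟙 (⟨s k⟩ : DegreeCat σ))).hom (y k) = y k
  rw [Z.map_id]
  rfl

theorem app_pieceVec {Z : GradedFunctor K σ} (φ : A.toFunctor ⟶ Z) (j : DegreeCat σ)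
    (x : h.PieceIndex j.degree) :
    (φ.app j).hom (h.pieceVec j.degree x) =
      (Z.map (h.indexHom x)).hom ((φ.app ⟨s x.1.1⟩).hom (h.gen x.1.1)) :=
  congrArg (fun f => f.hom (h.gen x.1.1)) (φ.naturality (h.indexHom x))

theorem natTrans_ext {Z : GradedFunctor K σ} {φ ψ : A.toFunctor ⟶ Z}
    (hgen : ∀ k, (φ.app ⟨s k⟩).hom (h.gen k) = (ψ.app ⟨s k⟩).hom (h.gen k)) : φ = ψ := by
  ext j : 2
  apply ModuleCat.hom_ext
  apply (h.pieceBasis j.degree).ext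
  intro x
  rw [pieceBasis_apply]
  exact (h.app_pieceVec φ j x).trans ((congrArg _ (hgen _)).trans (h.app_pieceVec ψ j x).symm)

include h in
theorem projective : Projective A.toFunctor where
  factors {E X} f e he := by
    rw [NatTrans.epi_iff_epi_app] at he
    have hlift (k : κ) : ∃ y, (e.app ⟨s k⟩).hom y = (f.app ⟨s k⟩).hom (h.gen k) :=
      (ModuleCat.epi_iff_surjective _).1 (he ⟨s k⟩) _
    choose y hy using hlift
    refine ⟨h.desc E y, h.natTrans_ext fun k => ?_⟩
    rw [← hy]
    exact congrArg (e.app ⟨s k⟩).hom (h.desc_app_gen E y k)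

include h in
theorem extVanishes_succ (Y : GradedMod K σ) (i : ℕ) : ExtVanishes A Y (i + 1) := by
  have := h.projective
  exact fun x => Abelian.Ext.eq_zero_of_projective x

include h in
theorem extVanishes_residueField_zero {j : ℤ} (hs : ∀ k, s k ≠ j) :
    ExtVanishes A (residueField K σ j) 0 := by
  intro x
  obtain ⟨φ, rfl⟩ := (Abelian.Ext.mk₀_bijective _ _).2 x
  rw [Abelian.Ext.mk₀_eq_zero_iff]
  refine h.natTrans_ext fun k => Subtype.ext ((Submodule.mem_bot K).1 ?_)
  have hbot : (residueField K σ j).piece (s k) = ⊥ := if_neg (hs k)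
  exact hbot.le (Subtype.prop (p := (· ∈ (residueField K σ j).piece (s k)))
    ((φ.app ⟨s k⟩).hom (h.gen k)))

theorem app_pieceVec_residueField {j : ℤ} (φ : A.toFunctor ⟶ (residueField K σ j).toFunctor)
    (i : DegreeCat σ) (x : h.PieceIndex i.degree) (hx : x.1.2 ≠ 0) :
    (φ.app i).hom (h.pieceVec i.degree x) = 0 := by
  rw [app_pieceVec]
  exact Subtype.ext (monomial_smul_quotient_augmentationIdeal hx _)

include h in
theorem exists_natTrans_residueField_ne_zero (k : κ) :
    ∃ φ : A.toFunctor ⟶ (residueField K σ (s k)).toFunctor, φ ≠ 0 := by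
  classical
  have hone {k' : κ} (hk : k' = k) :
      (1 : MvPolynomial σ K ⧸ augmentationIdeal K σ) ∈ (residueField K σ (s k)).piece (s k') :=
    (if_pos (congrArg s hk) : (residueField K σ (s k)).piece (s k') = ⊤).ge trivial
  let y (k' : κ) : (residueField K σ (s k)).piece (s k') :=
    if hk : k' = k then ⟨(1 : MvPolynomial σ K ⧸ augmentationIdeal K σ), hone hk⟩ else 0
  refine ⟨h.desc (residueField K σ (s k)).toFunctor y, fun h0 =>
    one_ne_zero_quotient_augmentationIdeal (K := K) (σ := σ) ?_⟩
  have hy : y k = 0 := by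
    refine (h.desc_app_gen (residueField K σ (s k)).toFunctor y k).symm.trans ?_
    rw [h0]
    rfl
  have hyk : y k = ⟨(1 : MvPolynomial σ K ⧸ augmentationIdeal K σ), hone rfl⟩ := dif_pos rfl
  exact congrArg Subtype.val (hyk.symm.trans hy)

include h in
theorem not_extVanishes_residueField_zero (k : κ) :
    ¬ExtVanishes A (residueField K σ (s k)) 0 := fun hext => by
  obtain ⟨φ, hφ⟩ := h.exists_natTrans_residueField_ne_zero k
  exact hφ ((Abelian.Ext.mk₀_eq_zero_iff φ).1 (hext _))

end HomogeneousBasis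

end GradedMod

end HomogeneousBases

namespace GradedMod

section Regularity

variable {K σ : Type} [Field K] {A B C : GradedMod K σ} {ρ : ℤ}

/-- The Castelnuovo–Mumford regularity is at most `ρ`, read off from extensions by shifts of the
residue field. -/
def RegularityLE (A : GradedMod K σ) (ρ : ℤ) : Prop :=
  ∀ (i : ℕ) (j : ℤ), ρ < j - i → ExtVanishes A (residueField K σ j) i

theorem HomogeneousBasis.regularityLE {κ : Type} {s : κ → ℤ} (h : HomogeneousBasis A s)
    (hs : ∀ k, s k ≤ ρ) : RegularityLE A ρ
  | 0, _, hij => h.extVanishes_residueField_zero fun k => by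
      have := hs k
      rw [Nat.cast_zero, sub_zero] at hij
      lia
  | i + 1, _, _ => h.extVanishes_succ _ i

theorem RegularityLE.mono {ρ' : ℤ} (h : RegularityLE A ρ) (hρ : ρ ≤ ρ') : RegularityLE A ρ' :=
  fun i j hij => h i j (hρ.trans_lt hij)

namespace ShortExactSeq

variable (s : ShortExactSeq A B C)

include s

theorem regularityLE_right (hB : RegularityLE B ρ) (hA : RegularityLE A (ρ + 1)) :
    RegularityLE C ρ
  | 0, j, hij => s.extVanishes_right_zero (hB 0 j hij)
  | i + 1, j, hij => s.extVanishes_right (hB _ j hij) (hA i j (by push_cast at hij; lia))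

theorem regularityLE_middle (hA : RegularityLE A ρ) (hC : RegularityLE C ρ) : RegularityLE B ρ :=
  fun i j hij => s.extVanishes_middle (hA i j hij) (hC i j hij)

end ShortExactSeq

end Regularity

end GradedMod

section FreeResolutions

open CategoryTheory MvPolynomial Abelian

attribute [local instance] weightedGradedAlgebra

variable {K : Type} [Field K] {σ : Type}

namespace GradedMod

namespace ShortExactSeq

variable {A B C Y : GradedMod K σ}

theorem natTrans_eq_zero (s : ShortExactSeq A B C) (ψ : B.toFunctor ⟶ Y.toFunctor)
    (h : s.f.toNatTrans ≫ ψ = 0) (hC : ExtVanishes C Y 0) : ψ = 0 := by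
  have hcomp : (Ext.mk₀ s.toShortComplex.f).comp (Ext.mk₀ (X := s.toShortComplex.X₂) ψ)
      (zero_add 0) = 0 :=
    (Ext.mk₀_comp_mk₀ _ _).trans ((Ext.mk₀_eq_zero_iff _).2 h)
  obtain ⟨x, hx⟩ := Ext.contravariant_sequence_exact₂ s.toShortComplex_shortExact _ _ hcomp
  rw [show x = 0 from hC x, Ext.comp_zero] at hx
  exact (Ext.mk₀_eq_zero_iff _).1 hx.symm

theorem extVanishes_left_zero (s : ShortExactSeq A B C)
    (h : ∀ ψ : B.toFunctor ⟶ Y.toFunctor, s.f.toNatTrans ≫ ψ = 0)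
    (hC : ExtVanishes C Y (0 + 1)) : ExtVanishes A Y 0 := by
  intro x
  obtain ⟨y, hy⟩ :=
    Ext.contravariant_sequence_exact₁ s.toShortComplex_shortExact _ x (add_comm 1 0) (hC _)
  obtain ⟨φ, rfl⟩ := (Ext.mk₀_bijective _ _).2 y
  exact hy.symm.trans ((Ext.mk₀_comp_mk₀ _ _).trans ((Ext.mk₀_eq_zero_iff _).2 (h φ)))

end ShortExactSeq

theorem mem_quotPieces {J : Ideal (MvPolynomial σ K)} {j : ℤ} {x : MvPolynomial σ K ⧸ J} :
    x ∈ quotPieces (homogeneousSubmodule σ K) J j ↔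
      ∃ b, IsWeightedHomogeneous (1 : σ → ℤ) b j ∧ Ideal.Quotient.mk J b = x := by
  rw [quotPieces, zg_homogeneousSubmodule]
  rfl

theorem isWeightedHomogeneous_monomial_one_mul {i : ℤ} (a : σ →₀ ℕ) {b : MvPolynomial σ K}
    (hb : IsWeightedHomogeneous (1 : σ → ℤ) b i) :
    IsWeightedHomogeneous (1 : σ → ℤ) (monomial a (1 : K) * b) (i + (a.degree : ℕ)) :=
  isWeightedHomogeneous_mul_of_add_eq (isWeightedHomogeneous_monomial_one a) hb (add_comm _ _)

/-- The graded quotient of the polynomial ring by `J`. -/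
noncomputable abbrev quotient (J : Ideal (MvPolynomial σ K)) : GradedMod K σ where
  carrier := MvPolynomial σ K ⧸ J
  piece := quotPieces (homogeneousSubmodule σ K) J
  monomial_smul_mem i a q h := by
    obtain ⟨b, hb, rfl⟩ := mem_quotPieces.1 h
    exact mem_quotPieces.2 ⟨_, isWeightedHomogeneous_monomial_one_mul a hb, rfl⟩

/-- The homogeneous elements of degree `j` in the free module with generators of degrees `s`. -/
noncomputable def freePiece {κ : Type} (s : κ → ℤ) (j : ℤ) :
    Submodule K (κ →₀ MvPolynomial σ K) where
  carrier := {f | ∀ k, IsWeightedHomogeneous (1 : σ → ℤ) (f k) (j - s k)}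
  add_mem' ha hb k := (ha k).add (hb k)
  zero_mem' _ := isWeightedHomogeneous_zero _ _ _
  smul_mem' c _ hx k := (weightedHomogeneousSubmodule K _ _).smul_mem c (hx k)

variable {κ : Type} {s : κ → ℤ}

theorem mem_freePiece {j : ℤ} {f : κ →₀ MvPolynomial σ K} :
    f ∈ freePiece s j ↔ ∀ k, IsWeightedHomogeneous (1 : σ → ℤ) (f k) (j - s k) :=
  Iff.rfl

theorem mem_freePiece_iff_forall_mem_zg {j : ℤ} {f : κ →₀ MvPolynomial σ K} :
    f ∈ freePiece s j ↔ ∀ k, f k ∈ zg (homogeneousSubmodule σ K) (j - s k) := by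
  simp only [zg_homogeneousSubmodule, mem_freePiece, mem_weightedHomogeneousSubmodule]

/-- The graded free module with generators of degrees `s`. -/
noncomputable abbrev free {κ : Type} (s : κ → ℤ) : GradedMod K σ where
  carrier := κ →₀ MvPolynomial σ K
  piece j := freePiece s j
  monomial_smul_mem i a q h k := by
    have hk := isWeightedHomogeneous_monomial_one_mul a (h k)
    rwa [sub_add_eq_add_sub] at hk

theorem single_mem_freePiece {b : MvPolynomial σ K} {i : ℤ}
    (hb : IsWeightedHomogeneous (1 : σ → ℤ) b i) (k : κ) :
    Finsupp.single k b ∈ freePiece s (i + s k) := by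
  classical
  intro k'
  rw [Finsupp.single_apply]
  split_ifs with h
  · rwa [← h, add_sub_cancel_right]
  · exact isWeightedHomogeneous_zero _ _ _

theorem mem_span_monomial_smul_single {j : ℤ} {f : κ →₀ MvPolynomial σ K}
    (hf : f ∈ freePiece s j) :
    f ∈ Submodule.span K {x | ∃ k, ∃ a : σ →₀ ℕ, (s k + (a.degree : ℕ) = j ∧ coeff a (f k) ≠ 0) ∧
      x = monomial a (1 : K) • Finsupp.single k (1 : MvPolynomial σ K)} := by
  suffices hsingle : ∀ k, Finsupp.single k (f k) ∈ Submodule.span K {x | ∃ k, ∃ a : σ →₀ ℕ,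
      (s k + (a.degree : ℕ) = j ∧ coeff a (f k) ≠ 0) ∧
        x = monomial a (1 : K) • Finsupp.single k (1 : MvPolynomial σ K)} by
    have hsum := Submodule.sum_mem _ fun k (_ : k ∈ f.support) => hsingle k
    rwa [show ∑ k ∈ f.support, Finsupp.single k (f k) = f from Finsupp.sum_single f] at hsum
  intro k
  have hmonomials : Finsupp.single k (f k) = ∑ a ∈ (f k).support,
      coeff a (f k) • monomial a (1 : K) • Finsupp.single k (1 : MvPolynomial σ K) := by
    conv_lhs => rw [(f k).as_sum]
    rw [← Finsupp.singleAddHom_apply, map_sum]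
    refine Finset.sum_congr rfl fun a _ => ?_
    rw [Finsupp.singleAddHom_apply, Finsupp.smul_single, Finsupp.smul_single, smul_eq_mul, mul_one,
      smul_monomial, smul_eq_mul, mul_one]
  rw [hmonomials]
  refine Submodule.sum_mem _ fun a ha => Submodule.smul_mem _ _ (Submodule.subset_span ?_)
  have hcoeff := mem_support_iff.1 ha
  have hdegree := hf k hcoeff
  rw [weight_one_eq_degree] at hdegree
  exact ⟨k, a, ⟨by lia, hcoeff⟩, rfl⟩

/-- The standard basis of the free module. -/
noncomputable def freeBasis (s : κ → ℤ) : HomogeneousBasis (free (K := K) (σ := σ) s) s where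
  basis k := (Finsupp.single k (1 : MvPolynomial σ K) : κ →₀ MvPolynomial σ K)
  linearIndependent := by
    simpa using (Finsupp.basisSingleOne (R := MvPolynomial σ K) (ι := κ)).linearIndependent
  mem k := by simpa using single_mem_freePiece (s := s) (isWeightedHomogeneous_one K _) k
  mem_span j q hq := by
    refine Submodule.span_mono ?_ (mem_span_monomial_smul_single hq)
    rintro _ ⟨k, a, ⟨h, _⟩, rfl⟩
    exact ⟨k, a, h, rfl⟩

/-- The homogeneous components of an element of a piece are determined: a finite sum of homogeneous
elements lying in degree `j` equals its degree `j` summand. -/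
def HasSeparatedPieces (E : GradedMod K σ) : Prop :=
  ∀ x : ℤ →₀ E.carrier, (∀ i, x i ∈ E.piece i) → ∀ j, x.sum (fun _ y => y) ∈ E.piece j →
    x.sum (fun _ y => y) = x j

theorem weightedHomogeneousComponent_sum {T : Finset ℤ} {b : ℤ → MvPolynomial σ K} {c : ℤ}
    (hb : ∀ i, IsWeightedHomogeneous (1 : σ → ℤ) (b i) (i - c)) {j : ℤ} (hj : j ∉ T → b j = 0) :
    weightedHomogeneousComponent (1 : σ → ℤ) (j - c) (∑ i ∈ T, b i) = b j := by
  rw [map_sum, Finset.sum_eq_single j]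
  · exact (hb j).weightedHomogeneousComponent_same
  · exact fun i _ hi => (hb i).weightedHomogeneousComponent_ne _ (by lia)
  · exact fun h => by rw [hj h, map_zero]

theorem hasSeparatedPieces_free (s : κ → ℤ) :
    HasSeparatedPieces (free (K := K) (σ := σ) s) := by
  intro (x : ℤ →₀ (κ →₀ MvPolynomial σ K)) hx j hj
  refine Finsupp.ext fun k => ?_
  have hcomponent := weightedHomogeneousComponent_sum (T := x.support) (b := fun i => x i k)
    (fun i => hx i k) (j := j) (fun h => by rw [Finsupp.notMem_support_iff.1 h]; rfl)
  rw [← Finsupp.finsetSum_apply] at hcomponent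
  exact (hj k).weightedHomogeneousComponent_same.symm.trans hcomponent

theorem hasSeparatedPieces_quotient {J : Ideal (MvPolynomial σ K)}
    (hJ : J.IsHomogeneous (weightedHomogeneousSubmodule K (1 : σ → ℤ))) :
    HasSeparatedPieces (quotient J) := by
  intro x hx j hj
  choose b hb hbx using fun i => mem_quotPieces.1 (hx i)
  obtain ⟨c, hc, hcx⟩ := mem_quotPieces.1 hj
  have hdiff : c - ∑ i ∈ insert j x.support, b i ∈ J := by
    rw [← Ideal.Quotient.eq, hcx, map_sum, Finsupp.sum, Finset.sum_congr rfl fun i _ => hbx i]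
    exact Finset.sum_subset (Finset.subset_insert _ _) fun i _ hi => Finsupp.notMem_support_iff.1 hi
  have hcomponent := weightedHomogeneousComponent_mem_of_mem K (1 : σ → ℤ) hJ hdiff j
  have hsum := weightedHomogeneousComponent_sum (T := insert j x.support) (b := b) (c := 0)
    (by simpa using hb) (j := j) (by simp)
  rw [sub_zero] at hsum
  rw [map_sub, hc.weightedHomogeneousComponent_same, hsum, ← Ideal.Quotient.eq, hcx, hbx]
    at hcomponent
  exact hcomponent

theorem mem_iSup_freePiece (s : κ → ℤ) (f : κ →₀ MvPolynomial σ K) : f ∈ ⨆ j, freePiece s j := by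
  induction f using Finsupp.induction_linear with
  | zero => exact zero_mem _
  | add f g hf hg => exact add_mem hf hg
  | single k b =>
    classical
    rw [← DirectSum.sum_support_decompose (weightedHomogeneousSubmodule K (1 : σ → ℤ)) b,
      ← Finsupp.singleAddHom_apply, map_sum]
    refine Submodule.sum_mem _ fun i _ => Submodule.mem_iSup_of_mem (i + s k) ?_
    exact single_mem_freePiece
      (DirectSum.decompose (weightedHomogeneousSubmodule K (1 : σ → ℤ)) b i).property k

theorem exists_homogeneous_lift {E : GradedMod K σ} (hE : HasSeparatedPieces E)
    (φ : (free (K := K) (σ := σ) s).Hom E) (f : κ →₀ MvPolynomial σ K) {j : ℤ}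
    (h : φ.toLinearMap f ∈ E.piece j) :
    ∃ f' ∈ freePiece s j, φ.toLinearMap f' = φ.toLinearMap f := by
  obtain ⟨x, hx, hsum⟩ := (Submodule.mem_iSup_iff_exists_finsupp _ _).1 (mem_iSup_freePiece s f)
  refine ⟨x j, hx j, ?_⟩
  have himage : (x.mapRange φ.toLinearMap (map_zero _)).sum (fun _ y => y) = φ.toLinearMap f := by
    rw [Finsupp.sum_mapRange_index (by simp), ← hsum, Finsupp.sum, Finsupp.sum]
    exact (map_sum _ _ _).symm
  have hseparated :=
    hE (x.mapRange φ.toLinearMap (map_zero _)) (fun i => φ.map_mem _ _ (hx i)) j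
  rw [himage] at hseparated
  exact (hseparated h).symm

theorem irrel_le_augmentationIdeal : irrel (homogeneousSubmodule σ K) ≤ augmentationIdeal K σ := by
  rw [irrel, Ideal.span_le]
  intro b hb
  obtain ⟨n, hn⟩ := Set.mem_iUnion.1 hb
  exact ((mem_homogeneousSubmodule _ _).1 hn).coeff_eq_zero (by simp)

theorem apply_mem_of_mem_smul_top {𝔪 : Ideal (MvPolynomial σ K)} {f : κ →₀ MvPolynomial σ K}
    (hf : f ∈ 𝔪 • (⊤ : Submodule (MvPolynomial σ K) (κ →₀ MvPolynomial σ K))) (k : κ) :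
    f k ∈ 𝔪 := by
  refine Submodule.smul_induction_on hf (fun r hr n _ => ?_) (fun x y hx hy => ?_)
  · exact Ideal.mul_mem_right _ _ hr
  · exact add_mem hx hy

end GradedMod

end FreeResolutions

section Resolutions

open CategoryTheory MvPolynomial GradedMod

attribute [local instance] weightedGradedAlgebra

variable {K : Type} [Field K] {σ : Type} {J : Ideal (MvPolynomial σ K)}

/-- Minimal graded free resolutions of the quotient by `J`. -/
abbrev QuotientResolution (J : Ideal (MvPolynomial σ K)) : Type _ :=
  MinGradedFreeRes K (MvPolynomial σ K) (zg (homogeneousSubmodule σ K))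
    (irrel (homogeneousSubmodule σ K)) (MvPolynomial σ K ⧸ J)
    (quotPieces (homogeneousSubmodule σ K) J)

namespace QuotientResolution

variable (R : QuotientResolution J)

/-- The kernel of the map out of the `i`-th free module. -/
noncomputable def cycles : (i : ℕ) → Submodule (MvPolynomial σ K) (R.ι i →₀ MvPolynomial σ K)
  | 0 => LinearMap.ker R.ε
  | i + 1 => LinearMap.ker (R.d i)

theorem mem_cycles_iff : ∀ (i : ℕ) (f : R.ι i →₀ MvPolynomial σ K),
    f ∈ cycles R i ↔ ∃ g, R.d i g = f
  | 0, f => R.exact_ε f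
  | i + 1, f => R.exact_d i f

/-- The graded syzygy modules, starting with the resolved module itself. -/
noncomputable def syzygy : ℕ → GradedMod K σ
  | 0 => quotient J
  | i + 1 =>
    { carrier := R.ι i →₀ MvPolynomial σ K
      piece := fun j => freePiece (R.σ i) j ⊓ (cycles R i).restrictScalars K
      monomial_smul_mem := fun n a q h =>
        ⟨(free (R.σ i)).monomial_smul_mem n a q h.1, (cycles R i).smul_mem _ h.2⟩ }

/-- The graded free module of the resolution in homological degree `i`. -/
noncomputable abbrev term (i : ℕ) : GradedMod K σ := free (R.σ i)

/-- The inclusion of a syzygy module into the free module. -/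
noncomputable def inclusion (i : ℕ) : (syzygy R (i + 1)).Hom (term R i) where
  toLinearMap := (LinearMap.id : (R.ι i →₀ MvPolynomial σ K) →ₗ[MvPolynomial σ K] _)
  map_mem _ _ hq := hq.1

/-- The differential as a graded map. -/
noncomputable def differential (i : ℕ) : (term R (i + 1)).Hom (term R i) where
  toLinearMap := R.d i
  map_mem j q hq := mem_freePiece_iff_forall_mem_zg.2
    (R.graded_d i j q (mem_freePiece_iff_forall_mem_zg.1 hq))

/-- The cover of a syzygy module by the free module. -/
noncomputable def cover : (i : ℕ) → (term R i).Hom (syzygy R i)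
  | 0 =>
    { toLinearMap := R.ε
      map_mem := fun j q hq => R.graded_ε j q (mem_freePiece_iff_forall_mem_zg.1 hq) }
  | i + 1 =>
    { toLinearMap := R.d i
      map_mem := fun j q hq =>
        ⟨(differential R i).map_mem j q hq, (mem_cycles_iff R i _).2 ⟨q, rfl⟩⟩ }

theorem mem_cycles_iff_cover_eq_zero : ∀ (i : ℕ) (f : R.ι i →₀ MvPolynomial σ K),
    f ∈ cycles R i ↔ (cover R i).toLinearMap f = 0
  | 0, _ => Iff.rfl
  | _ + 1, _ => Iff.rfl

theorem cover_surjective (hJ : J.IsHomogeneous (weightedHomogeneousSubmodule K (1 : σ → ℤ)))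
    (j : ℤ) : ∀ (i : ℕ), ∀ q ∈ (syzygy R i).piece j,
      ∃ f ∈ freePiece (R.σ i) j, (cover R i).toLinearMap f = q
  | 0, q, hq => by
    obtain ⟨f, rfl⟩ := R.surj q
    exact exists_homogeneous_lift (hasSeparatedPieces_quotient hJ) (cover R 0) f hq
  | i + 1, q, hq => by
    obtain ⟨f, rfl⟩ := (mem_cycles_iff R i q).1 hq.2
    exact exists_homogeneous_lift (hasSeparatedPieces_free _) (differential R i) f hq.1

/-- The short exact sequence of consecutive syzygy modules. -/
noncomputable def syzygySeq (hJ : J.IsHomogeneous (weightedHomogeneousSubmodule K (1 : σ → ℤ)))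
    (i : ℕ) : ShortExactSeq (syzygy R (i + 1)) (term R i) (syzygy R i) where
  f := inclusion R i
  g := cover R i
  injective _ _ _ h := h
  comp_eq_zero _ q hq := (mem_cycles_iff_cover_eq_zero R i q).1 hq.2
  exact _ q hq h := ⟨q, ⟨hq, (mem_cycles_iff_cover_eq_zero R i q).2 h⟩, rfl⟩
  surjective j := cover_surjective R hJ j i

theorem inclusion_comp_residueField {i : ℕ} {j : ℤ}
    (φ : (term R i).toFunctor ⟶ (residueField K σ j).toFunctor) :
    (inclusion R i).toNatTrans ≫ φ = 0 := by
  ext n ⟨f, hf⟩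
  change R.ι i →₀ MvPolynomial σ K at f
  have hconst (k : R.ι i) : coeff 0 (f k) = 0 := by
    obtain ⟨g, rfl⟩ := (mem_cycles_iff R i f).1 hf.2
    exact irrel_le_augmentationIdeal (apply_mem_of_mem_smul_top (R.minimal i g) k)
  have hle : Submodule.span K {x | ∃ k, ∃ a : σ →₀ ℕ,
      (R.σ i k + (a.degree : ℕ) = n.degree ∧ coeff a (f k) ≠ 0) ∧
        x = monomial a (1 : K) • Finsupp.single k (1 : MvPolynomial σ K)} ≤
      (LinearMap.ker (φ.app n).hom).map ((term R i).piece n.degree).subtype := by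
    rw [Submodule.span_le]
    rintro _ ⟨k, a, ⟨hdegree, hcoeff⟩, rfl⟩
    refine ⟨(freeBasis (R.σ i)).pieceVec n.degree ⟨(k, a), hdegree⟩, ?_, rfl⟩
    refine (freeBasis (R.σ i)).app_pieceVec_residueField φ n ⟨(k, a), hdegree⟩ ?_
    rintro rfl
    exact hcoeff (hconst k)
  obtain ⟨y, hy, hyf⟩ := hle (mem_span_monomial_smul_single hf.1)
  obtain rfl : y = ⟨f, hf.1⟩ := Subtype.ext hyf
  exact hy

variable (hJ : J.IsHomogeneous (weightedHomogeneousSubmodule K (1 : σ → ℤ)))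

include hJ

theorem extVanishes_syzygy_zero_iff (i : ℕ) (j : ℤ) :
    ExtVanishes (syzygy R i) (residueField K σ j) 0 ↔ ∀ k, R.σ i k ≠ j := by
  constructor
  · rintro h k rfl
    obtain ⟨φ, hφ⟩ :=
      (freeBasis (K := K) (σ := σ) (R.σ i)).exists_natTrans_residueField_ne_zero k
    exact hφ ((syzygySeq R hJ i).natTrans_eq_zero φ (inclusion_comp_residueField R φ) h)
  · exact fun h => (syzygySeq R hJ i).extVanishes_right_zero
      ((freeBasis (R.σ i)).extVanishes_residueField_zero h)

theorem extVanishes_syzygy_succ_iff (n i : ℕ) (j : ℤ) :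
    ExtVanishes (syzygy R i) (residueField K σ j) (n + 1) ↔
      ExtVanishes (syzygy R (i + 1)) (residueField K σ j) n := by
  refine ⟨fun h => ?_, fun h =>
    (syzygySeq R hJ i).extVanishes_right ((freeBasis (R.σ i)).extVanishes_succ _ _) h⟩
  rcases n with _ | n
  · exact (syzygySeq R hJ i).extVanishes_left_zero (inclusion_comp_residueField R) h
  · exact (syzygySeq R hJ i).extVanishes_left ((freeBasis (R.σ i)).extVanishes_succ _ _) h

theorem extVanishes_syzygy_iff (n i : ℕ) (j : ℤ) :
    ExtVanishes (syzygy R i) (residueField K σ j) n ↔ ∀ k, R.σ (i + n) k ≠ j := by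
  induction n generalizing i with
  | zero => exact extVanishes_syzygy_zero_iff R hJ i j
  | succ n ih => rw [extVanishes_syzygy_succ_iff R hJ, ih, add_right_comm, ← add_assoc]

theorem extVanishes_quotient_iff (n : ℕ) (j : ℤ) :
    ExtVanishes (quotient J) (residueField K σ j) n ↔ ∀ k, R.σ n k ≠ j := by
  have h := extVanishes_syzygy_iff R hJ n 0 j
  rwa [zero_add] at h

theorem reg_eq {ρ : ℤ}
    (hupper : RegularityLE (quotient J) ρ)
    (hlower : ∃ i : ℕ, ¬ ExtVanishes (quotient J) (residueField K σ (ρ + i)) i) :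
    R.reg = ρ := by
  refine IsGreatest.csSup_eq ⟨?_, ?_⟩
  · obtain ⟨i, hi⟩ := hlower
    rw [extVanishes_quotient_iff R hJ] at hi
    push Not at hi
    obtain ⟨k, hk⟩ := hi
    exact ⟨i, k, by rw [hk, add_sub_cancel_right]⟩
  · rintro x ⟨i, k, rfl⟩
    by_contra h
    exact (extVanishes_quotient_iff R hJ i _).1 (hupper i (R.σ i k) (not_le.1 h)) k rfl

end QuotientResolution

end Resolutions

section WeightedPfaffian

open MvPolynomial

attribute [local instance] weightedGradedAlgebra

variable {K τ G : Type*} [Field K] [AddCommGroup G] {w : τ → G} {δ d : G}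

theorem isWeightedHomogeneous_pfaffian : ∀ {n : ℕ} {A : Matrix (Fin n) (Fin n) (MvPolynomial τ K)},
    (∀ i j, IsWeightedHomogeneous w (A i j) δ) →
      IsWeightedHomogeneous w (pfaffian n A) ((n / 2) • δ)
  | 0, _, _ => by rw [Nat.zero_div, zero_smul]; exact isWeightedHomogeneous_one _ _
  | 1, _, _ => isWeightedHomogeneous_zero _ _ _
  | n + 2, A, h => by
    rw [Nat.add_div_right n two_pos, succ_nsmul']
    refine Submodule.sum_mem (weightedHomogeneousSubmodule K w _) fun j _ =>
      IsWeightedHomogeneous.mul ?_ (isWeightedHomogeneous_pfaffian fun _ _ => h _ _)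
    rcases neg_one_pow_eq_or (MvPolynomial τ K) (j : ℕ) with hsign | hsign <;> rw [hsign]
    · rw [one_mul]; exact h _ _
    · rw [neg_one_mul]; exact (h _ _).neg

variable {ι : Type*} {M : Matrix ι ι (MvPolynomial τ K)}

section Entries

variable (hM : IsAlternating M) (hd : ∀ a b, IsWeightedHomogeneous w (M a b) δ)

include hM hd

theorem isWeightedHomogeneous_pf (l : List ι) :
    IsWeightedHomogeneous w (pf M l) ((l.length / 2) • δ) := by
  conv => enter [2]; rw [← List.ofFn_get l, ← pfaffian_submatrix hM]
  exact isWeightedHomogeneous_pfaffian fun _ _ => hd _ _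

variable [DecidableEq ι] {l : List ι} (hl : l.Nodup) {n : ℕ} (hn : l.length = 2 * n + 2)

include hl hn

theorem isWeightedHomogeneous_pfForm_single_single (a b : ι) :
    IsWeightedHomogeneous w (pfForm M l (Pi.single a 1) (Pi.single b 1)) (n • δ) := by
  have single_congr {c : ι} (hc : c ∉ l) (i : ι) (hi : i ∈ l) :
      (Pi.single c 1 : ι → MvPolynomial τ K) i = (0 : ι → MvPolynomial τ K) i :=
    Pi.single_eq_of_ne (ne_of_mem_of_not_mem hi hc) _
  by_cases ha : a ∈ l
  swap
  · rw [pfForm_congr (single_congr ha) fun _ _ => rfl, map_zero, LinearMap.zero_apply]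
    exact isWeightedHomogeneous_zero _ _ _
  by_cases hb : b ∈ l
  swap
  · rw [pfForm_congr (fun _ _ => rfl) (single_congr hb), map_zero]
    exact isWeightedHomogeneous_zero _ _ _
  obtain rfl | hab := eq_or_ne a b
  · rw [pfForm_self]
    exact isWeightedHomogeneous_zero _ _ _
  have hperm : l.Perm (a :: b :: (l.erase a).erase b) := (List.perm_cons_erase ha).trans
    (.cons a (List.perm_cons_erase ((List.mem_erase_of_ne hab.symm).2 hb)))
  have hlength := hperm.length_eq
  have hnodup := hperm.nodup_iff.1 hl
  simp only [List.length_cons] at hlength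
  rw [List.nodup_cons, List.nodup_cons] at hnodup
  have hpf := isWeightedHomogeneous_pf hM hd ((l.erase a).erase b)
  rw [show ((l.erase a).erase b).length / 2 = n by lia] at hpf
  rcases pfForm_perm (M := M) hperm with h | h <;> rw [h]
  · rw [pfForm_single_single hnodup.1 hnodup.2.1]; exact hpf.neg
  · rw [LinearMap.neg_apply, LinearMap.neg_apply, pfForm_single_single hnodup.1 hnodup.2.1, neg_neg]
    exact hpf

omit hM hd hl hn in
theorem pfForm_eq_sum [Fintype ι] (M : Matrix ι ι (MvPolynomial τ K)) (l : List ι)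
    (v x : ι → MvPolynomial τ K) : pfForm M l v x = ∑ b, x b * pfForm M l v (Pi.single b 1) := by
  conv_lhs => rw [pi_eq_sum_univ' x, map_sum]
  refine Finset.sum_congr rfl fun b _ => ?_
  rw [map_smul, smul_eq_mul]

variable [Finite ι] {v x : ι → MvPolynomial τ K} (hv : ∀ a, IsWeightedHomogeneous w (v a) d)

include hv

theorem isWeightedHomogeneous_pfForm_single (b : ι) :
    IsWeightedHomogeneous w (pfForm M l v (Pi.single b 1)) (d + n • δ) := by
  cases nonempty_fintype ι
  rw [pfForm_skew, pfForm_eq_sum]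
  exact IsWeightedHomogeneous.neg (Submodule.sum_mem (weightedHomogeneousSubmodule K w _)
    fun a _ => (hv a).mul (isWeightedHomogeneous_pfForm_single_single hM hd hl hn b a))

omit [DecidableEq ι] in
theorem weightedHomogeneousComponent_pfForm (x : ι → MvPolynomial τ K) (e : G) :
    weightedHomogeneousComponent w e (pfForm M l v x) =
      pfForm M l v fun b => weightedHomogeneousComponent w (e - (d + n • δ)) (x b) := by
  classical
  cases nonempty_fintype ι
  rw [pfForm_eq_sum, map_sum, pfForm_eq_sum]
  refine Finset.sum_congr rfl fun b _ => ?_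
  rw [mul_comm, weightedHomogeneousComponent_mul_of_left
    (isWeightedHomogeneous_pfForm_single hM hd hl hn hv b), mul_comm]

omit [DecidableEq ι] in
theorem isWeightedHomogeneous_pfForm {d' e : G} (hx : ∀ a, IsWeightedHomogeneous w (x a) d')
    (h : d' + (d + n • δ) = e) : IsWeightedHomogeneous w (pfForm M l v x) e := by
  classical
  cases nonempty_fintype ι
  rw [pfForm_eq_sum]
  exact Submodule.sum_mem (weightedHomogeneousSubmodule K w _) fun b _ =>
    isWeightedHomogeneous_mul_of_add_eq (hx b)
      (isWeightedHomogeneous_pfForm_single hM hd hl hn hv b) h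

end Entries

theorem weightedHomogeneousComponent_mem_rowSpan
    (hd : ∀ a b, IsWeightedHomogeneous w (M a b) δ) {l : List ι} {v : ι → MvPolynomial τ K}
    (hv : v ∈ rowSpan M l) (e : G) :
    (fun b => weightedHomogeneousComponent w e (v b)) ∈ rowSpan M l := by
  induction hv using Submodule.closure_induction with
  | zero =>
    simp only [Pi.zero_apply, map_zero]
    exact zero_mem _
  | add x y _ _ hx hy =>
    simp only [Pi.add_apply, map_add]
    exact add_mem hx hy
  | smul_mem c x h =>
    rcases h with ⟨a, ha, rfl⟩ | h
    · convert Submodule.smul_mem _ (weightedHomogeneousComponent w (e - δ) c) (row_mem_rowSpan ha)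
        using 1
      funext b
      rw [Pi.smul_apply, Pi.smul_apply, smul_eq_mul, mul_comm,
        weightedHomogeneousComponent_mul_of_left (hd a b), smul_eq_mul, mul_comm]
    · exact mem_rowSpan_of_forall_eq_zero fun i hi => by
        rw [Pi.smul_apply, h i hi, smul_zero, map_zero]

theorem exists_isWeightedHomogeneous_mul_eq {g a : MvPolynomial τ K} {e e' : G}
    (hg : IsWeightedHomogeneous w g d) (ha : a ∈ span {g}) (he : IsWeightedHomogeneous w a e)
    (h : d + e' = e) : ∃ b, IsWeightedHomogeneous w b e' ∧ a = g * b := by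
  obtain ⟨b, rfl⟩ := mem_span_singleton'.1 ha
  refine ⟨weightedHomogeneousComponent w e' b,
    weightedHomogeneousComponent_isWeightedHomogeneous _ _, ?_⟩
  rw [← sub_eq_of_eq_add' h.symm, ← weightedHomogeneousComponent_mul_of_left hg, mul_comm g b,
    he.weightedHomogeneousComponent_same]

end WeightedPfaffian

section WeightedSubstitution

open MvPolynomial

variable {K τ τ' G : Type*}

theorem weight_mapDomain [AddCommMonoid G] (w : τ' → G) (f : τ → τ') (a : τ →₀ ℕ) :
    Finsupp.weight w (a.mapDomain f) = Finsupp.weight (w ∘ f) a := by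
  simp only [Finsupp.weight_apply, Function.comp_apply]
  exact Finsupp.sum_mapDomain_index (fun _ => zero_smul _ _) fun _ _ _ => add_smul _ _ _

theorem isWeightedHomogeneous_rename_iff [CommSemiring K] [AddCommMonoid G] {w : τ' → G}
    {f : τ → τ'} (hf : Function.Injective f) {p : MvPolynomial τ K} {n : G} :
    IsWeightedHomogeneous w (rename f p) n ↔ IsWeightedHomogeneous (w ∘ f) p n := by
  refine ⟨fun h a ha => ?_, fun h a ha => ?_⟩
  · rw [← weight_mapDomain]
    exact h (by rwa [coeff_rename_mapDomain _ hf])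
  · obtain ⟨b, rfl, hb⟩ := coeff_rename_ne_zero _ _ _ ha
    rw [weight_mapDomain, h hb]

variable [CommSemiring K] {S : Type*} [CommSemiring S] {w : τ → ℕ}

theorem map_monomial_eq_pow_weight_mul {φ ψ : MvPolynomial τ K →+* S} {c : S}
    (hC : φ (C 1) = ψ (C 1)) (hX : ∀ i, φ (X i) = c ^ w i * ψ (X i)) (a : τ →₀ ℕ) :
    φ (monomial a 1) = c ^ Finsupp.weight w a * ψ (monomial a 1) := by
  induction a using Finsupp.induction_linear with
  | zero => rw [map_zero, pow_zero, one_mul]; exact hC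
  | add a b ha hb =>
    rw [← one_mul (1 : K), ← monomial_mul, map_mul, map_mul, ha, hb, map_add, pow_add]
    ring
  | single i n =>
    rw [← X_pow_eq_monomial, map_pow, map_pow, hX, Finsupp.weight_single, mul_pow, ← pow_mul,
      smul_eq_mul, mul_comm n]

theorem map_eq_pow_mul_of_isWeightedHomogeneous {φ ψ : MvPolynomial τ K →+* S} {c : S}
    (hC : ∀ a, φ (C a) = ψ (C a)) (hX : ∀ i, φ (X i) = c ^ w i * ψ (X i)) {m : ℕ}
    {p : MvPolynomial τ K} (hp : IsWeightedHomogeneous w p m) : φ p = c ^ m * ψ p := by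
  rw [p.as_sum, map_sum, map_sum, Finset.mul_sum]
  refine Finset.sum_congr rfl fun a ha => ?_
  rw [← mul_one (coeff a p), ← C_mul_monomial, map_mul, map_mul,
    map_monomial_eq_pow_weight_mul (hC 1) hX, hC, hp (mem_support_iff.1 ha)]
  ring

theorem map_mem_pow_of_isWeightedHomogeneous {φ : MvPolynomial τ K →+* S} {J : Ideal S}
    (hX : ∀ i, φ (X i) ∈ J ^ w i) {m : ℕ} {p : MvPolynomial τ K}
    (hp : IsWeightedHomogeneous w p m) : φ p ∈ J ^ m := by
  have monomial_mem (a : τ →₀ ℕ) : φ (monomial a 1) ∈ J ^ Finsupp.weight w a := by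
    induction a using Finsupp.induction_linear with
    | zero => simp
    | add a b ha hb =>
      rw [← one_mul (1 : K), ← monomial_mul, map_mul, map_add, pow_add]
      exact mul_mem_mul ha hb
    | single i n =>
      rw [← X_pow_eq_monomial, map_pow, Finsupp.weight_single, smul_eq_mul, mul_comm, pow_mul]
      exact pow_mem_pow (hX i) n
  rw [p.as_sum, map_sum]
  refine Submodule.sum_mem _ fun a ha => ?_
  rw [← mul_one (coeff a p), ← C_mul_monomial, map_mul, ← hp (mem_support_iff.1 ha)]
  exact mul_mem_left _ _ (monomial_mem a)

end WeightedSubstitution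

section AdjoinT

open MvPolynomial

variable {K σ : Type} [Field K]

/-- The polynomial ring `MvPolynomial σ K` with three further variables `T`, the left summand of the
index type. -/
abbrev AdjoinT (K σ : Type) [Field K] := MvPolynomial (Fin 3 ⊕ σ) K

namespace AdjoinT

/-- The inclusion of the polynomials not involving `T`. -/
noncomputable abbrev incl : MvPolynomial σ K →ₐ[K] AdjoinT K σ := rename Sum.inr

noncomputable instance : Algebra (MvPolynomial σ K) (AdjoinT K σ) :=
  (incl (K := K) (σ := σ)).toRingHom.toAlgebra

theorem smul_def (b : MvPolynomial σ K) (p : AdjoinT K σ) : b • p = incl b * p := rfl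

instance : IsScalarTower K (MvPolynomial σ K) (AdjoinT K σ) :=
  ⟨fun c b p => by rw [smul_def, smul_def, map_smul, smul_mul_assoc]⟩

/-- The weight function of the `T`-degree. -/
def tWeight (σ R : Type*) [Zero R] [One R] : Fin 3 ⊕ σ → R := Sum.elim 1 0

/-- The bidegree: every variable of `MvPolynomial σ K` has degree `(1, 0)` and every `T` has degree
`(r, 1)`. -/
def biweight (σ : Type*) (r : ℤ) : Fin 3 ⊕ σ → ℤ × ℤ := Sum.elim (fun _ => (r, 1)) fun _ => (1, 0)

theorem isWeightedHomogeneous_tWeight_natCast {p : AdjoinT K σ} {m : ℕ} :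
    IsWeightedHomogeneous (tWeight σ ℤ) p m ↔ IsWeightedHomogeneous (tWeight σ ℕ) p m := by
  refine forall₂_congr fun a _ => ?_
  rw [← Nat.cast_inj (R := ℤ), Finsupp.weight_apply, Finsupp.weight_apply, Finsupp.sum, Finsupp.sum,
    Nat.cast_sum]
  refine Eq.congr_left (Finset.sum_congr rfl fun i _ => ?_)
  rcases i with i | i <;> simp [tWeight]

theorem snd_weight_biweight (r : ℤ) (a : Fin 3 ⊕ σ →₀ ℕ) :
    (Finsupp.weight (biweight σ r) a).2 = Finsupp.weight (tWeight σ ℤ) a := by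
  rw [Finsupp.weight_apply, Finsupp.weight_apply, Finsupp.sum, Finsupp.sum, Prod.snd_sum]
  refine Finset.sum_congr rfl fun i _ => ?_
  rcases i with i | i <;> simp [tWeight, biweight]

theorem isWeightedHomogeneous_tWeight_of_biweight {r j m : ℤ} {p : AdjoinT K σ}
    (hp : IsWeightedHomogeneous (biweight σ r) p (j, m)) :
    IsWeightedHomogeneous (tWeight σ ℤ) p m := fun a ha => by
  rw [← snd_weight_biweight r, hp ha]

theorem isWeightedHomogeneous_biweight_incl {r j : ℤ} {b : MvPolynomial σ K} :
    IsWeightedHomogeneous (biweight σ r) (incl b) (j, 0) ↔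
      IsWeightedHomogeneous (1 : σ → ℤ) b j := by
  rw [isWeightedHomogeneous_rename_iff Sum.inr_injective]
  refine forall₂_congr fun a _ => ?_
  rw [Prod.ext_iff]
  simp [biweight, Finsupp.weight_apply, Finsupp.sum, Prod.fst_sum, Prod.snd_sum]

theorem isWeightedHomogeneous_tWeight_incl (b : MvPolynomial σ K) :
    IsWeightedHomogeneous (tWeight σ ℤ) (incl b) 0 := by
  rw [isWeightedHomogeneous_rename_iff Sum.inr_injective]
  intro a _
  simp [tWeight, Finsupp.weight_apply]

/-- A monomial in the variables `T`. -/
noncomputable def tMonomial (α : Fin 3 →₀ ℕ) : AdjoinT K σ := monomial (α.mapDomain Sum.inl) 1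

theorem weight_biweight (r : ℤ) (α : Fin 3 →₀ ℕ) (x : σ →₀ ℕ) :
    Finsupp.weight (biweight σ r) (α.mapDomain Sum.inl + x.mapDomain Sum.inr) =
      ((x.degree : ℕ) + r * (α.degree : ℕ), ((α.degree : ℕ) : ℤ)) := by
  rw [map_add, weight_mapDomain, weight_mapDomain]
  simp [biweight, Finsupp.weight_apply, Finsupp.sum, Prod.ext_iff, Prod.fst_sum, Prod.snd_sum,
    Finsupp.degree_apply, Finset.mul_sum, mul_comm, add_comm]

theorem isWeightedHomogeneous_tMonomial (r : ℤ) (α : Fin 3 →₀ ℕ) :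
    IsWeightedHomogeneous (biweight σ r) (tMonomial α : AdjoinT K σ)
      (r * (α.degree : ℕ), ((α.degree : ℕ) : ℤ)) := by
  refine isWeightedHomogeneous_monomial _ _ _ ?_
  simpa using weight_biweight r α (0 : σ →₀ ℕ)

theorem exists_eq_mapDomain_add_mapDomain (a : Fin 3 ⊕ σ →₀ ℕ) :
    ∃ (α : Fin 3 →₀ ℕ) (x : σ →₀ ℕ), a = α.mapDomain Sum.inl + x.mapDomain Sum.inr := by
  induction a using Finsupp.induction_linear with
  | zero => exact ⟨0, 0, by simp⟩
  | add a b ha hb =>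
    obtain ⟨α, x, rfl⟩ := ha
    obtain ⟨β, y, rfl⟩ := hb
    exact ⟨α + β, x + y, by rw [Finsupp.mapDomain_add, Finsupp.mapDomain_add]; abel⟩
  | single i n =>
    rcases i with i | i
    · exact ⟨Finsupp.single i n, 0, by simp⟩
    · exact ⟨0, Finsupp.single i n, by simp⟩

theorem sumRingEquiv_incl (b : MvPolynomial σ K) : sumRingEquiv K (Fin 3) σ (incl b) = C b := by
  have hcomp :
      (sumRingEquiv K (Fin 3) σ).toRingHom.comp (incl (K := K) (σ := σ)).toRingHom = C := by
    apply MvPolynomial.ringHom_ext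
    · intro r; simp
    · intro i; simp
  exact RingHom.congr_fun hcomp b

theorem sumRingEquiv_tMonomial (α : Fin 3 →₀ ℕ) :
    sumRingEquiv K (Fin 3) σ (tMonomial α) = monomial α 1 := by
  have hcomp :
      (sumRingEquiv K (Fin 3) σ).toRingHom.comp
        (rename Sum.inl : _ →ₐ[K] AdjoinT K σ).toRingHom = MvPolynomial.map C := by
    apply MvPolynomial.ringHom_ext
    · intro r; simp
    · intro i; simp
  have h := RingHom.congr_fun hcomp (monomial α (1 : K))
  rw [map_monomial, C_1] at h
  rw [tMonomial, ← rename_monomial]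
  exact h

/-- Regarding elements of `AdjoinT K σ` as polynomials in `T`. -/
noncomputable def iterate : AdjoinT K σ →ₗ[MvPolynomial σ K] MvPolynomial (Fin 3) (MvPolynomial σ K)
    where
  toFun := sumRingEquiv K (Fin 3) σ
  map_add' := map_add _
  map_smul' b p := by rw [smul_def, map_mul, sumRingEquiv_incl, RingHom.id_apply, smul_eq_C_mul]

theorem linearIndependent_tMonomial :
    LinearIndependent (MvPolynomial σ K) (tMonomial : (Fin 3 →₀ ℕ) → AdjoinT K σ) := by
  apply LinearIndependent.of_comp iterate
  have hcomp : iterate ∘ (tMonomial : (Fin 3 →₀ ℕ) → AdjoinT K σ) =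
      basisMonomials (Fin 3) (MvPolynomial σ K) := by
    rw [coe_basisMonomials]
    exact funext sumRingEquiv_tMonomial
  rw [hcomp]
  exact (basisMonomials (Fin 3) (MvPolynomial σ K)).linearIndependent

end AdjoinT

end AdjoinT

namespace GradedMod

section HomogeneousBases

open MvPolynomial AdjoinT

variable {K σ : Type} [Field K]

/-- The part of `T`-degree `m` of `AdjoinT K σ`, with `1` in degree `d` and every `T` of
degree `r`. -/
noncomputable abbrev tComponent (r d m : ℤ) : GradedMod K σ where
  carrier := AdjoinT K σ
  piece j := weightedHomogeneousSubmodule K (biweight σ r) (j - d, m)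
  monomial_smul_mem i a q h := isWeightedHomogeneous_mul_of_add_eq
    (isWeightedHomogeneous_biweight_incl.2 (isWeightedHomogeneous_monomial_one a)) h
    (by simp only [Prod.mk_add_mk]; ring_nf)

/-- The basis of `tComponent r d m` consisting of the monomials in `T`. -/
noncomputable def tComponentBasis (r d m : ℤ) :
    HomogeneousBasis (tComponent (K := K) (σ := σ) r d m)
      (κ := {α : Fin 3 →₀ ℕ // ((α.degree : ℕ) : ℤ) = m}) (fun _ => d + r * m) where
  basis α := (tMonomial α.1 : AdjoinT K σ)
  linearIndependent := linearIndependent_tMonomial.comp _ Subtype.val_injective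
  mem α := by
    have h := isWeightedHomogeneous_tMonomial (K := K) (σ := σ) r α.1
    rw [α.2] at h
    change IsWeightedHomogeneous (biweight σ r) _ (_, _)
    rwa [add_sub_cancel_left]
  mem_span j (p : AdjoinT K σ) hp := by
    rw [p.as_sum]
    refine Submodule.sum_mem _ fun a ha => ?_
    have hweight := hp (mem_support_iff.1 ha)
    obtain ⟨α, x, rfl⟩ := exists_eq_mapDomain_add_mapDomain a
    rw [weight_biweight, Prod.mk.injEq] at hweight
    have hmonomial : monomial (α.mapDomain Sum.inl + x.mapDomain Sum.inr) (1 : K) =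
        monomial x (1 : K) • (tMonomial α : AdjoinT K σ) := by
      rw [smul_def, rename_monomial, tMonomial, monomial_mul, one_mul, add_comm]
    rw [← mul_one (coeff _ p), ← smul_eq_mul (coeff _ p), ← smul_monomial, hmonomial]
    refine Submodule.smul_mem _ _ (Submodule.subset_span ⟨⟨α, hweight.2⟩, x, ?_, rfl⟩)
    rw [← hweight.2]
    linarith [hweight.1]

theorem not_extVanishes_tComponent {r d m j : ℤ} (hm : 0 ≤ m) (hj : j = d + r * m) :
    ¬ExtVanishes (tComponent (K := K) (σ := σ) r d m) (residueField K σ j) 0 := by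
  subst hj
  exact (tComponentBasis r d m).not_extVanishes_residueField_zero
    ⟨Finsupp.single 0 m.toNat, by rw [Finsupp.degree_single, Int.toNat_of_nonneg hm]⟩

/-- Families of elements of graded modules. -/
noncomputable abbrev pi {ζ : Type} (A : ζ → GradedMod K σ) : GradedMod K σ where
  carrier := ∀ z, (A z).carrier
  piece j := Submodule.pi Set.univ fun z => (A z).piece j
  monomial_smul_mem i a q h z _ := (A z).monomial_smul_mem i a (q z) (h z trivial)

/-- The basis of the module of families induced by bases of its factors. -/
noncomputable def HomogeneousBasis.pi {ζ κ : Type} [Fintype ζ] [DecidableEq ζ]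
    {A : ζ → GradedMod K σ} {s : ζ → κ → ℤ} (h : ∀ z, HomogeneousBasis (A z) (s z)) :
    HomogeneousBasis (pi A) (κ := Σ _ : ζ, κ) (fun x => s x.1 x.2) where
  basis x := (Pi.single x.1 ((h x.1).basis x.2) : ∀ z, (A z).carrier)
  linearIndependent := Pi.linearIndependent_single (fun z => (h z).basis)
    fun z => (h z).linearIndependent
  mem x z _ := by
    obtain rfl | hz := eq_or_ne z x.1
    · rw [Pi.single_eq_same]; exact (h x.1).mem x.2
    · rw [Pi.single_eq_of_ne hz]; exact zero_mem _
  mem_span j v hv := by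
    rw [← Finset.univ_sum_single v]
    refine Submodule.sum_mem _ fun z _ => ?_
    have hz := Submodule.mem_map_of_mem (f := LinearMap.single K (fun z => (A z).carrier) z)
      ((h z).mem_span j (v z) (hv z trivial))
    rw [Submodule.map_span] at hz
    refine Submodule.span_mono ?_ hz
    rintro _ ⟨_, ⟨k, a, hk, rfl⟩, rfl⟩
    exact ⟨⟨z, k⟩, a, hk, Pi.single_smul _ _ _⟩

end HomogeneousBases

section Image

variable {K σ : Type} [Field K] {A B : GradedMod K σ} {Q : Type} [AddCommGroup Q]
  [Module (MvPolynomial σ K) Q] [Module K Q] [IsScalarTower K (MvPolynomial σ K) Q]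

/-- The target of a linear map, graded by the images of the pieces of the source. -/
noncomputable abbrev map (A : GradedMod K σ) (f : A.carrier →ₗ[MvPolynomial σ K] Q) :
    GradedMod K σ where
  carrier := Q
  piece j := (A.piece j).map (f.restrictScalars K)
  monomial_smul_mem i a q h := by
    obtain ⟨x, hx, rfl⟩ := h
    exact ⟨_, A.monomial_smul_mem i a x hx, map_smul f _ _⟩

/-- A graded map and the cokernel of its restriction to the pieces form a short exact sequence. -/
noncomputable def ShortExactSeq.ofMap (f : A.carrier →ₗ[MvPolynomial σ K] Q) (φ : B.Hom A)
    (injective : ∀ j, ∀ q ∈ B.piece j, φ.toLinearMap q = 0 → q = 0)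
    (comp_eq_zero : ∀ j, ∀ q ∈ B.piece j, f (φ.toLinearMap q) = 0)
    (exact : ∀ j, ∀ q ∈ A.piece j, f q = 0 → ∃ b ∈ B.piece j, φ.toLinearMap b = q) :
    ShortExactSeq B A (A.map f) where
  f := φ
  g := ⟨f, fun _ q hq => ⟨q, hq, rfl⟩⟩
  injective := injective
  comp_eq_zero := comp_eq_zero
  exact := exact
  surjective _ _ hq := hq

end Image

end GradedMod

section PairingIdeal

open MvPolynomial

variable {K τ G ι : Type*} [Field K] [AddCommGroup G] [Finite ι] {w : τ → G} {δ d e : G}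
  {M : Matrix ι ι (MvPolynomial τ K)} {l : List ι} {n : ℕ} {u : ι → MvPolynomial τ K}
  {F : MvPolynomial τ K}

theorem exists_isWeightedHomogeneous_of_mem_pairingIdeal {e₁ e₂ : G} (hM : IsAlternating M)
    (hd : ∀ a b, IsWeightedHomogeneous w (M a b) δ) (hl : l.Nodup) (hn : l.length = 2 * n + 2)
    (hu : ∀ a, IsWeightedHomogeneous w (u a) d) (hF : IsWeightedHomogeneous w F e)
    (h : F ∈ pairingIdeal (pfForm M l) (pf M l) u) (h₁ : (n + 1) • δ + e₁ = e)
    (h₂ : d + n • δ + e₂ = e) :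
    ∃ (x : MvPolynomial τ K) (v : ι → MvPolynomial τ K), IsWeightedHomogeneous w x e₁ ∧
      (∀ b, IsWeightedHomogeneous w (v b) e₂) ∧ F = pf M l * x + pfForm M l u v := by
  obtain rfl := eq_sub_of_add_eq' h₁
  obtain rfl := eq_sub_of_add_eq' h₂
  obtain ⟨v, hv⟩ := mem_pairingIdeal.1 h
  obtain ⟨x, hx⟩ := mem_span_singleton'.1 hv
  have hpf := isWeightedHomogeneous_pf hM hd l
  rw [hn, show (2 * n + 2) / 2 = n + 1 by lia] at hpf
  refine ⟨_, _, weightedHomogeneousComponent_isWeightedHomogeneous _ x,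
    fun b => weightedHomogeneousComponent_isWeightedHomogeneous _ (v b), ?_⟩
  rw [← weightedHomogeneousComponent_mul_of_left hpf,
    ← weightedHomogeneousComponent_pfForm hM hd hl hn hu, ← map_add, mul_comm, hx, sub_add_cancel,
    hF.weightedHomogeneousComponent_same]

end PairingIdeal

section SupPow

variable {S : Type*} [CommRing S] {J : Ideal S} {g : S}

theorem sup_span_singleton_pow_succ_le : ∀ m : ℕ,
    (J ⊔ span {g}) ^ (m + 1) ≤ J ^ (m + 1) ⊔ (J ⊔ span {g}) ^ m * span {g}
  | 0 => by simp
  | m + 1 => by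
    rw [pow_succ _ (m + 1), Ideal.mul_sup]
    refine sup_le ((mul_mono_left (sup_span_singleton_pow_succ_le m)).trans ?_) le_sup_right
    rw [Ideal.sup_mul, ← pow_succ, mul_right_comm, pow_succ _ m]
    exact sup_le_sup le_rfl (mul_mono_left (mul_mono_right le_sup_left))

theorem exists_eq_add_mul_of_mem_sup_span_singleton_pow_succ {m : ℕ} {x : S}
    (hx : x ∈ (J ⊔ span {g}) ^ (m + 1)) :
    ∃ j ∈ J ^ (m + 1), ∃ i ∈ (J ⊔ span {g}) ^ m, x = j + g * i := by
  obtain ⟨j, hj, y, hy, rfl⟩ := Submodule.mem_sup.1 (sup_span_singleton_pow_succ_le m hx)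
  obtain ⟨i, hi, rfl⟩ := mem_mul_span_singleton.1 hy
  exact ⟨j, hj, i, hi, by rw [mul_comm i]⟩

end SupPow

namespace AdjoinT

open MvPolynomial

variable {K σ : Type} [Field K] (f : Fin 3 → MvPolynomial σ K)

/-- The substitution of `f` for the variables `T`. -/
noncomputable def specialize : AdjoinT K σ →ₐ[MvPolynomial σ K] MvPolynomial σ K where
  toRingHom := (aeval (Sum.elim f X) : AdjoinT K σ →ₐ[K] MvPolynomial σ K)
  commutes' b := (aeval_rename _ _ _).trans (aeval_X_left_apply b)

theorem specialize_incl (b : MvPolynomial σ K) : specialize f (incl b) = b :=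
  (specialize f).commutes b

theorem specialize_X_inl (i : Fin 3) : specialize f (X (Sum.inl i)) = f i :=
  aeval_X _ _

theorem specialize_X_inr (i : σ) : specialize f (X (Sum.inr i)) = X i :=
  aeval_X _ _

theorem specialize_C (a : K) : specialize f (C a) = C a :=
  aeval_C _ _

variable {f}

theorem specialize_mem_pow {J : Ideal (MvPolynomial σ K)} (hf : ∀ i, f i ∈ J) {m : ℕ}
    {F : AdjoinT K σ} (hF : IsWeightedHomogeneous (tWeight σ ℤ) F m) : specialize f F ∈ J ^ m := by
  refine map_mem_pow_of_isWeightedHomogeneous (φ := (specialize f).toRingHom) ?_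
    (isWeightedHomogeneous_tWeight_natCast.1 hF)
  rintro (i | i)
  · simpa [tWeight, specialize_X_inl] using hf i
  · simp [tWeight]

theorem isWeightedHomogeneous_specialize {r : ℤ}
    (hf : ∀ i, IsWeightedHomogeneous (1 : σ → ℤ) (f i) r) {F : AdjoinT K σ} {k : ℤ × ℤ}
    (hF : IsWeightedHomogeneous (biweight σ r) F k) :
    IsWeightedHomogeneous (1 : σ → ℤ) (specialize f F) k.1 := by
  have monomial_mem (a : Fin 3 ⊕ σ →₀ ℕ) : IsWeightedHomogeneous (1 : σ → ℤ)
      (specialize f (monomial a 1)) (Finsupp.weight (biweight σ r) a).1 := by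
    induction a using Finsupp.induction_linear with
    | zero => simpa using isWeightedHomogeneous_one K (1 : σ → ℤ)
    | add a b ha hb =>
      rw [← one_mul (1 : K), ← monomial_mul, map_mul, map_add]
      exact ha.mul hb
    | single i n =>
      rw [← X_pow_eq_monomial, map_pow, Finsupp.weight_single, Prod.smul_fst]
      refine IsWeightedHomogeneous.pow ?_ n
      rcases i with i | i
      · rw [specialize_X_inl]; exact hf i
      · rw [specialize_X_inr]; exact isWeightedHomogeneous_X K _ i
  rw [F.as_sum, map_sum]
  refine Submodule.sum_mem (weightedHomogeneousSubmodule K _ _) fun a ha => ?_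
  rw [← mul_one (coeff a F), ← smul_eq_mul (coeff a F), ← smul_monomial,
    ← AlgHom.restrictScalars_apply K, map_smul, ← hF (mem_support_iff.1 ha)]
  exact Submodule.smul_mem _ _ (monomial_mem a)

theorem weightedHomogeneousComponent_specialize {r : ℤ}
    (hf : ∀ i, IsWeightedHomogeneous (1 : σ → ℤ) (f i) r) {F : AdjoinT K σ} {m : ℤ}
    (hF : IsWeightedHomogeneous (tWeight σ ℤ) F m) (j : ℤ) :
    weightedHomogeneousComponent (1 : σ → ℤ) j (specialize f F) =
      specialize f (weightedHomogeneousComponent (biweight σ r) (j, m) F) := by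
  conv_lhs => rw [F.as_sum, map_sum, map_sum]
  conv_rhs => rw [F.as_sum, map_sum, map_sum]
  refine Finset.sum_congr rfl fun a ha => ?_
  have hsnd : (Finsupp.weight (biweight σ r) a).2 = m :=
    (snd_weight_biweight r a).trans (hF (mem_support_iff.1 ha))
  have hmonomial := isWeightedHomogeneous_monomial (biweight σ r) a (coeff a F) rfl
  have hspecialize := isWeightedHomogeneous_specialize hf hmonomial
  by_cases hj : (Finsupp.weight (biweight σ r) a).1 = j
  · subst hj hsnd
    rw [hspecialize.weightedHomogeneousComponent_same, hmonomial.weightedHomogeneousComponent_same]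
  · rw [hspecialize.weightedHomogeneousComponent_ne _ (Ne.symm hj),
      hmonomial.weightedHomogeneousComponent_ne _ fun h => hj (congrArg Prod.fst h).symm, map_zero]

theorem exists_specialize_eq_of_mem_span_pow : ∀ {m : ℕ} {b : MvPolynomial σ K},
    b ∈ span (Set.range f) ^ m →
      ∃ F : AdjoinT K σ, IsWeightedHomogeneous (tWeight σ ℤ) F m ∧ specialize f F = b
  | 0, b, _ => ⟨incl b, isWeightedHomogeneous_tWeight_incl b, specialize_incl f b⟩
  | m + 1, b, hb => by
    rw [pow_succ'] at hb
    induction hb using Submodule.mul_induction_on' with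
    | mem_mul_mem a ha b hb =>
      obtain ⟨F, hF, rfl⟩ := exists_specialize_eq_of_mem_span_pow hb
      obtain ⟨c, rfl⟩ := Ideal.mem_span_range_iff_exists_fun.1 ha
      refine ⟨(∑ i, incl (c i) * X (Sum.inl i)) * F, ?_, ?_⟩
      · refine isWeightedHomogeneous_mul_of_add_eq (i := 1) ?_ hF (by push_cast; ring)
        refine Submodule.sum_mem (weightedHomogeneousSubmodule K _ _) fun i _ => ?_
        exact isWeightedHomogeneous_mul_of_add_eq (isWeightedHomogeneous_tWeight_incl (c i))
          (isWeightedHomogeneous_X K _ _) (zero_add _)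
      · simp only [map_mul, map_sum, specialize_incl, specialize_X_inl]
    | add x _ y _ hx hy =>
      obtain ⟨F, hF, rfl⟩ := hx
      obtain ⟨F', hF', rfl⟩ := hy
      exact ⟨F + F', hF.add hF', map_add _ _ _⟩

theorem pow_mul_sub_pow_mul_specialize_mem {L : Ideal (AdjoinT K σ)} {p t : AdjoinT K σ}
    (h : ∀ i, p * X (Sum.inl i) - t * incl (f i) ∈ L) {m : ℕ} {F : AdjoinT K σ}
    (hF : IsWeightedHomogeneous (tWeight σ ℤ) F m) :
    p ^ m * F - t ^ m * incl (specialize f F) ∈ L := by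
  rw [isWeightedHomogeneous_tWeight_natCast] at hF
  let mk : AdjoinT K σ →+* AdjoinT K σ ⧸ L := Ideal.Quotient.mk L
  -- Substituting `p * T i ≡ t * f i` for `T i` in `F` yields both `p ^ m * F(T)` and
  -- `t ^ m * F(f)`.
  let φ : AdjoinT K σ →+* AdjoinT K σ ⧸ L := eval₂Hom (mk.comp C)
    (Sum.elim (fun i => mk (p * X (Sum.inl i))) fun i => mk (X (Sum.inr i)))
  let ψ : AdjoinT K σ →+* AdjoinT K σ ⧸ L :=
    mk.comp ((incl (K := K) (σ := σ)).toRingHom.comp (specialize f).toRingHom)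
  have eq_pow_mul_mk : φ F = mk p ^ m * mk F := by
    refine map_eq_pow_mul_of_isWeightedHomogeneous (fun a => ?_) ?_ hF
    · simp [φ]
    · rintro (i | i) <;> simp [φ, tWeight]
  have eq_pow_mul_specialize : φ F = mk t ^ m * ψ F := by
    refine map_eq_pow_mul_of_isWeightedHomogeneous (fun a => ?_) ?_ hF
    · simp [φ, ψ, specialize_C]
    · rintro (i | i)
      · simpa [φ, ψ, tWeight, specialize_X_inl] using Ideal.Quotient.eq.2 (h i)
      · simp [φ, ψ, tWeight, specialize_X_inr]
  refine Ideal.Quotient.eq.1 ?_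
  rw [map_mul, map_mul, map_pow, map_pow]
  exact eq_pow_mul_mk.symm.trans eq_pow_mul_specialize

theorem mem_span_singleton_of_incl_mem {a g : MvPolynomial σ K} (h : incl a ∈ span {incl g}) :
    a ∈ span {g} := by
  obtain ⟨q, hq⟩ := mem_span_singleton'.1 h
  have hspecialize := congrArg (specialize fun _ => 0) hq
  rw [map_mul, specialize_incl, specialize_incl] at hspecialize
  exact mem_span_singleton'.2 ⟨_, hspecialize⟩

end AdjoinT

section LinearBorder

open MvPolynomial AdjoinT

variable {K σ ι : Type} [Field K] {M : Matrix ι ι (AdjoinT K σ)}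

/-- A generic border over `AdjoinT K σ` whose matrix has linear forms not involving `T` as entries.
The core Pfaffian and the border Pfaffians are then polynomials `g` and `f i` not involving `T`, and
the ideal of the paper is generated by all of them. -/
structure LinearBorder (M : Matrix ι ι (AdjoinT K σ)) extends GenericBorder M where
  entry_linear : ∀ a b, ∃ x, IsWeightedHomogeneous (1 : σ → ℤ) x 1 ∧ incl x = M a b
  T_eq : ∀ i, T i = X (Sum.inl i)
  g : MvPolynomial σ K
  incl_g : incl g = toGenericBorder.corePf
  f : Fin 3 → MvPolynomial σ K
  incl_f : ∀ i, incl (f i) = toGenericBorder.borderPf i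

namespace LinearBorder

variable (𝒯 : LinearBorder M)

/-- Half the number of core indices, minus one. -/
def n : ℕ := 𝒯.l.length / 2

/-- The ideal generated by the border Pfaffians. -/
noncomputable def borderIdeal : Ideal (MvPolynomial σ K) := span (Set.range 𝒯.f)

/-- The ideal generated by the border Pfaffians and the core Pfaffian. -/
noncomputable def ideal : Ideal (MvPolynomial σ K) := 𝒯.borderIdeal ⊔ span {𝒯.g}

variable {𝒯}

theorem specialize_corePf : specialize 𝒯.f (pf M 𝒯.core) = 𝒯.g := by
  rw [← specialize_incl 𝒯.f 𝒯.g, 𝒯.incl_g]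

theorem length_core : 𝒯.core.length = 2 * 𝒯.n + 2 := by
  have := Nat.two_mul_div_two_of_even 𝒯.even_length
  simp [GenericBorder.core, n, this]

theorem nodup_core : 𝒯.core.Nodup := (𝒯.indepOn 0).tail.imp 𝒯.ne

section Degrees

theorem isWeightedHomogeneous_entry (𝒯 : LinearBorder M) (ρ : ℤ) (a b : ι) :
    IsWeightedHomogeneous (biweight σ ρ) (M a b) (1, 0) := by
  obtain ⟨x, hx, hxM⟩ := 𝒯.entry_linear a b
  rw [← hxM]
  exact isWeightedHomogeneous_biweight_incl.2 hx

theorem isWeightedHomogeneous_genericRow (ρ : ℤ) (a : ι) :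
    IsWeightedHomogeneous (biweight σ ρ) (𝒯.genericRow a) (ρ + 1, 1) := by
  have hsummand (i : Fin 3) :
      IsWeightedHomogeneous (biweight σ ρ) (𝒯.T i * 𝒯.row i a) (ρ + 1, 1) := by
    rw [𝒯.T_eq]
    exact (isWeightedHomogeneous_X K (biweight σ ρ) (Sum.inl i)).mul
      (𝒯.isWeightedHomogeneous_entry ρ _ a)
  exact ((hsummand 0).add (hsummand 1)).add (hsummand 2)

theorem isWeightedHomogeneous_corePf (ρ : ℤ) :
    IsWeightedHomogeneous (biweight σ ρ) 𝒯.corePf ((𝒯.n : ℤ) + 1, 0) := by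
  have h := isWeightedHomogeneous_pf 𝒯.isAlternating (𝒯.isWeightedHomogeneous_entry ρ) 𝒯.core
  rw [𝒯.length_core, show (2 * 𝒯.n + 2) / 2 = 𝒯.n + 1 by lia] at h
  simpa using h

theorem isWeightedHomogeneous_g : IsWeightedHomogeneous (1 : σ → ℤ) 𝒯.g ((𝒯.n : ℤ) + 1) := by
  rw [← isWeightedHomogeneous_biweight_incl (r := 0), 𝒯.incl_g]
  exact 𝒯.isWeightedHomogeneous_corePf 0

variable [Finite ι]

theorem isWeightedHomogeneous_borderPf (ρ : ℤ) (i : Fin 3) :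
    IsWeightedHomogeneous (biweight σ ρ) (𝒯.borderPf i) ((𝒯.n : ℤ) + 2, 0) := by
  have hform (i j : Fin 3) :
      IsWeightedHomogeneous (biweight σ ρ) (𝒯.form (𝒯.row i) (𝒯.row j)) ((𝒯.n : ℤ) + 2, 0) :=
    isWeightedHomogeneous_pfForm 𝒯.isAlternating (𝒯.isWeightedHomogeneous_entry ρ) 𝒯.nodup_core
      𝒯.length_core (𝒯.isWeightedHomogeneous_entry ρ _) (𝒯.isWeightedHomogeneous_entry ρ _)
      (by simp only [Prod.smul_mk, nsmul_eq_mul, smul_zero, Prod.mk_add_mk]; ring_nf)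
  fin_cases i <;> exact hform _ _

theorem isWeightedHomogeneous_f (i : Fin 3) :
    IsWeightedHomogeneous (1 : σ → ℤ) (𝒯.f i) ((𝒯.n : ℤ) + 2) := by
  rw [← isWeightedHomogeneous_biweight_incl (r := 0), 𝒯.incl_f]
  exact 𝒯.isWeightedHomogeneous_borderPf 0 i

attribute [local instance] weightedGradedAlgebra

omit [Finite ι] in
theorem isHomogeneous_span_g :
    (span {𝒯.g}).IsHomogeneous (weightedHomogeneousSubmodule K (1 : σ → ℤ)) :=
  homogeneous_span _ _ (by rintro _ rfl; exact ⟨_, 𝒯.isWeightedHomogeneous_g⟩)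

theorem isHomogeneous_ideal_pow (m : ℕ) :
    (𝒯.ideal ^ m).IsHomogeneous (weightedHomogeneousSubmodule K (1 : σ → ℤ)) := by
  refine PfaffianPowers.isHomogeneous_ideal_pow ?_ m
  refine (homogeneous_span _ _ ?_).sup 𝒯.isHomogeneous_span_g
  rintro _ ⟨i, rfl⟩
  exact ⟨_, 𝒯.isWeightedHomogeneous_f i⟩

end Degrees

theorem corePf_ne_zero : 𝒯.corePf ≠ 0 :=
  GenericEntries.pf_ne_zero (by
    simpa [GenericBorder.core, Nat.even_add_one] using 𝒯.even_length) (𝒯.indepOn 0).tail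

theorem g_ne_zero : 𝒯.g ≠ 0 := fun h =>
  𝒯.corePf_ne_zero (by rw [← 𝒯.incl_g, h, map_zero])

variable [Finite ι]

theorem mem_pairingIdeal_of_specialize_mem {m : ℕ} {F : AdjoinT K σ}
    (hF : IsWeightedHomogeneous (tWeight σ ℤ) F m) (h : specialize 𝒯.f F ∈ span {𝒯.g}) :
    F ∈ pairingIdeal 𝒯.form 𝒯.corePf 𝒯.genericRow := by
  apply mem_of_isSMulRegular_quotient_of_smul_mem (𝒯.isSMulRegular_borderPf_two.pow m)
  have hsub := pow_mul_sub_pow_mul_specialize_mem (f := 𝒯.f) (t := 𝒯.T 2) (fun i => by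
    rw [← 𝒯.T_eq, 𝒯.incl_f]; exact 𝒯.borderPf_two_mul_T_sub_mem i) hF
  refine (Submodule.sub_mem_iff_left _ (mul_mem_left _ _ ?_)).1 hsub
  refine le_sup_left (a := span {𝒯.corePf}) ?_
  rw [← 𝒯.incl_g, ← Set.image_singleton, ← map_span]
  exact mem_map_of_mem _ h

omit [Finite ι] in
theorem exists_incl_eq_form_row_single [DecidableEq ι] (i : Fin 3) (b : ι) :
    ∃ x, incl x = 𝒯.form (𝒯.row i) (Pi.single b 1) := by
  have entry_mem (a b : ι) : M a b ∈ (incl (K := K) (σ := σ)).toRingHom.range :=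
    (𝒯.entry_linear a b).imp fun _ hx => hx.2
  exact pfForm_mem 𝒯.isAlternating (fun a _ b _ => entry_mem a b) (fun a _ => entry_mem _ a)
    fun a _ => single_one_apply_mem _ b a

theorem exists_specialize_form_single_eq [DecidableEq ι] (b : ι) :
    ∃ c, specialize 𝒯.f (𝒯.form 𝒯.genericRow (Pi.single b 1)) = c * 𝒯.g := by
  choose x hx using fun i => 𝒯.exists_incl_eq_form_row_single i b
  have hspecialize : specialize 𝒯.f (𝒯.form 𝒯.genericRow (Pi.single b 1)) =
      𝒯.f 0 * x 0 + 𝒯.f 1 * x 1 + 𝒯.f 2 * x 2 := by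
    simp only [GenericBorder.genericRow, GenericBorder.partialRow, map_add, map_smul,
      LinearMap.add_apply, LinearMap.smul_apply, smul_eq_mul, map_mul, 𝒯.T_eq, specialize_X_inl,
      ← hx, specialize_incl]
  have hmem := neg_mem (pfForm_mem_span_pf 𝒯.isAlternating (Pi.single b 1)
    𝒯.sum_borderPf_smul_row_mem_rowSpan)
  rw [← pfForm_skew] at hmem
  simp only [map_add, map_smul, LinearMap.add_apply, LinearMap.smul_apply, smul_eq_mul, ← hx,
    ← 𝒯.incl_f, ← map_mul] at hmem
  rw [← map_add, ← map_add, ← hspecialize] at hmem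
  rw [show pf M 𝒯.core = incl 𝒯.g from 𝒯.incl_g.symm] at hmem
  obtain ⟨c, hc⟩ := mem_span_singleton'.1 (mem_span_singleton_of_incl_mem hmem)
  exact ⟨c, hc.symm⟩

theorem exists_specialize_form_eq {ι : Type} [Fintype ι] {M : Matrix ι ι (AdjoinT K σ)}
    (𝒯 : LinearBorder M) : ∃ c : ι → MvPolynomial σ K, ∀ v,
      specialize 𝒯.f (𝒯.form 𝒯.genericRow v) = 𝒯.g * ∑ b, specialize 𝒯.f (v b) * c b := by
  classical
  choose c hc using 𝒯.exists_specialize_form_single_eq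
  refine ⟨c, fun v => ?_⟩
  rw [pfForm_eq_sum, map_sum, Finset.mul_sum]
  refine Finset.sum_congr rfl fun b _ => ?_
  rw [map_mul, hc]
  ring

omit [Finite ι] in
theorem g_mem_ideal : 𝒯.g ∈ 𝒯.ideal :=
  le_sup_right (a := 𝒯.borderIdeal) (mem_span_singleton_self _)

omit [Finite ι] in
theorem f_mem_ideal (i : Fin 3) : 𝒯.f i ∈ 𝒯.ideal :=
  le_sup_left (b := span {𝒯.g}) (subset_span ⟨i, rfl⟩)

theorem mem_ideal_pow_of_g_mul_mem {k : ℕ} {a : MvPolynomial σ K}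
    (h : 𝒯.g * a ∈ 𝒯.ideal ^ (k + 1)) : a ∈ 𝒯.ideal ^ k := by
  cases nonempty_fintype ι
  obtain ⟨j, hj, i, hi, hga⟩ := exists_eq_add_mul_of_mem_sup_span_singleton_pow_succ h
  obtain ⟨F, hF, rfl⟩ := exists_specialize_eq_of_mem_span_pow hj
  have hFg : specialize 𝒯.f F ∈ span {𝒯.g} :=
    mem_span_singleton'.2 ⟨a - i, by linear_combination hga⟩
  obtain ⟨x, v, hx, hv, hxv⟩ := exists_isWeightedHomogeneous_of_mem_pairingIdeal 𝒯.isAlternating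
    (fun a b => isWeightedHomogeneous_tWeight_of_biweight (𝒯.isWeightedHomogeneous_entry 0 a b))
    𝒯.nodup_core 𝒯.length_core
    (fun a => isWeightedHomogeneous_tWeight_of_biweight (𝒯.isWeightedHomogeneous_genericRow 0 a))
    hF (𝒯.mem_pairingIdeal_of_specialize_mem hF hFg) (e₂ := (k : ℤ)) (by rw [smul_zero, zero_add])
    (by rw [smul_zero, add_zero, Nat.cast_succ, add_comm])
  obtain ⟨c, hc⟩ := 𝒯.exists_specialize_form_eq
  have ha : a = i + (specialize 𝒯.f x + ∑ b, specialize 𝒯.f (v b) * c b) := by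
    apply mul_left_cancel₀ 𝒯.g_ne_zero
    rw [hga, hxv, map_add, map_mul, specialize_corePf, hc]
    ring
  rw [ha]
  refine add_mem hi (add_mem ?_ (Submodule.sum_mem _ fun b _ => mul_mem_right _ _ ?_))
  · exact pow_le_pow_right k.le_succ (specialize_mem_pow 𝒯.f_mem_ideal hx)
  · exact specialize_mem_pow 𝒯.f_mem_ideal (hv b)

end LinearBorder

end LinearBorder

namespace GradedMod

section Quotients

variable {K σ : Type} [Field K] {A B : GradedMod K σ}

/-- The quotient of a graded module by a submodule, graded by the images of the pieces. -/
noncomputable abbrev modulo (A : GradedMod K σ) (N : Submodule (MvPolynomial σ K) A.carrier) :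
    GradedMod K σ :=
  A.map N.mkQ

/-- A graded map that is injective on the pieces and surjects onto the pieces of a submodule `L`
presents the quotient by `L`. -/
noncomputable def ShortExactSeq.ofInjective (φ : B.Hom A)
    {L : Submodule (MvPolynomial σ K) A.carrier}
    (injective : ∀ j, ∀ q ∈ B.piece j, φ.toLinearMap q = 0 → q = 0)
    (map_mem : ∀ j, ∀ q ∈ B.piece j, φ.toLinearMap q ∈ L)
    (exact : ∀ j, ∀ q ∈ A.piece j, q ∈ L → ∃ b ∈ B.piece j, φ.toLinearMap b = q) :
    ShortExactSeq B A (A.modulo L) :=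
  .ofMap L.mkQ φ injective (fun j q hq => (Submodule.Quotient.mk_eq_zero L).2 (map_mem j q hq))
    fun j q hq h => exact j q hq ((Submodule.Quotient.mk_eq_zero L).1 h)

/-- The short exact sequence `B ⧸ N' → A ⧸ N → A ⧸ L` induced by a graded map `φ : B → A` under
which `N'` is the preimage of `N` and which surjects onto `L ⧸ N`. -/
noncomputable def ShortExactSeq.ofModulo (φ : B.Hom A)
    {N' : Submodule (MvPolynomial σ K) B.carrier} {N L : Submodule (MvPolynomial σ K) A.carrier}
    (hN : ∀ x ∈ N', φ.toLinearMap x ∈ N) (hNL : N ≤ L)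
    (injective : ∀ j, ∀ q ∈ B.piece j, φ.toLinearMap q ∈ N → q ∈ N')
    (map_mem : ∀ j, ∀ q ∈ B.piece j, φ.toLinearMap q ∈ L)
    (exact : ∀ j, ∀ q ∈ A.piece j, q ∈ L → ∃ b ∈ B.piece j, q - φ.toLinearMap b ∈ N) :
    ShortExactSeq (B.modulo N') (A.modulo N) (A.modulo L) where
  f := ⟨N'.mapQ N φ.toLinearMap hN, by
    rintro j _ ⟨q, hq, rfl⟩
    exact ⟨_, φ.map_mem j q hq, rfl⟩⟩
  g := ⟨N.mapQ L LinearMap.id hNL, by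
    rintro j _ ⟨q, hq, rfl⟩
    exact ⟨q, hq, rfl⟩⟩
  injective := by
    rintro j _ ⟨q, hq, rfl⟩ h
    exact (Submodule.Quotient.mk_eq_zero N').2
      (injective j q hq ((Submodule.Quotient.mk_eq_zero N).1 h))
  comp_eq_zero := by
    rintro j _ ⟨q, hq, rfl⟩
    exact (Submodule.Quotient.mk_eq_zero L).2 (map_mem j q hq)
  exact := by
    rintro j _ ⟨q, hq, rfl⟩ h
    obtain ⟨b, hb, hqb⟩ := exact j q hq ((Submodule.Quotient.mk_eq_zero L).1 h)
    exact ⟨_, ⟨b, hb, rfl⟩, ((Submodule.Quotient.eq N).2 hqb).symm⟩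
  surjective := by
    rintro j _ ⟨q, hq, rfl⟩
    exact ⟨_, ⟨q, hq, rfl⟩, rfl⟩

end Quotients

section ShiftedRing

open MvPolynomial

variable {K σ : Type} [Field K]

/-- The polynomial ring, with `1` in degree `d`. -/
noncomputable abbrev shiftedRing (K σ : Type) [Field K] (d : ℤ) : GradedMod K σ where
  carrier := MvPolynomial σ K
  piece j := weightedHomogeneousSubmodule K (1 : σ → ℤ) (j - d)
  monomial_smul_mem i a q h := isWeightedHomogeneous_mul_of_add_eq
    (isWeightedHomogeneous_monomial_one a) h (by ring)

/-- The basis `1` of the polynomial ring. -/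
noncomputable def shiftedRingBasis (d : ℤ) :
    HomogeneousBasis (shiftedRing K σ d) (κ := Unit) (fun _ => d) where
  basis _ := (1 : MvPolynomial σ K)
  linearIndependent := linearIndependent_unique_iff.2 one_ne_zero
  mem _ := by
    change _ ∈ weightedHomogeneousSubmodule K (1 : σ → ℤ) (d - d)
    rw [sub_self]
    exact isWeightedHomogeneous_one _ _
  mem_span j (p : MvPolynomial σ K) hp := by
    rw [p.as_sum]
    refine Submodule.sum_mem _ fun a ha => ?_
    have hweight := hp (mem_support_iff.1 ha)
    rw [weight_one_eq_degree] at hweight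
    rw [← mul_one (coeff a p), ← smul_eq_mul (coeff a p), ← smul_monomial]
    refine Submodule.smul_mem _ _ (Submodule.subset_span ⟨(), a, ?_, ?_⟩)
    · linarith
    · rw [smul_eq_mul, mul_one]

theorem modulo_shiftedRing_zero (J : Ideal (MvPolynomial σ K)) :
    (shiftedRing K σ 0).modulo J = quotient J := by
  have hpiece : (fun j => (weightedHomogeneousSubmodule K (1 : σ → ℤ) (j - 0)).map
      (J.mkQ.restrictScalars K)) = quotPieces (homogeneousSubmodule σ K) J := by
    funext j
    rw [quotPieces, zg_homogeneousSubmodule, sub_zero]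
  unfold modulo map quotient
  congr

end ShiftedRing

end GradedMod

section RowSpanBasis

variable {ι S : Type*} [CommRing S] [DecidableEq ι] (M : Matrix ι ι S) (l : List ι)

/-- A basis of `rowSpan M l` when `pf M l` is regular: the rows at the indices in `l`, and the
standard basis vectors at the others. -/
def rowSpanGenerator (b : ι) : ι → S :=
  if b ∈ l then M b else Pi.single b 1

variable {M l}

theorem rowSpanGenerator_of_mem {b : ι} (hb : b ∈ l) : rowSpanGenerator M l b = M b :=
  if_pos hb

theorem rowSpanGenerator_of_notMem {b : ι} (hb : b ∉ l) :
    rowSpanGenerator M l b = Pi.single b 1 :=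
  if_neg hb

theorem rowSpanGenerator_apply_of_notMem {b i : ι} (hb : b ∉ l) (hi : i ∈ l) :
    rowSpanGenerator M l b i = 0 := by
  rw [rowSpanGenerator_of_notMem hb, Pi.single_eq_of_ne (ne_of_mem_of_not_mem hi hb)]

theorem rowSpanGenerator_mem_rowSpan (b : ι) : rowSpanGenerator M l b ∈ rowSpan M l := by
  by_cases hb : b ∈ l
  · rw [rowSpanGenerator_of_mem hb]
    exact row_mem_rowSpan hb
  · exact mem_rowSpan_of_forall_eq_zero fun i hi => rowSpanGenerator_apply_of_notMem hb hi

theorem span_rowSpanGenerator [Finite ι] :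
    Submodule.span S (Set.range (rowSpanGenerator M l)) = rowSpan M l := by
  cases nonempty_fintype ι
  refine le_antisymm (Submodule.span_le.2 ?_) (Submodule.span_le.2 ?_)
  · rintro _ ⟨b, rfl⟩
    exact rowSpanGenerator_mem_rowSpan b
  rintro v (⟨a, ha, rfl⟩ | hv)
  · exact Submodule.subset_span ⟨a, rowSpanGenerator_of_mem ha⟩
  · rw [pi_eq_sum_univ' v]
    refine Submodule.sum_mem _ fun b _ => ?_
    by_cases hb : b ∈ l
    · rw [hv b hb, zero_smul]
      exact zero_mem _
    · exact Submodule.smul_mem _ _ (Submodule.subset_span ⟨b, rowSpanGenerator_of_notMem hb⟩)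

theorem linearIndependent_rowSpanGenerator [Finite ι] [NoZeroDivisors S] (hM : IsAlternating M)
    (hl : pf M l ≠ 0) : LinearIndependent S (rowSpanGenerator M l) := by
  cases nonempty_fintype ι
  rw [Fintype.linearIndependent_iff]
  intro a ha
  have pairing (k b : ι) : pfForm M l (Pi.single k 1) (a b • rowSpanGenerator M l b) =
      if b ∈ l then -(a b * (Pi.single k 1 : ι → S) b * pf M l) else 0 := by
    rw [map_smul, smul_eq_mul]
    split_ifs with hb
    · rw [rowSpanGenerator_of_mem hb, pfForm_row hM hb]
      ring
    · rw [pfForm_congr (fun _ _ => rfl) (v' := 0)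
        fun i hi => rowSpanGenerator_apply_of_notMem hb hi, map_zero, mul_zero]
  have eq_zero_of_mem {k : ι} (hk : k ∈ l) : a k = 0 := by
    have h := congrArg (pfForm M l (Pi.single k 1)) ha
    rw [map_sum, map_zero, Finset.sum_eq_single k, pairing, if_pos hk, Pi.single_eq_same, mul_one,
      neg_eq_zero] at h
    · exact (mul_eq_zero.1 h).resolve_right hl
    · intro b _ hb
      simp [pairing, Pi.single_eq_of_ne hb]
    · exact fun h => absurd (Finset.mem_univ k) h
  intro k
  by_cases hk : k ∈ l
  · exact eq_zero_of_mem hk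
  have h := congrFun ha k
  rw [Finset.sum_apply, Finset.sum_eq_single k] at h
  · simpa [rowSpanGenerator_of_notMem hk] using h
  · intro b _ hb
    by_cases hbl : b ∈ l
    · simp [eq_zero_of_mem hbl]
    · simp [rowSpanGenerator_of_notMem hbl, Pi.single_eq_of_ne hb.symm]
  · exact fun h => absurd (Finset.mem_univ k) h

end RowSpanBasis

namespace LinearBorder

open MvPolynomial AdjoinT GradedMod

variable {K σ ι : Type} [Field K] {M : Matrix ι ι (AdjoinT K σ)} (𝒯 : LinearBorder M)

/-- The degree of the border Pfaffians, which is also the degree given to `T`. -/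
def borderDegree : ℤ := 𝒯.n + 2

section Quotients

/-- The part of `T`-degree `m` of the quotient by the core Pfaffian. -/
noncomputable abbrev corePfQuotient (d m : ℤ) : GradedMod K σ :=
  (tComponent 𝒯.borderDegree d m).modulo
    ((span {𝒯.corePf}).restrictScalars (MvPolynomial σ K))

/-- The graded module of vectors over `AdjoinT K σ` of `T`-degree `m`. -/
noncomputable abbrev vectors (𝒯 : LinearBorder M) (d m : ℤ) : GradedMod K σ :=
  GradedMod.pi fun _ : ι => tComponent 𝒯.borderDegree d m

/-- The part of `T`-degree `m` of the cokernel of the core matrix. -/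
noncomputable abbrev rowSpanQuotient (d m : ℤ) : GradedMod K σ :=
  (𝒯.vectors d m).modulo ((rowSpan M 𝒯.core).restrictScalars (MvPolynomial σ K))

/-- The part of `T`-degree `m` of the image of the pairing with the generic row, modulo the core
Pfaffian. -/
noncomputable abbrev pairingQuotient (d m : ℤ) : GradedMod K σ :=
  (𝒯.vectors d m).modulo
    ((Submodule.comap (𝒯.form 𝒯.genericRow) (span {𝒯.corePf})).restrictScalars (MvPolynomial σ K))

/-- The power `m` of the image of the border ideal modulo `g`, as a quotient of the forms of degree
`m` in `T`. -/
noncomputable abbrev specializeQuotient (d m : ℤ) : GradedMod K σ :=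
  (tComponent 𝒯.borderDegree d m).modulo
    (Submodule.comap (specialize 𝒯.f).toLinearMap (span {𝒯.g}))

/-- The polynomial ring modulo `g`. -/
noncomputable abbrev gQuotient (d : ℤ) : GradedMod K σ :=
  (shiftedRing K σ d).modulo (span {𝒯.g})

/-- The polynomial ring modulo `g` and a power of the ideal. -/
noncomputable abbrev powSupQuotient (d : ℤ) (m : ℕ) : GradedMod K σ :=
  (shiftedRing K σ d).modulo (𝒯.ideal ^ m ⊔ span {𝒯.g})

/-- The polynomial ring modulo a power of the ideal. -/
noncomputable abbrev powQuotient (d : ℤ) (m : ℕ) : GradedMod K σ :=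
  (shiftedRing K σ d).modulo (𝒯.ideal ^ m)

end Quotients

section Sequences

/-- Multiplication by the core Pfaffian. -/
noncomputable def corePfSeq (d m : ℤ) : ShortExactSeq (tComponent 𝒯.borderDegree (d + (𝒯.n + 1)) m)
    (tComponent 𝒯.borderDegree d m) (𝒯.corePfQuotient d m) :=
  .ofInjective (B := tComponent 𝒯.borderDegree (d + (𝒯.n + 1)) m)
    (A := tComponent 𝒯.borderDegree d m)
    ⟨(LinearMap.mulLeft (AdjoinT K σ) 𝒯.corePf).restrictScalars (MvPolynomial σ K), fun _ _ hq =>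
      isWeightedHomogeneous_mul_of_add_eq (𝒯.isWeightedHomogeneous_corePf _) hq
        (by simp only [Prod.mk_add_mk]; ring_nf)⟩
    (fun _ _ _ h => (mul_eq_zero.1 h).resolve_left 𝒯.corePf_ne_zero)
    (fun _ q _ => mul_mem_right q _ (mem_span_singleton_self 𝒯.corePf))
    (fun j q hq hqL => by
      obtain ⟨b, hb, rfl⟩ := exists_isWeightedHomogeneous_mul_eq
        (e' := (j - (d + (𝒯.n + 1)), m)) (𝒯.isWeightedHomogeneous_corePf _) hqL hq
        (by simp only [Prod.mk_add_mk]; ring_nf)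
      exact ⟨b, hb, rfl⟩)

/-- Multiplication by `g`. -/
noncomputable def gSeq (d : ℤ) : ShortExactSeq (shiftedRing K σ (d + (𝒯.n + 1)))
    (shiftedRing K σ d) (𝒯.gQuotient d) :=
  .ofInjective (B := shiftedRing K σ (d + (𝒯.n + 1))) (A := shiftedRing K σ d)
    ⟨LinearMap.mulLeft (MvPolynomial σ K) 𝒯.g, fun _ _ hq =>
      isWeightedHomogeneous_mul_of_add_eq 𝒯.isWeightedHomogeneous_g hq (by ring)⟩
    (fun _ _ _ h => (mul_eq_zero.1 h).resolve_left 𝒯.g_ne_zero)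
    (fun _ q _ => mul_mem_right q _ (mem_span_singleton_self 𝒯.g))
    (fun j q hq hqL => by
      obtain ⟨b, hb, rfl⟩ := exists_isWeightedHomogeneous_mul_eq
        (e' := j - (d + (𝒯.n + 1))) 𝒯.isWeightedHomogeneous_g hqL hq (by ring)
      exact ⟨b, hb, rfl⟩)

section RowSpan

variable [Fintype ι] [DecidableEq ι]

/-- The degree of `rowSpanGenerator M 𝒯.core b`. -/
noncomputable def rowSpanGeneratorDegree (b : ι) : ℤ := if b ∈ 𝒯.core then 1 else 0

omit [Fintype ι] in
theorem isWeightedHomogeneous_rowSpanGenerator (ρ : ℤ) (b i : ι) :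
    IsWeightedHomogeneous (biweight σ ρ) (rowSpanGenerator M 𝒯.core b i)
      (𝒯.rowSpanGeneratorDegree b, 0) := by
  by_cases hb : b ∈ 𝒯.core
  · rw [rowSpanGenerator_of_mem hb, rowSpanGeneratorDegree, if_pos hb]
    exact 𝒯.isWeightedHomogeneous_entry ρ b i
  · rw [rowSpanGenerator_of_notMem hb, rowSpanGeneratorDegree, if_neg hb, Pi.single_apply]
    split_ifs
    · exact isWeightedHomogeneous_one _ _
    · exact isWeightedHomogeneous_zero _ _ _

theorem exists_sum_rowSpanGenerator_eq {v : ι → AdjoinT K σ} {ρ e m : ℤ}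
    (hv : ∀ i, IsWeightedHomogeneous (biweight σ ρ) (v i) (e, m)) (h : v ∈ rowSpan M 𝒯.core) :
    ∃ a : ι → AdjoinT K σ,
      (∀ b, IsWeightedHomogeneous (biweight σ ρ) (a b) (e - 𝒯.rowSpanGeneratorDegree b, m)) ∧
        ∑ b, a b • rowSpanGenerator M 𝒯.core b = v := by
  rw [← span_rowSpanGenerator, Submodule.mem_span_range_iff_exists_fun] at h
  obtain ⟨a, rfl⟩ := h
  refine ⟨_, fun b => weightedHomogeneousComponent_isWeightedHomogeneous _ (a b), ?_⟩
  funext i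
  rw [← (hv i).weightedHomogeneousComponent_same, Finset.sum_apply, Finset.sum_apply, map_sum]
  refine Finset.sum_congr rfl fun b _ => ?_
  rw [Pi.smul_apply, Pi.smul_apply, smul_eq_mul, smul_eq_mul, mul_comm (a b),
    weightedHomogeneousComponent_mul_of_left (𝒯.isWeightedHomogeneous_rowSpanGenerator ρ b i),
    mul_comm, Prod.mk_sub_mk, sub_zero]

/-- The presentation of the cokernel of the core matrix. -/
noncomputable def rowSpanSeq (d m : ℤ) : ShortExactSeq
    (GradedMod.pi fun b => tComponent 𝒯.borderDegree (d + 𝒯.rowSpanGeneratorDegree b) m)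
    (𝒯.vectors d m) (𝒯.rowSpanQuotient d m) :=
  .ofInjective (B := GradedMod.pi fun b =>
      tComponent 𝒯.borderDegree (d + 𝒯.rowSpanGeneratorDegree b) m) (A := 𝒯.vectors d m)
    ⟨(Fintype.linearCombination (AdjoinT K σ) (rowSpanGenerator M 𝒯.core)).restrictScalars
      (MvPolynomial σ K), fun j q hq i _ => by
        change _ ∈ weightedHomogeneousSubmodule K _ _
        rw [LinearMap.restrictScalars_apply, Fintype.linearCombination_apply, Finset.sum_apply]
        exact Submodule.sum_mem _ fun b _ => isWeightedHomogeneous_mul_of_add_eq (hq b trivial)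
          (𝒯.isWeightedHomogeneous_rowSpanGenerator _ b i) (by simp only [Prod.mk_add_mk]; ring_nf)⟩
    (fun j q _ => (injective_iff_map_eq_zero _).1
      (linearIndependent_iff_injective_fintypeLinearCombination.1
      (linearIndependent_rowSpanGenerator 𝒯.isAlternating 𝒯.corePf_ne_zero)) q)
    (fun j q _ => by
      rw [Submodule.restrictScalars_mem, LinearMap.restrictScalars_apply,
        Fintype.linearCombination_apply]
      exact Submodule.sum_mem _ fun b _ =>
        Submodule.smul_mem _ _ (rowSpanGenerator_mem_rowSpan b))
    (fun j q hq h => by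
      obtain ⟨a, ha, hsum⟩ := 𝒯.exists_sum_rowSpanGenerator_eq (fun i => hq i trivial) h
      refine ⟨a, fun b _ => ?_, hsum⟩
      change IsWeightedHomogeneous _ (a b) _
      rw [← sub_sub]
      exact ha b)

end RowSpan

theorem exists_sub_smul_genericRow_mem [Finite ι] {v : ι → AdjoinT K σ} {ρ j m : ℤ}
    (hv : ∀ i, IsWeightedHomogeneous (biweight σ ρ) (v i) (j, m))
    (h : 𝒯.form 𝒯.genericRow v ∈ span {𝒯.corePf}) :
    ∃ a : AdjoinT K σ, IsWeightedHomogeneous (biweight σ ρ) a (j - (ρ + 1), m - 1) ∧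
      v - a • 𝒯.genericRow ∈ rowSpan M 𝒯.core := by
  obtain ⟨a, ha⟩ := 𝒯.generatesPfPerp_genericRow v h
  refine ⟨_, weightedHomogeneousComponent_isWeightedHomogeneous _ a, ?_⟩
  convert weightedHomogeneousComponent_mem_rowSpan (𝒯.isWeightedHomogeneous_entry ρ) ha (j, m)
    using 1
  funext i
  rw [Pi.sub_apply, Pi.smul_apply, Pi.sub_apply, Pi.smul_apply, smul_eq_mul, smul_eq_mul, map_sub,
    (hv i).weightedHomogeneousComponent_same, mul_comm a,
    weightedHomogeneousComponent_mul_of_left (𝒯.isWeightedHomogeneous_genericRow ρ i), mul_comm,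
    Prod.mk_sub_mk]

/-- Multiplication by the generic row. -/
noncomputable def genericRowSeq [Finite ι] (d m : ℤ) : ShortExactSeq
    (𝒯.corePfQuotient (d + (𝒯.borderDegree + 1)) (m - 1)) (𝒯.rowSpanQuotient d m)
    (𝒯.pairingQuotient d m) :=
  .ofModulo (B := tComponent 𝒯.borderDegree (d + (𝒯.borderDegree + 1)) (m - 1))
    (A := 𝒯.vectors d m)
    ⟨(LinearMap.toSpanSingleton (AdjoinT K σ) _ 𝒯.genericRow).restrictScalars (MvPolynomial σ K),
      fun _ _ hq i _ => isWeightedHomogeneous_mul_of_add_eq hq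
        (𝒯.isWeightedHomogeneous_genericRow _ i) (by simp only [Prod.mk_add_mk]; ring_nf)⟩
    (fun x hx => by
      obtain ⟨a, rfl⟩ := mem_span_singleton'.1 hx
      rw [LinearMap.restrictScalars_apply, LinearMap.toSpanSingleton_apply, mul_comm, mul_smul]
      exact pf_smul_mem_rowSpan 𝒯.isAlternating _)
    (fun _ hv => pfForm_mem_span_pf 𝒯.isAlternating _ hv)
    (fun _ _ _ h => 𝒯.mem_span_corePf_of_smul_genericRow_mem h)
    (fun j q _ => by
      change 𝒯.form 𝒯.genericRow (q • 𝒯.genericRow) ∈ span {𝒯.corePf}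
      rw [map_smul, pfForm_self, smul_zero]
      exact zero_mem _)
    (fun j q hq h => by
      obtain ⟨a, ha, hmem⟩ := 𝒯.exists_sub_smul_genericRow_mem (fun i => hq i trivial) h
      refine ⟨a, ?_, hmem⟩
      change IsWeightedHomogeneous _ a _
      rwa [← sub_sub])

/-- The pairing with the generic row presents the ideal of the polynomials that specialize to
multiples of `g`. -/
noncomputable def pairingSeq [Finite ι] (d : ℤ) (m : ℕ) : ShortExactSeq
    (𝒯.pairingQuotient (d + (𝒯.borderDegree + 1 + 𝒯.n)) (m - 1)) (𝒯.corePfQuotient d m)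
    (𝒯.specializeQuotient d m) :=
  .ofModulo (B := 𝒯.vectors (d + (𝒯.borderDegree + 1 + 𝒯.n)) (m - 1))
    (A := tComponent 𝒯.borderDegree d m)
    ⟨(𝒯.form 𝒯.genericRow).restrictScalars (MvPolynomial σ K), fun _ _ hq =>
      isWeightedHomogeneous_pfForm 𝒯.isAlternating (𝒯.isWeightedHomogeneous_entry _)
        𝒯.nodup_core 𝒯.length_core (𝒯.isWeightedHomogeneous_genericRow _) (fun i => hq i trivial)
        (by simp only [Prod.smul_mk, nsmul_eq_mul, smul_zero, Prod.mk_add_mk]; ring_nf)⟩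
    (fun _ hx => hx)
    (fun x hx => by
      obtain ⟨a, rfl⟩ := mem_span_singleton'.1 hx
      change specialize 𝒯.f (a * pf M 𝒯.core) ∈ span {𝒯.g}
      rw [map_mul, specialize_corePf]
      exact mul_mem_left _ _ (mem_span_singleton_self _))
    (fun _ _ _ h => h)
    (fun j q _ => by
      cases nonempty_fintype ι
      obtain ⟨c, hc⟩ := 𝒯.exists_specialize_form_eq
      change specialize 𝒯.f (𝒯.form 𝒯.genericRow q) ∈ span {𝒯.g}
      rw [hc]
      exact mul_mem_right _ _ (mem_span_singleton_self _))
    (fun j q hq h => by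
      obtain ⟨x, v, -, hv, hxv⟩ := exists_isWeightedHomogeneous_of_mem_pairingIdeal
        𝒯.isAlternating (𝒯.isWeightedHomogeneous_entry _) 𝒯.nodup_core 𝒯.length_core
        (𝒯.isWeightedHomogeneous_genericRow _) hq
        (𝒯.mem_pairingIdeal_of_specialize_mem (isWeightedHomogeneous_tWeight_of_biweight hq) h)
        (add_sub_cancel _ _)
        (e₂ := (j - (d + (𝒯.borderDegree + 1 + 𝒯.n)), (m : ℤ) - 1))
        (by simp only [Prod.smul_mk, nsmul_eq_mul, smul_zero, Prod.mk_add_mk]; ring_nf)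
      refine ⟨v, fun i _ => hv i, ?_⟩
      change q - 𝒯.form 𝒯.genericRow v ∈ span {𝒯.corePf}
      rw [hxv, add_sub_cancel_right]
      exact mul_mem_right _ _ (mem_span_singleton_self _))

theorem exists_sub_specialize_mem {m : ℕ} {x : MvPolynomial σ K}
    (h : x ∈ 𝒯.ideal ^ m ⊔ span {𝒯.g}) : ∃ F, IsWeightedHomogeneous (tWeight σ ℤ) F m ∧
      x - specialize 𝒯.f F ∈ span {𝒯.g} := by
  obtain ⟨i, hi, z, hz, rfl⟩ := Submodule.mem_sup.1 h
  rcases m with _ | m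
  · exact ⟨incl (i + z), isWeightedHomogeneous_tWeight_incl _, by simp [specialize_incl]⟩
  obtain ⟨j, hj, i', -, rfl⟩ := exists_eq_add_mul_of_mem_sup_span_singleton_pow_succ hi
  obtain ⟨F, hF, rfl⟩ := exists_specialize_eq_of_mem_span_pow hj
  refine ⟨F, hF, ?_⟩
  rw [add_assoc, add_sub_cancel_left]
  exact add_mem (mul_mem_right _ _ (mem_span_singleton_self _)) hz

/-- Powers of the border ideal modulo `g`. -/
noncomputable def powSupSeq [Finite ι] (d : ℤ) (m : ℕ) : ShortExactSeq
    (𝒯.specializeQuotient d m) (𝒯.gQuotient d) (𝒯.powSupQuotient d m) :=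
  .ofModulo (B := tComponent 𝒯.borderDegree d m) (A := shiftedRing K σ d)
    ⟨(specialize 𝒯.f).toLinearMap, fun _ _ hq =>
      isWeightedHomogeneous_specialize 𝒯.isWeightedHomogeneous_f hq⟩
    (fun _ hx => hx) le_sup_right (fun _ _ _ h => h)
    (fun _ _ hq => le_sup_left (b := span {𝒯.g}) (specialize_mem_pow 𝒯.f_mem_ideal
      (isWeightedHomogeneous_tWeight_of_biweight hq)))
    (fun j q hq h => by
      obtain ⟨F, hF, hqF⟩ := 𝒯.exists_sub_specialize_mem h
      refine ⟨weightedHomogeneousComponent (biweight σ 𝒯.borderDegree) (j - d, (m : ℤ)) F,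
        weightedHomogeneousComponent_isWeightedHomogeneous _ _, ?_⟩
      have hcomp := weightedHomogeneousComponent_mem_of_mem K _ 𝒯.isHomogeneous_span_g hqF (j - d)
      rwa [map_sub, hq.weightedHomogeneousComponent_same,
        weightedHomogeneousComponent_specialize 𝒯.isWeightedHomogeneous_f hF] at hcomp)

/-- Multiplication by `g`, whose preimage of the power `m + 1` is the power `m`. -/
noncomputable def powSeq [Finite ι] (d : ℤ) (m : ℕ) : ShortExactSeq
    (𝒯.powQuotient (d + (𝒯.n + 1)) m) (𝒯.powQuotient d (m + 1)) (𝒯.powSupQuotient d (m + 1)) :=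
  .ofModulo (B := shiftedRing K σ (d + (𝒯.n + 1))) (A := shiftedRing K σ d)
    ⟨LinearMap.mulLeft (MvPolynomial σ K) 𝒯.g, fun _ _ hq =>
      isWeightedHomogeneous_mul_of_add_eq 𝒯.isWeightedHomogeneous_g hq (by ring)⟩
    (fun x hx => by
      rw [pow_succ']
      exact mul_mem_mul 𝒯.g_mem_ideal hx)
    le_sup_left (fun _ _ _ h => 𝒯.mem_ideal_pow_of_g_mul_mem h)
    (fun _ q _ => le_sup_right (a := 𝒯.ideal ^ (m + 1))
      (mul_mem_right q _ (mem_span_singleton_self 𝒯.g)))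
    (fun j q hq h => by
      obtain ⟨i, hi, z, hz, hqi⟩ := Submodule.mem_sup.1 h
      obtain ⟨b, rfl⟩ := mem_span_singleton'.1 hz
      refine ⟨weightedHomogeneousComponent 1 (j - (d + (𝒯.n + 1))) b,
        weightedHomogeneousComponent_isWeightedHomogeneous _ _, ?_⟩
      have hcomp := weightedHomogeneousComponent_mem_of_mem K _ (𝒯.isHomogeneous_ideal_pow (m + 1))
        hi (j - d)
      rwa [eq_sub_of_add_eq hqi, map_sub, hq.weightedHomogeneousComponent_same, mul_comm,
        weightedHomogeneousComponent_mul_of_left 𝒯.isWeightedHomogeneous_g, sub_sub] at hcomp)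

end Sequences

end LinearBorder

namespace LinearBorder

open MvPolynomial AdjoinT GradedMod

variable {K σ ι : Type} [Field K] {M : Matrix ι ι (AdjoinT K σ)} (𝒯 : LinearBorder M)

section UpperBounds

theorem regularityLE_corePfQuotient (d m : ℤ) :
    RegularityLE (𝒯.corePfQuotient d m) (d + 𝒯.borderDegree * m + 𝒯.n) :=
  (𝒯.corePfSeq d m).regularityLE_right
    ((tComponentBasis _ _ _).regularityLE fun _ => by lia)
    ((tComponentBasis _ _ _).regularityLE fun _ => by lia)

theorem regularityLE_gQuotient (d : ℤ) : RegularityLE (𝒯.gQuotient d) (d + 𝒯.n) :=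
  (𝒯.gSeq d).regularityLE_right
    ((shiftedRingBasis _).regularityLE fun _ => by lia)
    ((shiftedRingBasis _).regularityLE fun _ => by lia)

variable [Finite ι]

theorem regularityLE_rowSpanQuotient (d m : ℤ) :
    RegularityLE (𝒯.rowSpanQuotient d m) (d + 𝒯.borderDegree * m) := by
  classical
  cases nonempty_fintype ι
  refine (𝒯.rowSpanSeq d m).regularityLE_right
    ((HomogeneousBasis.pi fun _ => tComponentBasis _ _ _).regularityLE fun _ => le_rfl)
    ((HomogeneousBasis.pi fun _ => tComponentBasis _ _ _).regularityLE fun x => ?_)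
  have : 𝒯.rowSpanGeneratorDegree x.1 ≤ 1 := by
    rw [rowSpanGeneratorDegree]
    split_ifs <;> simp
  lia

theorem regularityLE_pairingQuotient (d m : ℤ) :
    RegularityLE (𝒯.pairingQuotient d m) (d + 𝒯.borderDegree * m + 𝒯.n) :=
  (𝒯.genericRowSeq d m).regularityLE_right
    ((𝒯.regularityLE_rowSpanQuotient d m).mono (by lia))
    ((𝒯.regularityLE_corePfQuotient _ _).mono (by linarith))

theorem regularityLE_specializeQuotient (d : ℤ) (m : ℕ) :
    RegularityLE (𝒯.specializeQuotient d m) (d + 𝒯.borderDegree * m + 2 * 𝒯.n) :=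
  (𝒯.pairingSeq d m).regularityLE_right
    ((𝒯.regularityLE_corePfQuotient d m).mono (by lia))
    ((𝒯.regularityLE_pairingQuotient _ _).mono (by linarith))

omit [Finite ι] in
theorem le_borderDegree_mul_succ (m : ℕ) : (𝒯.n : ℤ) + 2 ≤ 𝒯.borderDegree * (m + 1) :=
  le_mul_of_one_le_right (by positivity) (by simp)

theorem regularityLE_powSupQuotient_succ (d : ℤ) (m : ℕ) :
    RegularityLE (𝒯.powSupQuotient d (m + 1))
      (d + 𝒯.borderDegree * (m + 1) + 2 * 𝒯.n - 1) :=
  (𝒯.powSupSeq d (m + 1)).regularityLE_right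
    ((𝒯.regularityLE_gQuotient d).mono (by linarith [𝒯.le_borderDegree_mul_succ m]))
    ((𝒯.regularityLE_specializeQuotient d (m + 1)).mono (by push_cast; linarith))

theorem regularityLE_powQuotient_succ (d : ℤ) (m : ℕ) :
    RegularityLE (𝒯.powQuotient d (m + 1))
      (d + 𝒯.borderDegree * (m + 1) + 2 * 𝒯.n - 1) := by
  induction m generalizing d with
  | zero =>
    have hsup : 𝒯.ideal ^ (0 + 1) ⊔ span {𝒯.g} = 𝒯.ideal ^ (0 + 1) := by
      rw [zero_add, pow_one, sup_eq_left, span_singleton_le_iff_mem]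
      exact 𝒯.g_mem_ideal
    have hbound := 𝒯.regularityLE_powSupQuotient_succ d 0
    rwa [powSupQuotient, hsup] at hbound
  | succ m ih =>
    refine (𝒯.powSeq d (m + 1)).regularityLE_middle ((ih _).mono ?_)
      ((𝒯.regularityLE_powSupQuotient_succ d (m + 1)).mono (by push_cast; linarith))
    rw [borderDegree]
    push_cast
    linarith

end UpperBounds

section LowerBound

variable [Finite ι]

/-- The top degree of the last module of a minimal free resolution is carried along all the short
exact sequences: at each step the other two modules have too small a regularity to interfere. -/
theorem not_extVanishes_powQuotient (k : ℕ) :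
    ¬ExtVanishes (𝒯.powQuotient 0 (k + 2))
      (residueField K σ (𝒯.borderDegree * (k + 2) + 2 * 𝒯.n + 3)) 4 := fun hpow => by
  have hle := 𝒯.le_borderDegree_mul_succ (k + 1)
  push_cast at hle
  have hpowSup := (𝒯.powSeq 0 (k + 1)).extVanishes_right (i := 3) hpow
    (𝒯.regularityLE_powQuotient_succ _ k 3 _ (by push_cast [borderDegree]; linarith))
  have hspecialize := (𝒯.powSupSeq 0 (k + 2)).extVanishes_left (i := 3)
    (𝒯.regularityLE_gQuotient _ 3 _ (by push_cast; linarith)) hpowSup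
  have hpairing := (𝒯.pairingSeq 0 (k + 2)).extVanishes_left (i := 2)
    (𝒯.regularityLE_corePfQuotient _ _ 2 _ (by push_cast; linarith)) hspecialize
  have hcorePf := (𝒯.genericRowSeq _ _).extVanishes_left (i := 1)
    (𝒯.regularityLE_rowSpanQuotient _ _ 1 _ (by push_cast; linarith)) hpairing
  have hfree := (𝒯.corePfSeq _ _).extVanishes_left (i := 0)
    ((tComponentBasis _ _ _).extVanishes_residueField_zero fun _ => by
      push_cast; apply ne_of_lt; linarith) hcorePf
  exact not_extVanishes_tComponent (by push_cast; lia) (by push_cast [borderDegree]; ring) hfree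

end LowerBound

theorem reg_eq [Finite ι] (k : ℕ) (R : QuotientResolution (𝒯.ideal ^ (k + 2))) :
    R.reg = 𝒯.borderDegree * (k + 2) + 2 * 𝒯.n - 1 := by
  refine R.reg_eq (𝒯.isHomogeneous_ideal_pow _) ?_ ⟨4, ?_⟩
  · rw [← modulo_shiftedRing_zero]
    exact (𝒯.regularityLE_powQuotient_succ 0 (k + 1)).mono (by push_cast; linarith)
  · rw [← modulo_shiftedRing_zero]
    convert 𝒯.not_extVanishes_powQuotient k using 3
    push_cast
    ring

end LinearBorder

section VariableExpansion

open MvPolynomial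

variable {K τ : Type*} [CommRing K]

open scoped Classical in
/-- The expansion of polynomials in one of the variables. -/
noncomputable def varExpansion (x : τ) : Expansion (X x : MvPolynomial τ K) where
  toPoly := eval₂Hom (Polynomial.C.comp C)
    fun y => if y = x then Polynomial.X else Polynomial.C (X y)
  toPoly_self := by simp
  eval_toPoly s := by
    have hid : (Polynomial.evalRingHom (X x : MvPolynomial τ K)).comp
        (eval₂Hom (Polynomial.C.comp C)
          fun y => if y = x then Polynomial.X else Polynomial.C (X y)) = RingHom.id _ := by
      ext y : 2
      · simp
      · by_cases hy : y = x <;> simp [hy]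
    exact RingHom.congr_fun hid s

theorem X_mem_constants_varExpansion {x y : τ} (h : y ≠ x) :
    (X y : MvPolynomial τ K) ∈ (varExpansion (K := K) x).constants := by
  rw [Expansion.mem_constants]
  simp [varExpansion, h]

end VariableExpansion

section Xmat

open MvPolynomial AdjoinT

variable (K : Type) [Field K] (t : ℕ)

theorem isAlternating_Xmat : IsAlternating (Xmat K t) where
  diag i := by simp [Xmat]
  skew i j := by
    unfold Xmat
    split_ifs
    all_goals first | lia | simp

/-- The matrix `Xmat` over the ring in which the variables `T` are adjoined. -/
noncomputable def liftedXmat : Matrix (Fin t) (Fin t) (AdjoinT K (PairVar t)) :=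
  Matrix.of fun i j => incl (Xmat K t i j)

theorem liftedXmat_apply (i j : Fin t) : liftedXmat K t i j = incl (Xmat K t i j) := rfl

theorem isAlternating_liftedXmat : IsAlternating (liftedXmat K t) where
  diag i := by rw [liftedXmat_apply, (isAlternating_Xmat K t).diag, map_zero]
  skew i j := by rw [liftedXmat_apply, (isAlternating_Xmat K t).skew, map_neg, liftedXmat_apply]

variable {K t}

theorem liftedXmat_of_lt {i j : Fin t} (h : (i : ℕ) < (j : ℕ) ∧ 3 ≤ (j : ℕ)) :
    liftedXmat K t i j = X (Sum.inr ⟨(i, j), h⟩) := by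
  rw [liftedXmat_apply, Xmat, dif_pos h]
  exact rename_X _ _

theorem liftedXmat_eq_zero {i j : Fin t} (hi : (i : ℕ) < 3) (hj : (j : ℕ) < 3) :
    liftedXmat K t i j = 0 := by
  rw [liftedXmat_apply, Xmat, dif_neg (by lia), dif_neg (by lia), map_zero]

theorem liftedXmat_mem_constants {y : Fin 3 ⊕ PairVar t} (a b : Fin t)
    (hy : ∀ p, y = Sum.inr p → p.1 ≠ (a, b) ∧ p.1 ≠ (b, a)) :
    liftedXmat K t a b ∈ (varExpansion (K := K) y).constants := by
  have hvar {c d : Fin t} (h : (c : ℕ) < (d : ℕ) ∧ 3 ≤ (d : ℕ))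
      (hcd : ∀ p, y = Sum.inr p → p.1 ≠ (c, d)) :
      liftedXmat K t c d ∈ (varExpansion (K := K) y).constants := by
    rw [liftedXmat_of_lt h]
    exact X_mem_constants_varExpansion fun he => hcd _ he.symm rfl
  by_cases hab : (a : ℕ) < (b : ℕ) ∧ 3 ≤ (b : ℕ)
  · exact hvar hab fun p hp => (hy p hp).1
  by_cases hba : (b : ℕ) < (a : ℕ) ∧ 3 ≤ (a : ℕ)
  · rw [(isAlternating_liftedXmat K t).skew]
    exact neg_mem (hvar hba fun p hp => (hy p hp).2)
  · rw [liftedXmat_apply, Xmat, dif_neg hab, dif_neg hba, map_zero]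
    exact zero_mem _

theorem exists_expansion_liftedXmat {i j : Fin t} (h : i ≠ j ∧ (3 ≤ (i : ℕ) ∨ 3 ≤ (j : ℕ))) :
    ∃ V : Expansion (liftedXmat K t i j), ∀ a b, ¬(a = i ∧ b = j) → ¬(a = j ∧ b = i) →
      liftedXmat K t a b ∈ V.constants := by
  have hvar {c d : Fin t} (h : (c : ℕ) < (d : ℕ) ∧ 3 ≤ (d : ℕ)) (a b : Fin t)
      (hab : ¬(a = c ∧ b = d)) (hba : ¬(a = d ∧ b = c)) :
      liftedXmat K t a b ∈ (varExpansion (K := K) (Sum.inr ⟨(c, d), h⟩)).constants := by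
    refine liftedXmat_mem_constants a b fun p hp => ?_
    obtain rfl := Sum.inr_injective hp
    simp only [ne_eq, Prod.mk.injEq]
    tauto
  rcases (Fin.val_ne_of_ne h.1).lt_or_gt with hij | hji
  · have hij' : (i : ℕ) < (j : ℕ) ∧ 3 ≤ (j : ℕ) := ⟨hij, by lia⟩
    rw [liftedXmat_of_lt hij']
    exact ⟨_, hvar hij'⟩
  · have hji' : (j : ℕ) < (i : ℕ) ∧ 3 ≤ (i : ℕ) := ⟨hji, by lia⟩
    rw [(isAlternating_liftedXmat K t).skew, liftedXmat_of_lt hji']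
    obtain ⟨V, hV⟩ := (varExpansion (K := K) (τ := Fin 3 ⊕ PairVar t)
      (Sum.inr ⟨(j, i), hji'⟩)).exists_neg_constants_eq
    refine ⟨V, fun a b h₁ h₂ => ?_⟩
    rw [hV]
    exact hvar hji' a b h₂ h₁

variable (K t)

/-- The entries of the matrix outside the diagonal and outside the vanishing block are generic. -/
noncomputable def liftedXmatGenericEntries : GenericEntries (liftedXmat K t) where
  Indep i j := i ≠ j ∧ (3 ≤ (i : ℕ) ∨ 3 ≤ (j : ℕ))
  ne h := h.1
  symm h := ⟨h.1.symm, h.2.symm⟩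
  isAlternating := isAlternating_liftedXmat K t
  expansion _ _ h := (exists_expansion_liftedXmat h).choose
  mem_constants _ _ h := (exists_expansion_liftedXmat h).choose_spec

theorem isWeightedHomogeneous_Xmat (a b : Fin t) :
    IsWeightedHomogeneous (1 : PairVar t → ℤ) (Xmat K t a b) 1 := by
  change _ ∈ weightedHomogeneousSubmodule K _ _
  unfold Xmat
  split_ifs
  · exact isWeightedHomogeneous_X K _ _
  · exact neg_mem (isWeightedHomogeneous_X K _ _)
  · exact zero_mem _

variable {K t}

theorem incl_pfaffian_submatrix {n : ℕ} (f : Fin n → Fin t) :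
    incl (pfaffian n ((Xmat K t).submatrix f f)) = pf (liftedXmat K t) (List.ofFn f) := by
  rw [← pfaffian_submatrix (isAlternating_liftedXmat K t)]
  exact map_pfaffian (incl (K := K) (σ := PairVar t)).toRingHom _ _

end Xmat

section Border

open MvPolynomial AdjoinT

variable (K : Type) [Field K] (q : ℕ)

/-- The three indices of the vanishing block. -/
def borderIndex (i : Fin 3) : Fin (2 * q + 5) := i.castLE (by lia)

variable {K q} in
theorem ofFn_emb3 : List.ofFn (emb3 : Fin (2 * q + 2) → Fin (2 * q + 5)) =
    emb3 0 :: emb3 1 :: List.ofFn fun k : Fin (2 * q) => emb3 k.succ.succ := by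
  rw [List.ofFn_succ, List.ofFn_succ]
  rfl

/-- The matrix `Xmat` with the indices of its vanishing block as border. -/
noncomputable def XmatGenericBorder : GenericBorder (liftedXmat K (2 * q + 5)) where
  toGenericEntries := liftedXmatGenericEntries K _
  border := borderIndex q
  border_injective := Fin.castLE_injective (by lia)
  b := emb3 0
  c := emb3 1
  l := List.ofFn fun k : Fin (2 * q) => emb3 k.succ.succ
  even_length := by simp
  indepOn i := by
    rw [← ofFn_emb3, GenericEntries.IndepOn, List.pairwise_cons, List.pairwise_ofFn]
    constructor
    · intro a ha
      obtain ⟨k, rfl⟩ := (List.mem_ofFn' _ _).1 ha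
      exact ⟨Fin.ne_of_val_ne (by simp only [borderIndex, emb3, Fin.val_castLE]; lia),
        .inr (by simp [emb3])⟩
    · exact fun j k hjk => ⟨Fin.ne_of_val_ne (by simp only [emb3]; lia), .inr (by simp [emb3])⟩
  T i := X (Sum.inl i)
  expansionT i := varExpansion _
  entry_mem_constantsT i a b := liftedXmat_mem_constants a b fun _ h => (Sum.inl_ne_inr h).elim
  T_mem_constantsT i j h := X_mem_constants_varExpansion fun he => h (Sum.inl_injective he).symm

theorem core_XmatGenericBorder : (XmatGenericBorder K q).core = List.ofFn emb3 :=
  ofFn_emb3.symm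

variable {K q} in
theorem incl_pfaffian_emb1 {a i j : Fin 3}
    (hi : emb1 (n := 2 * q + 4) a 0 = borderIndex q i)
    (hj : emb1 (n := 2 * q + 4) a 1 = borderIndex q j) :
    incl (pfaffian (2 * q + 4) ((Xmat K (2 * q + 5)).submatrix (emb1 a) (emb1 a))) =
      (XmatGenericBorder K q).form ((XmatGenericBorder K q).row i)
        ((XmatGenericBorder K q).row j) := by
  have hemb3 : (fun k : Fin (2 * q + 2) => emb1 (a : ℕ) k.succ.succ) =
      (emb3 : _ → Fin (2 * q + 5)) := by
    funext k
    refine Fin.ext ?_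
    simp only [emb1, emb3, Fin.val_succ]
    lia
  have hlist : List.ofFn (emb1 (n := 2 * q + 4) a) =
      borderIndex q i :: borderIndex q j :: (XmatGenericBorder K q).core := by
    rw [List.ofFn_succ, List.ofFn_succ, core_XmatGenericBorder, ← hemb3, hi, ← hj]
    rfl
  rw [incl_pfaffian_submatrix, hlist, pf_cons_cons (isAlternating_liftedXmat K _),
    liftedXmat_eq_zero (by simp [borderIndex]) (by simp [borderIndex]), zero_mul, zero_sub,
    ← pfForm_skew]
  rfl

/-- The matrix `Xmat` with the Pfaffians of the theorem as generators; the middle one changes sign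
to match the cyclic order in `GenericBorder.borderPf`. -/
noncomputable def XmatLinearBorder : LinearBorder (liftedXmat K (2 * q + 5)) where
  toGenericBorder := XmatGenericBorder K q
  entry_linear a b := ⟨_, isWeightedHomogeneous_Xmat K _ a b, rfl⟩
  T_eq _ := rfl
  g := pfaffian (2 * q + 2) ((Xmat K (2 * q + 5)).submatrix emb3 emb3)
  incl_g := by
    rw [incl_pfaffian_submatrix, GenericBorder.corePf, core_XmatGenericBorder]
  f := ![pfaffian (2 * q + 4) ((Xmat K (2 * q + 5)).submatrix (emb1 0) (emb1 0)),
    -pfaffian (2 * q + 4) ((Xmat K (2 * q + 5)).submatrix (emb1 1) (emb1 1)),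
    pfaffian (2 * q + 4) ((Xmat K (2 * q + 5)).submatrix (emb1 2) (emb1 2))]
  incl_f i := by
    fin_cases i
    · exact incl_pfaffian_emb1 (a := 0) (i := 1) (j := 2) rfl rfl
    · change incl (-_) = GenericBorder.form _ _ _
      rw [map_neg, GenericBorder.form, pfForm_skew]
      exact congrArg _ (incl_pfaffian_emb1 (a := 1) (i := 0) (j := 2) rfl rfl)
    · exact incl_pfaffian_emb1 (a := 2) (i := 0) (j := 1) rfl rfl

theorem n_XmatLinearBorder : (XmatLinearBorder K q).n = q := by
  simp [LinearBorder.n, XmatLinearBorder, XmatGenericBorder]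

theorem ideal_XmatLinearBorder : (XmatLinearBorder K q).ideal = span
    { pfaffian (2 * q + 4) ((Xmat K (2 * q + 5)).submatrix (emb1 0) (emb1 0)),
      pfaffian (2 * q + 4) ((Xmat K (2 * q + 5)).submatrix (emb1 1) (emb1 1)),
      pfaffian (2 * q + 4) ((Xmat K (2 * q + 5)).submatrix (emb1 2) (emb1 2)),
      pfaffian (2 * q + 2) ((Xmat K (2 * q + 5)).submatrix emb3 emb3) } := by
  rw [LinearBorder.ideal, LinearBorder.borderIdeal, XmatLinearBorder, Matrix.range_cons,
    Matrix.range_cons, Matrix.range_cons, Matrix.range_empty, Set.union_empty]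
  simp only [span_insert, span_union, span_singleton_neg, sup_assoc]

end Border

end PfaffianPowers

/-- For odd `t = 2q + 5 ≥ 5` (so `r = (t-1)/2 = q + 2`), let `I` be the grade-3 almost
complete intersection Pfaffian ideal `⟨Pf_{1̄}, Pf_{2̄}, Pf_{3̄}, Pf_{123̄}⟩` in `B = K[X]`.
Then for every `m ≥ 2`, `reg (B/I^m) = r (m + 2) - 5`. -/
theorem reg_powers_pfaffian_odd (K : Type) [Field K] (q : ℕ)
    (I : Ideal (MvPolynomial (PairVar (2 * q + 5)) K))
    (hI : I = Ideal.span
      { pfaffian (2 * q + 4) ((Xmat K (2 * q + 5)).submatrix (emb1 0) (emb1 0)),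
        pfaffian (2 * q + 4) ((Xmat K (2 * q + 5)).submatrix (emb1 1) (emb1 1)),
        pfaffian (2 * q + 4) ((Xmat K (2 * q + 5)).submatrix (emb1 2) (emb1 2)),
        pfaffian (2 * q + 2) ((Xmat K (2 * q + 5)).submatrix emb3 emb3) }) :
    ∀ m : ℕ, 2 ≤ m →
    ∀ R : MinGradedFreeRes K (MvPolynomial (PairVar (2 * q + 5)) K)
        (zg (MvPolynomial.homogeneousSubmodule (PairVar (2 * q + 5)) K))
        (irrel (MvPolynomial.homogeneousSubmodule (PairVar (2 * q + 5)) K))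
        (MvPolynomial (PairVar (2 * q + 5)) K ⧸ (I ^ m))
        (quotPieces (MvPolynomial.homogeneousSubmodule (PairVar (2 * q + 5)) K) (I ^ m)),
      R.reg = ((q : ℤ) + 2) * ((m : ℤ) + 2) - 5 := by
  intro m hm R
  rw [← PfaffianPowers.ideal_XmatLinearBorder] at hI
  subst hI
  obtain ⟨k, rfl⟩ := Nat.exists_eq_add_of_le' hm
  rw [(PfaffianPowers.XmatLinearBorder K q).reg_eq k R, PfaffianPowers.LinearBorder.borderDegree,
    PfaffianPowers.n_XmatLinearBorder]
  push_cast
  ring
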